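/- Let μ be an ergodic process on Σ = 𝒜^{ℤ_{≥0}^d} with entropy rate h_μ > 0, let 0 < φ < 1, fix α > 0, and let α_0 ∈ (0, α·h_μ/3). For μ-almost every x, let (k_i^*) be the increasing enumeration of all k ∈ ℕ with A^{k^d(h_μ−α_0)} ≤ M_k(x) ≤ A^{k^d(h_μ+α_0)} (this sequence is infinite for μ-almost every x), and for integers l ≤ u set |L_l^u| := Σ_{l≤k≤u} |L_k(x)|. Then the quotient |L_1^{⌊(1−α)k_i^*⌋}| / |L_{⌊(1−α)k_i^*⌋}^{k_i^*}| tends to zero as i tends to infinity. -/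

import Mathlib

open MeasureTheory Filter Topology

namespace SRU1408

/-- A site of the lattice `ℤ_{≥0}^d`. -/
abbrev Site (d : ℕ) := Fin d → ℕ

/-- An infinite array over the alphabet `Fin A`, i.e. an element of `Σ = 𝒜^{ℤ_{≥0}^d}`. -/
abbrev Config (A d : ℕ) := Site d → Fin A

/-- A cubical `k`-word, i.e. an element of `Σ^k = 𝒜^{Λ_k}`. -/
abbrev Word (A d k : ℕ) := (Fin d → Fin k) → Fin A

variable {A d : ℕ}

/-- The pattern of `x` on the cube `Λ_k + c`, as a `k`-word. -/
def wordAt (x : Config A d) (k : ℕ) (c : Site d) : Word A d k :=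
  fun i => x fun j => c j + (i j : ℕ)

/-- The lattice shift `σ_r`. -/
def shift (r : Site d) (x : Config A d) : Config A d := fun i => x (i + r)

/-- Stationarity: invariance under all shifts. -/
def Stationary (μ : Measure (Config A d)) : Prop := ∀ r : Site d, μ.map (shift r) = μ

/-- Ergodicity: stationary, and every measurable set invariant under all shifts is trivial. -/
def ErgodicShift (μ : Measure (Config A d)) : Prop :=
  Stationary μ ∧ ∀ E : Set (Config A d), MeasurableSet E →
    (∀ r : Site d, shift r ⁻¹' E = E) → μ E = 0 ∨ μ E = 1

/-- The `k`-word marginal distribution `μ^k`, as a probability vector on `Σ^k`. -/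
noncomputable def wordDist (μ : Measure (Config A d)) (k : ℕ) : Word A d k → ℝ :=
  fun w => (μ {x | wordAt x k 0 = w}).toReal

/-- Base-`A` entropy of a probability vector. -/
noncomputable def entH (A : ℕ) {W : Type*} [Fintype W] (p : W → ℝ) : ℝ :=
  -∑ w, p w * Real.logb A (p w)

/-- `μ` has entropy rate `h` (base-`A` logarithms): `H(μ^n)/n^d → h`. -/
def HasEntropyRate (μ : Measure (Config A d)) (h : ℝ) : Prop :=
  Tendsto (fun n : ℕ => entH A (wordDist μ n) / (n : ℝ) ^ d) atTop (𝓝 h)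

/-- Lexicographically ordered list of the tuples in `Λ_n ⊂ ℤ_{≥0}^d`. -/
def tuples : (d : ℕ) → ℕ → List (Fin d → ℕ)
  | 0, _ => [fun i => i.elim0]
  | d + 1, n => (List.range n).flatMap fun a => (tuples d n).map fun t => Fin.cons a t

/-- State of the `SRU_φ` parser: parsed cube `Λ_m`, current block size `k`, and the current
parsing, a list of cubical blocks (corner and side length) in the order they were parsed. -/
structure PState (d : ℕ) where
  m : ℕ
  k : ℕ
  blocks : List ((Fin d → ℕ) × ℕ)

/-- The recurrence quantity `J(P, k)`: the fraction of `k`-blocks of the parsing whose words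
occur at least twice among the parsed `k`-words (`0` if there are no `k`-blocks). -/
noncomputable def Jval (x : Config A d) (P : List ((Fin d → ℕ) × ℕ)) (k : ℕ) : ℝ :=
  let Pk := P.filter fun b => decide (b.2 = k)
  ((Pk.filter fun b =>
      decide (2 ≤ (Pk.filter fun b' =>
        decide (wordAt x k b'.1 = wordAt x k b.1)).length)).length : ℝ) / (Pk.length : ℝ)

open scoped Classical in
/-- One step of the `SRU_φ` parser: if `J(P_m, k) ≥ φ`, increase the block size; otherwise
parse the boundary region `L = Λ_{⌊m/k⌋k+k} \ Λ_{⌊m/k⌋k}` regularly into `k`-blocks,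
appending them in lexicographic order of their corners, and set `m := ⌊m/k⌋k + k`. -/
noncomputable def step (φ : ℝ) (x : Config A d) (s : PState d) : PState d :=
  if φ ≤ Jval x s.blocks s.k then { s with k := s.k + 1 }
  else
    { m := s.m / s.k * s.k + s.k
      k := s.k
      blocks := s.blocks ++
        (((tuples d (s.m / s.k + 1)).filter fun r => decide (¬ ∀ j, r j < s.m / s.k)).map
          fun r => (fun j => s.k * r j, s.k)) }

/-- The `SRU_φ` parser iterated from the initial state `m = 0`, `k = 1`, empty parsing. -/
noncomputable def iter (φ : ℝ) (x : Config A d) : ℕ → PState d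
  | 0 => ⟨0, 1, []⟩
  | t + 1 => step φ x (iter φ x t)

/-- Membership of a site in a block. -/
def inBlock (i : Site d) (b : (Fin d → ℕ) × ℕ) : Prop :=
  ∀ j, b.1 j ≤ i j ∧ i j < b.1 j + b.2

/-- `L_k(x)`: the region parsed with block size `k`. -/
def Lregion (φ : ℝ) (x : Config A d) (k : ℕ) : Set (Site d) :=
  {i | ∃ t, ∃ b ∈ (iter φ x t).blocks, b.2 = k ∧ inBlock i b}

/-- `M_k(x)`: the number of distinct `k`-words parsed in `L_k(x)`. -/
noncomputable def Mk (φ : ℝ) (x : Config A d) (k : ℕ) : ℕ :=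
  Set.ncard {w : Word A d k | ∃ t, ∃ b ∈ (iter φ x t).blocks, b.2 = k ∧ wordAt x k b.1 = w}

/-- The cube `Λ_n` as a set of sites. -/
def cubeSet (d n : ℕ) : Set (Site d) := {i | ∀ j, i j < n}

/-- Upper asymptotic density of a set of sites. -/
noncomputable def upperDensity (S : Set (Site d)) : ℝ :=
  limsup (fun n : ℕ => (Set.ncard (S ∩ cubeSet d n) : ℝ) / (n : ℝ) ^ d) atTop

/-- `k` is a typical scale for `x`: `A^{k^d(h-α₀)} ≤ M_k(x) ≤ A^{k^d(h+α₀)}`. -/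
def TypicalScale (φ : ℝ) (x : Config A d) (h α0 : ℝ) (k : ℕ) : Prop :=
  (A : ℝ) ^ ((k : ℝ) ^ d * (h - α0)) ≤ (Mk φ x k : ℝ) ∧
    (Mk φ x k : ℝ) ≤ (A : ℝ) ^ ((k : ℝ) ^ d * (h + α0))

/-- The total volume `|L_l^u| = Σ_{l ≤ k ≤ u} |L_k(x)|`. -/
noncomputable def volIcc (φ : ℝ) (x : Config A d) (l u : ℕ) : ℝ :=
  ∑ k ∈ Finset.Icc l u, (Set.ncard (Lregion φ x k) : ℝ)

open scoped Classical in
/-- The `i`-th block ever appended by the parser (the block lists grow by appending). -/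
noncomputable def blockSeq (φ : ℝ) (x : Config A d) (i : ℕ) : Option ((Fin d → ℕ) × ℕ) :=
  if h : ∃ t, i < (iter φ x t).blocks.length then ((iter φ x h.choose).blocks)[i]? else none

/-- The side length of the largest leading sub-word of the `i`-th parsed word that occurs as
a leading sub-word of a previously parsed word (`0` if there is none). -/
noncomputable def matchLen (φ : ℝ) (x : Config A d) (i : ℕ) : ℕ :=
  sSup {l : ℕ | ∃ b, blockSeq φ x i = some b ∧ l ≤ b.2 ∧
    ∃ j < i, ∃ b', blockSeq φ x j = some b' ∧ l ≤ b'.2 ∧ wordAt x l b.1 = wordAt x l b'.1}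

/-- The length (in alphabet symbols) of the code of the `i`-th parsed word: a pointer to a
previously parsed word, a descriptor of `O(log)` length (side length and position of the
block, and side length of the referenced leading sub-word), and the list of the entries
outside the referenced leading sub-word. -/
noncomputable def codeLen (φ : ℝ) (x : Config A d) (i : ℕ) : ℕ :=
  match blockSeq φ x i with
  | none => 0
  | some b =>
    (Nat.log A (i + 1) + 1) + (Nat.log A (b.2 + 1) + 1) +
      (∑ j : Fin d, (Nat.log A (b.1 j + 1) + 1)) +
      (Nat.log A (matchLen φ x i + 1) + 1) + (b.2 ^ d - matchLen φ x i ^ d)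

/-- The first time at which the parsed region covers `Λ_n`. -/
noncomputable def coverTime (φ : ℝ) (x : Config A d) (n : ℕ) : ℕ :=
  sInf {t | n ≤ (iter φ x t).m}

/-- `|C_φ(x^n)|`: the total length of the code of the portion of the parsing covering `Λ_n`. -/
noncomputable def codeLength (φ : ℝ) (x : Config A d) (n : ℕ) : ℕ :=
  ∑ i ∈ Finset.range ((iter φ x (coverTime φ x n)).blocks.length), codeLen φ x i

/-! Let `N_l` be the side of the cube covered once the algorithm leaves the block size `l`.

*Few words are typical.* By the entropy rate and the ergodic theorem, for large `R` there are
`A^{R^d (h + δ)}` words of size `R` which fill almost every cube at the origin of almost every `x`,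
up to a small density. At the block size `l` the algorithm goes on only until a fraction `φ` of the
parsed `l`-words recurs, so a cube much larger than `A^{l^d (h + ε)}` would contain too many
distinct `l`-words; hence `N_l ^ d ≤ A^{l^d (h + ε)}` for all large `l`.

*Typical scales recur.* Suppose that from some scale on fewer than `A^{k^d (h - ε)}` distinct words
were parsed at every `k`. At least a fraction `φ` of the blocks of each size recur, so a fixed
fraction of the sites of `Λ_{N_l}` can be recovered from pointers to earlier blocks, at a cost of
`h - ε` per site. Together with the typical words this describes `x` on `Λ_{N_l}` below the entropy
rate, which has probability zero.

*Comparison.* A typical scale `k` contributes at least `M_k ≥ A^{k^d (h - α₀)}` sites, whereas the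
scales up to `l ≤ (1 - α) k` cover at most `A^{l^d (h + α₀)}` sites each. Since `3 α₀ < α h`, the
quotient is at most `1 / k`. -/

/-! ### Cubes, boxes and periodic tilings -/

/-- The cube of side `j` with lower corner `c`. -/
def box (c : Site d) (j : ℕ) : Finset (Site d) :=
  Fintype.piFinset fun i => Finset.Ico (c i) (c i + j)

/-- The cube `Λ_n` as a finset. -/
def cube (d n : ℕ) : Finset (Site d) := Fintype.piFinset fun _ => Finset.range n

/-- The sites `v` with `c - l ≤ v < c + u` coordinatewise; the subtraction is truncated, which is
harmless because only an upper bound for the number of these sites is needed. -/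
def collar (c : Site d) (l u : ℕ) : Finset (Site d) :=
  Fintype.piFinset fun i => Finset.Ico (c i - l) (c i + u)

lemma mem_box {c v : Site d} {j : ℕ} : v ∈ box c j ↔ ∀ i, c i ≤ v i ∧ v i < c i + j := by
  simp [box, Fintype.mem_piFinset]

lemma mem_cube {v : Site d} {n : ℕ} : v ∈ cube d n ↔ ∀ i, v i < n := by
  simp [cube, Fintype.mem_piFinset]

lemma mem_collar {c v : Site d} {l u : ℕ} :
    v ∈ collar c l u ↔ ∀ i, c i - l ≤ v i ∧ v i < c i + u := by
  simp [collar, Fintype.mem_piFinset]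

lemma card_box (c : Site d) (j : ℕ) : (box c j).card = j ^ d := by
  simp [box, Fintype.card_piFinset]

lemma card_cube (d n : ℕ) : (cube d n).card = n ^ d := by
  simp [cube, Fintype.card_piFinset]

lemma card_collar_le (c : Site d) (l u : ℕ) : (collar c l u).card ≤ (l + u) ^ d := by
  rw [collar, Fintype.card_piFinset]
  calc ∏ i, (Finset.Ico (c i - l) (c i + u)).card ≤ ∏ _i : Fin d, (l + u) :=
        Finset.prod_le_prod' fun i _ => by rw [Nat.card_Ico]; omega
    _ = (l + u) ^ d := by simp

lemma cube_mono {m n : ℕ} (h : m ≤ n) : cube d m ⊆ cube d n := fun _ hv =>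
  mem_cube.2 fun i => (mem_cube.1 hv i).trans_le h

lemma box_zero (n : ℕ) : box (0 : Site d) n = cube d n := by
  ext v; simp [mem_box, mem_cube]

lemma corner_mem_box (c : Site d) {j : ℕ} (hj : 1 ≤ j) : c ∈ box c j :=
  mem_box.2 fun i => by omega

lemma box_subset_cube {c : Site d} {j n : ℕ} (h : ∀ i, c i + j ≤ n) : box c j ⊆ cube d n :=
  fun _ hv => mem_cube.2 fun i => (mem_box.1 hv i).2.trans_le (h i)

lemma add_le_of_box_subset_cube {c : Site d} {j n : ℕ} (hj : 1 ≤ j) (h : box c j ⊆ cube d n)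
    (i : Fin d) : c i + j ≤ n := by
  have hlast : (fun i => c i + (j - 1)) ∈ cube d n := h (mem_box.2 fun i => by omega)
  have := mem_cube.1 hlast i
  omega

lemma box_subset_collar (c : Site d) (l : ℕ) {j u : ℕ} (hu : j ≤ u) : box c j ⊆ collar c l u :=
  fun _ hv => mem_collar.2 fun i => by have := mem_box.1 hv i; omega

lemma mem_collar_of_not_disjoint {c t v : Site d} {j R : ℕ} (hv : v ∈ box t R)
    (h : ¬ Disjoint (box t R) (box c j)) : v ∈ collar c R (j + R) := by
  obtain ⟨u, hut, huc⟩ := Finset.not_disjoint_iff.1 h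
  refine mem_collar.2 fun i => ?_
  have h1 := mem_box.1 hut i
  have h2 := mem_box.1 huc i
  have h3 := mem_box.1 hv i
  omega

lemma box_eq_map (c : Site d) (j : ℕ) : box c j = (cube d j).map (addLeftEmbedding c) := by
  ext v
  simp only [Finset.mem_map, addLeftEmbedding_apply, mem_box, mem_cube]
  constructor
  · exact fun h => ⟨v - c, fun i => by have := h i; simp only [Pi.sub_apply]; omega,
      funext fun i => by have := h i; simp only [Pi.add_apply, Pi.sub_apply]; omega⟩
  · rintro ⟨u, hu, rfl⟩ i
    have := hu i
    simp only [Pi.add_apply]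
    omega

lemma wordAt_eq_iff {x x' : Config A d} {k : ℕ} {c c' : Site d} :
    wordAt x k c = wordAt x' k c' ↔ ∀ u ∈ cube d k, x (c + u) = x' (c' + u) := by
  constructor
  · intro h u hu
    exact congrFun h fun i => ⟨u i, mem_cube.1 hu i⟩
  · intro h
    funext w
    exact h (fun i => (w i : ℕ)) (mem_cube.2 fun i => (w i).2)

lemma wordAt_eq_iff_eqOn_box {x x' : Config A d} {k : ℕ} {c : Site d} :
    wordAt x k c = wordAt x' k c ↔ ∀ v ∈ box c k, x v = x' v := by
  rw [wordAt_eq_iff, box_eq_map, Finset.forall_mem_map]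
  rfl

lemma wordAt_shift (x : Config A d) (k : ℕ) (c r : Site d) :
    wordAt (shift r x) k c = wordAt x k (c + r) := by
  funext w
  simp only [wordAt, shift]
  congr 1
  funext j
  simp only [Pi.add_apply]
  ring

lemma card_biUnion_box {ι : Type*} (F : Finset ι) (c : ι → Site d) (j : ι → ℕ)
    (hF : (F : Set ι).PairwiseDisjoint fun b => box (c b) (j b)) :
    (F.biUnion fun b => box (c b) (j b)).card = ∑ b ∈ F, j b ^ d := by
  rw [Finset.card_biUnion hF]
  simp only [card_box]

lemma exists_disjoint_boxes (V : Finset (Site d)) (n : Site d → ℕ) (hn : ∀ v ∈ V, 1 ≤ n v) :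
    ∃ U ⊆ V, (U : Set (Site d)).PairwiseDisjoint (fun v => box v (n v)) ∧
      V.card ≤ 3 ^ d * ∑ u ∈ U, (n u) ^ d := by
  obtain ⟨u, hu, hdis, hcov⟩ := Vitali.exists_disjoint_subfamily_covering_enlargement
    (fun v => (box v (n v) : Set (Site d))) (V : Set (Site d)) (fun v => (n v : ℝ)) 2
    (by norm_num) (fun _ _ => Nat.cast_nonneg _) ((∑ v ∈ V, n v : ℕ) : ℝ)
    (fun a ha => by
      exact_mod_cast Finset.single_le_sum (f := n) (fun _ _ => Nat.zero_le _) ha)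
    (fun a ha => ⟨a, corner_mem_box a (hn a ha)⟩)
  lift u to Finset (Site d) using V.finite_toSet.subset hu
  refine ⟨u, Finset.coe_subset.1 hu, fun a ha b hb hab => ?_, ?_⟩
  · simpa [Function.onFun, Finset.disjoint_coe] using hdis ha hb hab
  have hV : V ⊆ u.biUnion fun b => collar b (2 * n b) (n b) := by
    intro a ha
    obtain ⟨b, hb, ⟨v, hva, hvb⟩, hle⟩ := hcov a ha
    refine Finset.mem_biUnion.2 ⟨b, hb, mem_collar.2 fun i => ?_⟩
    have h1 := mem_box.1 (Finset.mem_coe.1 hva) i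
    have h2 := mem_box.1 (Finset.mem_coe.1 hvb) i
    have h3 : n a ≤ 2 * n b := by exact_mod_cast hle
    omega
  calc V.card ≤ (u.biUnion fun b => collar b (2 * n b) (n b)).card := Finset.card_le_card hV
    _ ≤ ∑ b ∈ u, (collar b (2 * n b) (n b)).card := Finset.card_biUnion_le
    _ ≤ ∑ b ∈ u, (2 * n b + n b) ^ d := Finset.sum_le_sum fun b _ => card_collar_le _ _ _
    _ = 3 ^ d * ∑ b ∈ u, n b ^ d := by
      rw [Finset.mul_sum]
      exact Finset.sum_congr rfl fun b _ => by ring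

lemma exists_phase_sum_filter_le {R : ℕ} (hR : 1 ≤ R) (s : Finset (Site d)) (b : Site d → ℝ) :
    ∃ τ : Site d, (∀ i, τ i < R) ∧
      (R : ℝ) ^ d * ∑ t ∈ s with ∀ i, t i % R = τ i, b t ≤ ∑ v ∈ s, b v := by
  have hne : (cube d R).Nonempty := ⟨0, mem_cube.2 fun _ => hR⟩
  have hfib : ∑ τ ∈ cube d R, ∑ t ∈ s with (fun i => t i % R) = τ, b t = ∑ v ∈ s, b v :=
    Finset.sum_fiberwise_of_maps_to
      (fun t _ => mem_cube.2 fun i => Nat.mod_lt _ (by omega)) b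
  obtain ⟨τ, hτ, hle⟩ := Finset.exists_le_of_sum_le (s := cube d R)
    (f := fun τ => ∑ t ∈ s with (fun i => t i % R) = τ, b t)
    (g := fun _ => (∑ v ∈ s, b v) / (R : ℝ) ^ d) hne (by
      rw [hfib, Finset.sum_const, card_cube, nsmul_eq_mul]
      have : (R : ℝ) ^ d ≠ 0 := by positivity
      push_cast
      rw [mul_div_cancel₀ _ this])
  refine ⟨τ, mem_cube.1 hτ, ?_⟩
  rw [le_div_iff₀ (by positivity)] at hle
  simpa [funext_iff, mul_comm] using hle

lemma exists_phase_card_filter_le {R : ℕ} (hR : 1 ≤ R) (s : Finset (Site d))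
    (P : Site d → Prop) [DecidablePred P] :
    ∃ τ : Site d, (∀ i, τ i < R) ∧
      (R : ℝ) ^ d * (s.filter fun t => (∀ i, t i % R = τ i) ∧ P t).card ≤
        (s.filter P).card := by
  obtain ⟨τ, hτ, h⟩ := exists_phase_sum_filter_le hR s fun v => if P v then 1 else 0
  refine ⟨τ, hτ, ?_⟩
  rw [← Finset.sum_filter, ← Finset.sum_filter, Finset.filter_filter] at h
  simpa using h

lemma eq_of_mem_box_of_mod_eq {R : ℕ} {τ t t' v : Site d} (ht : ∀ i, t i % R = τ i)
    (ht' : ∀ i, t' i % R = τ i) (h : v ∈ box t R) (h' : v ∈ box t' R) : t = t' := by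
  funext i
  have h1 := mem_box.1 h i
  have h2 := mem_box.1 h' i
  have e : t i ≡ t' i [MOD R] := by rw [Nat.ModEq, ht, ht']
  rcases le_total (t i) (t' i) with hle | hle
  · have := Nat.eq_zero_of_dvd_of_lt ((Nat.modEq_iff_dvd' hle).1 e) (by omega)
    omega
  · have := Nat.eq_zero_of_dvd_of_lt ((Nat.modEq_iff_dvd' hle).1 e.symm) (by omega)
    omega

lemma exists_mod_eq_of_le {R τ v : ℕ} (hτ : τ < R) (hv : R ≤ v) :
    ∃ t, t % R = τ ∧ t ≤ v ∧ v < t + R := by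
  have hlt := Nat.mod_lt (v + R - τ) (by omega : 0 < R)
  refine ⟨v - (v + R - τ) % R, ?_, by omega, by omega⟩
  have hmod : v - (v + R - τ) % R ≡ τ [MOD R] := by
    refine Nat.ModEq.add_right_cancel' ((v + R - τ) % R) ?_
    rw [Nat.sub_add_cancel (by omega)]
    have h : τ + (v + R - τ) % R ≡ τ + (v + R - τ) [MOD R] := (Nat.mod_modEq _ _).add_left τ
    rw [show τ + (v + R - τ) = v + R by omega] at h
    exact (h.trans Nat.add_modEq_right).symm
  rw [hmod, Nat.mod_eq_of_lt hτ]

lemma exists_box_mem_of_le {R : ℕ} {τ v : Site d} (hτ : ∀ i, τ i < R) (hv : ∀ i, R ≤ v i) :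
    ∃ t : Site d, (∀ i, t i % R = τ i) ∧ v ∈ box t R := by
  choose t ht hle hlt using fun i => exists_mod_eq_of_le (hτ i) (hv i)
  exact ⟨t, ht, mem_box.2 fun i => ⟨hle i, hlt i⟩⟩

/-- The lower corners of the good tiles: the boxes of the `R`-periodic grid of phase `τ` which lie
in `Λ_N`, have a corner satisfying `G`, and avoid the obstacle `O`. -/
def tiles (N R : ℕ) (τ : Site d) (G : Site d → Prop) [DecidablePred G] (O : Finset (Site d)) :
    Finset (Site d) :=
  (cube d N).filter fun t =>
    (∀ i, t i % R = τ i) ∧ G t ∧ box t R ⊆ cube d N ∧ Disjoint (box t R) O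

section tiles

variable {N R : ℕ} {τ : Site d} {G : Site d → Prop} [DecidablePred G] {O : Finset (Site d)}

lemma pairwiseDisjoint_tiles :
    (tiles N R τ G O : Set (Site d)).PairwiseDisjoint fun t => box t R := fun _ ht _ ht' hne =>
  Finset.disjoint_left.2 fun _ hv hv' => hne <|
    eq_of_mem_box_of_mod_eq (Finset.mem_filter.1 ht).2.1 (Finset.mem_filter.1 ht').2.1 hv hv'

lemma card_add_card_tiles_mul_le (hO : O ⊆ cube d N) :
    O.card + (tiles N R τ G O).card * R ^ d ≤ N ^ d := by
  have hdisj : Disjoint O ((tiles N R τ G O).biUnion fun t => box t R) :=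
    (Finset.disjoint_biUnion_right _ _ _).2 fun t ht => (Finset.mem_filter.1 ht).2.2.2.2.symm
  have hcard := Finset.card_union_of_disjoint hdisj
  rw [card_biUnion_box _ _ _ pairwiseDisjoint_tiles, Finset.sum_const, smul_eq_mul] at hcard
  rw [← hcard, ← card_cube]
  exact Finset.card_le_card <| Finset.union_subset hO <|
    Finset.biUnion_subset.2 fun t ht => (Finset.mem_filter.1 ht).2.2.2.1

lemma sdiff_tiles_subset (hτ : ∀ i, τ i < R) {ι : Type*} (F : Finset ι) (c : ι → Site d)
    (j : ι → ℕ) (hO : O = F.biUnion fun b => box (c b) (j b)) :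
    cube d N \ (O ∪ (tiles N R τ G O).biUnion fun t => box t R) ⊆
      (cube d N \ box (fun _ => R) (N - 2 * R)) ∪
      ((F.biUnion fun b => collar (c b) R (j b + R) \ box (c b) (j b)) ∪
        ((cube d N).filter fun t => (∀ i, t i % R = τ i) ∧ ¬ G t).biUnion fun t => box t R) := by
  intro v hv
  simp only [Finset.mem_sdiff, Finset.mem_union, not_or] at hv ⊢
  obtain ⟨hvN, hvO, hvT⟩ := hv
  refine or_iff_not_imp_left.2 fun hin => ?_
  replace hin := mem_box.1 (not_not.1 fun h => hin ⟨hvN, h⟩)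
  obtain ⟨t, ht, hvt⟩ := exists_box_mem_of_le hτ fun i => (hin i).1
  have hbox : box t R ⊆ cube d N := box_subset_cube fun i => by
    have := mem_box.1 hvt i
    have := hin i
    omega
  have htN : t ∈ cube d N := mem_cube.2 fun i => (mem_box.1 hvt i).1.trans_lt (mem_cube.1 hvN i)
  by_cases hg : G t
  swap
  · exact Or.inr (Finset.mem_biUnion.2 ⟨t, Finset.mem_filter.2 ⟨htN, ht, hg⟩, hvt⟩)
  have hmeet : ¬ Disjoint (box t R) O := fun hdisj => hvT <|
    Finset.mem_biUnion.2 ⟨t, Finset.mem_filter.2 ⟨htN, ht, hg, hbox, hdisj⟩, hvt⟩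
  subst hO
  simp only [Finset.disjoint_biUnion_right, not_forall] at hmeet
  obtain ⟨b, hb, hnd⟩ := hmeet
  exact Or.inl (Finset.mem_biUnion.2 ⟨b, hb, Finset.mem_sdiff.2
    ⟨mem_collar_of_not_disjoint hvt hnd, fun h => hvO (Finset.mem_biUnion.2 ⟨b, hb, h⟩)⟩⟩)

lemma card_cube_sdiff_inner_le (d N R : ℕ) :
    ((cube d N \ box (fun _ => R) (N - 2 * R)).card : ℝ) ≤
      (N : ℝ) ^ d - ((N - 2 * R : ℕ) : ℝ) ^ d := by
  have hsub : box (fun _ => R) (N - 2 * R) ⊆ cube d N := fun v hv => mem_cube.2 fun i => by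
    have := mem_box.1 hv i
    omega
  rw [Finset.cast_card_sdiff hsub, card_cube, card_box]
  push_cast
  exact le_rfl

lemma card_collar_sdiff_box_le (c : Site d) (R j : ℕ) :
    ((collar c R (j + R) \ box c j).card : ℝ) ≤ ((j + 2 * R : ℕ) : ℝ) ^ d - (j : ℝ) ^ d := by
  rw [Finset.cast_card_sdiff (box_subset_collar c R (by omega)), card_box]
  have h : ((collar c R (j + R)).card : ℝ) ≤ ((R + (j + R) : ℕ) : ℝ) ^ d := by
    exact_mod_cast card_collar_le c R (j + R)
  rw [show R + (j + R) = j + 2 * R by ring] at h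
  push_cast at h ⊢
  linarith

lemma card_sdiff_tiles_le (hτ : ∀ i, τ i < R) {ι : Type*} (F : Finset ι) (c : ι → Site d)
    (j : ι → ℕ) (hO : O = F.biUnion fun b => box (c b) (j b)) :
    ((cube d N \ (O ∪ (tiles N R τ G O).biUnion fun t => box t R)).card : ℝ) ≤
      ((N : ℝ) ^ d - ((N - 2 * R : ℕ) : ℝ) ^ d) +
      (∑ b ∈ F, (((j b + 2 * R : ℕ) : ℝ) ^ d - (j b : ℝ) ^ d) +
      (R : ℝ) ^ d * ((cube d N).filter fun t => (∀ i, t i % R = τ i) ∧ ¬ G t).card) := by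
  have hcollar : ((F.biUnion fun b => collar (c b) R (j b + R) \ box (c b) (j b)).card : ℝ) ≤
      ∑ b ∈ F, (((j b + 2 * R : ℕ) : ℝ) ^ d - (j b : ℝ) ^ d) :=
    (Nat.cast_le.2 Finset.card_biUnion_le).trans <| by
      rw [Nat.cast_sum]
      exact Finset.sum_le_sum fun b _ => card_collar_sdiff_box_le _ _ _
  have hbad : ((((cube d N).filter fun t => (∀ i, t i % R = τ i) ∧ ¬ G t).biUnion
      fun t => box t R).card : ℝ) ≤
      (R : ℝ) ^ d * ((cube d N).filter fun t => (∀ i, t i % R = τ i) ∧ ¬ G t).card :=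
    (Nat.cast_le.2 Finset.card_biUnion_le).trans <| by simp [card_box, mul_comm]
  have hunion := (Finset.card_le_card (sdiff_tiles_subset (N := N) (G := G) hτ F c j hO)).trans <|
    (Finset.card_union_le _ _).trans (Nat.add_le_add_left (Finset.card_union_le _ _) _)
  refine (Nat.cast_le.2 hunion).trans ?_
  rw [Nat.cast_add, Nat.cast_add]
  exact add_le_add (card_cube_sdiff_inner_le d N R) (add_le_add hcollar hbad)

end tiles

/-! ### Counting words through weighted descriptions -/

/-- The `N`-words seen at the origin by the configurations of `Y`. -/
def wordsOn (N : ℕ) (Y : Set (Config A d)) : Set (Word A d N) := (fun y => wordAt y N 0) '' Y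

lemma exists_finset_card_eq_ncard_wordsOn (N : ℕ) (Y : Set (Config A d)) :
    ∃ U : Finset (Config A d), (U : Set (Config A d)) ⊆ Y ∧
      Set.InjOn (fun y => wordAt y N 0) (U : Set (Config A d)) ∧ U.card = (wordsOn N Y).ncard := by
  classical
  obtain ⟨U, hUY, hbij⟩ :=
    (Set.surjOn_image (fun y : Config A d => wordAt y N 0) Y).exists_bijOn_subset
  lift U to Finset (Config A d) using hbij.finite_iff_finite.2 (Set.toFinite _)
  refine ⟨U, hUY, hbij.injOn, ?_⟩
  rw [wordsOn, ← hbij.image_eq, hbij.injOn.ncard_image, Set.ncard_coe_finset]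

lemma card_le_pow_of_injOn_restrict (U : Finset (Config A d)) (D : Finset (Site d))
    (h : ∀ y ∈ U, ∀ y' ∈ U, (∀ v ∈ D, y v = y' v) → y = y') : U.card ≤ A ^ D.card := by
  calc U.card ≤ (Finset.univ : Finset (D → Fin A)).card :=
        Finset.card_le_card_of_injOn (fun y v => y v) (fun _ _ => Finset.mem_coe.2
          (Finset.mem_univ _)) fun y hy y' hy' e => h y hy y' hy' fun v hv => congrFun e ⟨v, hv⟩
    _ = A ^ D.card := by simp

lemma card_mul_le_exp_sum {M : Type*} {P : Finset (Finset M)} {marks : Finset M}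
    {w : M → ℝ} {q : ℝ} (hP : ∀ a ∈ P, a ⊆ marks) (hw : ∀ m ∈ marks, 0 ≤ w m)
    (hq : ∀ a ∈ P, q ≤ ∏ m ∈ a, w m) : (P.card : ℝ) * q ≤ Real.exp (∑ m ∈ marks, w m) := by
  classical
  calc (P.card : ℝ) * q = ∑ _a ∈ P, q := by rw [Finset.sum_const, nsmul_eq_mul]
    _ ≤ ∑ a ∈ P, ∏ m ∈ a, w m := Finset.sum_le_sum hq
    _ ≤ ∑ a ∈ marks.powerset, ∏ m ∈ a, w m :=
        Finset.sum_le_sum_of_subset_of_nonneg (fun a ha => Finset.mem_powerset.2 (hP a ha))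
          fun a ha _ => Finset.prod_nonneg fun m hm => hw m (Finset.mem_powerset.1 ha hm)
    _ = ∏ m ∈ marks, (1 + w m) := (Finset.prod_one_add _).symm
    _ ≤ ∏ m ∈ marks, Real.exp (w m) :=
        Finset.prod_le_prod (fun m hm => by linarith [hw m hm]) fun m _ => by
          linarith [Real.add_one_le_exp (w m)]
    _ = Real.exp (∑ m ∈ marks, w m) := (Real.exp_sum _ _).symm

-- Expanding `∏ m ∈ marks, (1 + w m)` gives a Kraft inequality for the sets of marks.
lemma ncard_wordsOn_le_of_description (hA : 2 ≤ A) {M : Type*} {N : ℕ} {Y : Set (Config A d)}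
    {F : Config A d → Finset M} (D : Finset M → Finset (Site d)) {marks : Finset M}
    {w : M → ℝ} {s cost : ℝ} (hw : ∀ m ∈ marks, 0 ≤ w m)
    (hF : ∀ y ∈ Y, F y ⊆ marks) (hs : ∀ y ∈ Y, ((D (F y)).card : ℝ) ≤ s)
    (hcost : ∀ y ∈ Y, (A : ℝ) ^ (-cost) ≤ ∏ m ∈ F y, w m)
    (hdet : ∀ y ∈ Y, ∀ y' ∈ Y, F y = F y' → (∀ v ∈ D (F y), y v = y' v) →
      ∀ v ∈ cube d N, y v = y' v) :
    ((wordsOn N Y).ncard : ℝ) ≤ (A : ℝ) ^ s * (A : ℝ) ^ cost * Real.exp (∑ m ∈ marks, w m) := by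
  classical
  have hA0 : (0 : ℝ) < A := by positivity
  have hA1 : (1 : ℝ) ≤ A := by exact_mod_cast (by omega : 1 ≤ A)
  obtain ⟨U, hUY, hinj, hcard⟩ := exists_finset_card_eq_ncard_wordsOn N Y
  have hfibre : ∀ a ∈ U.image F, (U.filter fun y => F y = a).card ≤ A ^ ⌊s⌋₊ := by
    intro a ha
    obtain ⟨y₀, hy₀, rfl⟩ := Finset.mem_image.1 ha
    refine (card_le_pow_of_injOn_restrict _ (D (F y₀)) fun y hy y' hy' h => ?_).trans <|
      Nat.pow_le_pow_right (by omega) (Nat.le_floor (hs y₀ (hUY hy₀)))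
    obtain ⟨hyU, hy⟩ := Finset.mem_filter.1 hy
    obtain ⟨hyU', hy'⟩ := Finset.mem_filter.1 hy'
    refine hinj hyU hyU' (wordAt_eq_iff_eqOn_box.2 ?_)
    rw [box_zero]
    exact hdet y (hUY hyU) y' (hUY hyU') (hy.trans hy'.symm) (hy ▸ h)
  have hkraft : ((U.image F).card : ℝ) * (A : ℝ) ^ (-cost) ≤ Real.exp (∑ m ∈ marks, w m) :=
    card_mul_le_exp_sum (Finset.forall_mem_image.2 fun y hy => hF y (hUY hy)) hw
      (Finset.forall_mem_image.2 fun y hy => hcost y (hUY hy))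
  have hs0 : ∀ y ∈ U, (A : ℝ) ^ ⌊s⌋₊ ≤ (A : ℝ) ^ s := fun y hy => by
    rw [← Real.rpow_natCast]
    exact Real.rpow_le_rpow_of_exponent_le hA1
      (Nat.floor_le ((Nat.cast_nonneg _).trans (hs y (hUY hy))))
  rcases U.eq_empty_or_nonempty with rfl | ⟨y₀, hy₀⟩
  · rw [← hcard, Finset.card_empty, Nat.cast_zero]
    positivity
  calc ((wordsOn N Y).ncard : ℝ) = U.card := by rw [hcard]
    _ ≤ (A : ℝ) ^ ⌊s⌋₊ * (U.image F).card := by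
        exact_mod_cast Finset.card_le_mul_card_image U _ hfibre
    _ ≤ (A : ℝ) ^ s * ((A : ℝ) ^ cost * Real.exp (∑ m ∈ marks, w m)) := by
        refine mul_le_mul (hs0 y₀ hy₀) ?_ (Nat.cast_nonneg _) (by positivity)
        rwa [Real.rpow_neg hA0.le, ← div_eq_mul_inv, div_le_iff₀' (by positivity)] at hkraft
    _ = _ := (mul_assoc _ _ _).symm

/-- The corners in `T` together with the `R`-words of `y` found there. -/
def tileMarks (y : Config A d) (R : ℕ) (T : Finset (Site d)) : Finset (Site d × Word A d R) :=
  T.map ⟨fun t => (t, wordAt y R t), fun _ _ h => (Prod.ext_iff.1 h).1⟩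

lemma mem_tileMarks {y : Config A d} {R : ℕ} {T : Finset (Site d)} {m : Site d × Word A d R} :
    m ∈ tileMarks y R T ↔ m.1 ∈ T ∧ wordAt y R m.1 = m.2 := by
  simp only [tileMarks, Finset.mem_map, Prod.ext_iff]
  exact ⟨fun ⟨t, ht, h1, h2⟩ => h1 ▸ ⟨ht, h2⟩, fun ⟨h1, h2⟩ => ⟨m.1, h1, rfl, h2⟩⟩

lemma eqOn_box_of_tileMarks_eq {y y' : Config A d} {R : ℕ} {T T' : Finset (Site d)}
    (h : tileMarks y R T = tileMarks y' R T') {t : Site d} (ht : t ∈ T) :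
    ∀ v ∈ box t R, y v = y' v :=
  wordAt_eq_iff_eqOn_box.1 (mem_tileMarks.1 (h ▸ mem_tileMarks.2 ⟨ht, rfl⟩ :
    (t, wordAt y R t) ∈ tileMarks y' R T')).2.symm

lemma biUnion_tileMarks (y : Config A d) (R : ℕ) (T : Finset (Site d)) :
    (tileMarks y R T).biUnion (fun m => box m.1 R) = T.biUnion fun t => box t R := by
  ext v
  simp only [tileMarks, Finset.mem_biUnion, Finset.mem_map, exists_exists_and_eq_and]
  rfl

/-! ### Asymptotic estimates -/

lemma eventually_boundary_le (d R : ℕ) {θ : ℝ} (hθ : 0 < θ) :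
    ∀ᶠ N : ℕ in atTop, (N : ℝ) ^ d - ((N - R : ℕ) : ℝ) ^ d ≤ θ * (N : ℝ) ^ d := by
  have hlim : Tendsto (fun N : ℕ => (1 - (R : ℝ) / N) ^ d) atTop (𝓝 ((1 - 0) ^ d)) :=
    (tendsto_const_nhds.sub (tendsto_const_div_atTop_nhds_zero_nat (R : ℝ))).pow d
  filter_upwards [hlim.eventually (lt_mem_nhds (by simpa using hθ : 1 - θ < (1 - 0) ^ d)),
    eventually_ge_atTop R, eventually_gt_atTop 0] with N hN hR h0
  have hfactor : ((N - R : ℕ) : ℝ) = N * (1 - (R : ℝ) / N) := by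
    rw [Nat.cast_sub hR]
    field_simp
  rw [hfactor, mul_pow]
  have : 0 < (N : ℝ) ^ d := by positivity
  nlinarith

lemma eventually_enlarge_le (d R : ℕ) {θ : ℝ} (hθ : 0 < θ) :
    ∀ᶠ N : ℕ in atTop, ((N + R : ℕ) : ℝ) ^ d - (N : ℝ) ^ d ≤ θ * (N : ℝ) ^ d := by
  have hlim : Tendsto (fun N : ℕ => (1 + (R : ℝ) / N) ^ d) atTop (𝓝 ((1 + 0) ^ d)) :=
    (tendsto_const_nhds.add (tendsto_const_div_atTop_nhds_zero_nat (R : ℝ))).pow d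
  filter_upwards [hlim.eventually (gt_mem_nhds (by simpa using hθ : (1 + 0) ^ d < 1 + θ)),
    eventually_gt_atTop 0] with N hN h0
  have hfactor : ((N + R : ℕ) : ℝ) = N * (1 + (R : ℝ) / N) := by
    push_cast
    field_simp
  rw [hfactor, mul_pow]
  have : 0 < (N : ℝ) ^ d := by positivity
  nlinarith

lemma natCast_le_natCast_pow (hd : 1 ≤ d) (j : ℕ) : (j : ℝ) ≤ (j : ℝ) ^ d := by
  exact_mod_cast Nat.le_self_pow (by omega) j

lemma rpow_neg_mul_pow_le_pow (hA : 1 ≤ A) (hd : 1 ≤ d) {κ : ℝ} (hκ : 0 ≤ κ) (j : ℕ) :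
    (A : ℝ) ^ (-(κ * (j : ℝ) ^ d)) ≤ ((A : ℝ) ^ (-κ)) ^ j := by
  rw [← Real.rpow_natCast ((A : ℝ) ^ (-κ)), ← Real.rpow_mul (Nat.cast_nonneg A)]
  refine Real.rpow_le_rpow_of_exponent_le (by exact_mod_cast hA) ?_
  nlinarith [natCast_le_natCast_pow hd j]

lemma summable_rpow_neg_mul_pow (hA : 2 ≤ A) (hd : 1 ≤ d) {κ : ℝ} (hκ : 0 < κ) :
    Summable fun j : ℕ => (A : ℝ) ^ (-(κ * (j : ℝ) ^ d)) :=
  .of_nonneg_of_le (fun j => by positivity)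
    (rpow_neg_mul_pow_le_pow (by omega) hd hκ.le)
    (summable_geometric_of_lt_one (by positivity)
      (Real.rpow_lt_one_of_one_lt_of_neg (by exact_mod_cast (by omega : 1 < A)) (by linarith)))

lemma eventually_rpow_neg_le (hA : 2 ≤ A) (hd : 1 ≤ d) {κ θ : ℝ} (hκ : 0 < κ) (hθ : 0 < θ) :
    ∀ᶠ R : ℕ in atTop, (A : ℝ) ^ (-(κ * (R : ℝ) ^ d)) ≤ θ :=
  (summable_rpow_neg_mul_pow hA hd hκ).tendsto_atTop_zero.eventually_le_const hθ

lemma eventually_sum_Icc_le {f : ℕ → ℝ} (hf : Summable f) (hf0 : ∀ j, 0 ≤ f j) {θ : ℝ}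
    (hθ : 0 < θ) : ∀ᶠ J : ℕ in atTop, ∀ N : ℕ, ∑ j ∈ Finset.Icc J N, f j ≤ θ := by
  filter_upwards [(tendsto_sum_nat_add f).eventually_le_const hθ] with J hJ N
  refine le_trans ?_ hJ
  rw [← Finset.Ico_add_one_right_eq_Icc, Finset.sum_Ico_eq_sum_range]
  simp only [add_comm J]
  exact ((summable_nat_add_iff J).2 hf).sum_le_tsum _ fun k _ => hf0 _

/-! ### Counting words with marked blocks -/

/-- A labelled box: its lower corner, its side and its label. -/
abbrev Block (d : ℕ) := Site d × ℕ × ℕ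

namespace Block

/-- The lower corner of a block. -/
abbrev corner (b : Block d) : Site d := b.1

/-- The side of a block. -/
abbrev side (b : Block d) : ℕ := b.2.1

/-- The label of a block. -/
abbrev label (b : Block d) : ℕ := b.2.2

end Block

/-- The sites of the blocks of `F` with nonzero label. Label `0` is reserved for the blocks on which
an array is given explicitly, a nonzero label for the blocks that copy a word known otherwise. -/
def copiedSites (F : Finset (Block d)) : Finset (Site d) :=
  (F.filter fun b => b.label ≠ 0).biUnion fun b => box b.corner b.side

/-- The sites of `Λ_N` at which the `R`-word of `y` is outside `S`. -/
def badSites (y : Config A d) (N : ℕ) {R : ℕ} (S : Finset (Word A d R)) : Finset (Site d) :=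
  (cube d N).filter fun v => wordAt y R v ∉ S

/-- `F` is a family of disjoint blocks of side at least `J` in `Λ_N` with labels of size at most
`A ^ (ρ * side ^ d)`, the copied blocks covering at least a proportion `γ` of `Λ_N`, and `y` has at
most a proportion `lam` of sites in `Λ_N` with `R`-word outside `S`. -/
structure IsMarking (N J : ℕ) {R : ℕ} (S : Finset (Word A d R)) (ρ γ lam : ℝ) (y : Config A d)
    (F : Finset (Block d)) : Prop where
  card_badSites_le : ((badSites y N S).card : ℝ) ≤ lam * (N : ℝ) ^ d
  le_side : ∀ b ∈ F, J ≤ b.side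
  box_subset : ∀ b ∈ F, box b.corner b.side ⊆ cube d N
  label_le : ∀ b ∈ F, (b.label : ℝ) ≤ (A : ℝ) ^ (ρ * (b.side : ℝ) ^ d)
  disjoint : (F : Set (Block d)).PairwiseDisjoint fun b => box b.corner b.side
  le_card_copiedSites : γ * (N : ℝ) ^ d ≤ (copiedSites F).card

/-- The weight of a block as a mark; a copied block pays for its label. -/
noncomputable def blockWeight (A : ℕ) (κ ρ : ℝ) (b : Block d) : ℝ :=
  (A : ℝ) ^ (-(κ * (b.side : ℝ) ^ d)) *
    if b.label = 0 then 1 else ((A : ℝ) ^ (ρ * (b.side : ℝ) ^ d))⁻¹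

/-- The weight of a good tile of side `R` as a mark; it pays for one of `A ^ (a * R ^ d)` words. -/
noncomputable def tileWeight (A d R : ℕ) (κ a : ℝ) : ℝ := (A : ℝ) ^ (-((κ + a) * (R : ℝ) ^ d))

/-- The blocks which may occur in a marking of `Λ_N`. -/
noncomputable def admissibleBlocks (A d N J : ℕ) (ρ : ℝ) : Finset (Block d) :=
  (cube d N ×ˢ Finset.Icc J N ×ˢ Finset.range (⌊(A : ℝ) ^ (|ρ| * (N : ℝ) ^ d)⌋₊ + 1)).filter
    fun b => (b.label : ℝ) ≤ (A : ℝ) ^ (ρ * (b.side : ℝ) ^ d)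

/-- The marks describing `y`: the blocks of `F`, and the good tiles of the phase `τ` which avoid its
copied blocks, together with their words. -/
def description (N : ℕ) {R : ℕ} (S : Finset (Word A d R)) (τ : Site d) (F : Finset (Block d))
    (y : Config A d) : Finset (Block d ⊕ (Site d × Word A d R)) :=
  F.disjSum (tileMarks y R (tiles N R τ (fun t => wordAt y R t ∈ S) (copiedSites F)))

/-- The sites of `Λ_N` covered neither by the copied blocks nor by the tiles of a description. -/
def uncoveredSites (N : ℕ) {R : ℕ} (m : Finset (Block d ⊕ (Site d × Word A d R))) :
    Finset (Site d) :=
  cube d N \ (copiedSites m.toLeft ∪ m.toRight.biUnion fun t => box t.1 R)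

lemma sum_label_weight_le {B : ℝ} (hB : 0 < B) (L : ℕ) :
    ∑ i ∈ (Finset.range L).filter fun i : ℕ => (i : ℝ) ≤ B, (if i = 0 then 1 else B⁻¹) ≤ 2 := by
  have hsub : (Finset.range L).filter (fun i : ℕ => (i : ℝ) ≤ B) ⊆ Finset.range (⌊B⌋₊ + 1) :=
    fun i hi => Finset.mem_range.2 (Nat.lt_succ_of_le (Nat.le_floor (Finset.mem_filter.1 hi).2))
  calc _ ≤ ∑ i ∈ Finset.range (⌊B⌋₊ + 1), (if i = 0 then 1 else B⁻¹) :=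
        Finset.sum_le_sum_of_subset_of_nonneg hsub fun i _ _ => by split_ifs <;> positivity
    _ = ⌊B⌋₊ * B⁻¹ + 1 := by
        rw [Finset.sum_range_succ']
        simp
    _ ≤ B * B⁻¹ + 1 := by
        gcongr
        exact Nat.floor_le hB.le
    _ = 2 := by rw [mul_inv_cancel₀ hB.ne']; norm_num

lemma sum_blockWeight_le (hA : 1 ≤ A) (N J : ℕ) (κ ρ : ℝ) :
    ∑ b ∈ admissibleBlocks A d N J ρ, blockWeight A κ ρ b ≤
      (N : ℝ) ^ d * (2 * ∑ j ∈ Finset.Icc J N, (A : ℝ) ^ (-(κ * (j : ℝ) ^ d))) := by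
  have hA0 : (0 : ℝ) < A := by exact_mod_cast hA
  rw [admissibleBlocks, Finset.sum_filter, Finset.sum_product]
  simp only [Finset.sum_product, blockWeight, Block.side, Block.label]
  rw [Finset.sum_const, card_cube, nsmul_eq_mul, Nat.cast_pow]
  gcongr ?_ * ?_
  rw [Finset.mul_sum]
  gcongr with j
  rw [← Finset.sum_filter, ← Finset.mul_sum, mul_comm (2 : ℝ)]
  gcongr
  exact sum_label_weight_le (Real.rpow_pos_of_pos hA0 _) _

lemma card_mul_tileWeight_le (hA : 1 ≤ A) {R : ℕ} {κ a : ℝ} {S : Finset (Word A d R)}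
    (hS : (S.card : ℝ) ≤ (A : ℝ) ^ (a * (R : ℝ) ^ d)) :
    S.card * tileWeight A d R κ a ≤ (A : ℝ) ^ (-(κ * (R : ℝ) ^ d)) := by
  have hA0 : (0 : ℝ) < A := by exact_mod_cast hA
  calc S.card * tileWeight A d R κ a
      ≤ (A : ℝ) ^ (a * (R : ℝ) ^ d) * (A : ℝ) ^ (-((κ + a) * (R : ℝ) ^ d)) := by
        rw [tileWeight]
        gcongr
    _ = (A : ℝ) ^ (-(κ * (R : ℝ) ^ d)) := by
        rw [← Real.rpow_add hA0]
        congr 1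
        ring

lemma sum_box_pow_le {ι : Type*} (F : Finset ι) (c : ι → Site d) (j : ι → ℕ) (D : Finset (Site d))
    (hdisj : (F : Set ι).PairwiseDisjoint fun b => box (c b) (j b))
    (hF : ∀ b ∈ F, box (c b) (j b) ⊆ D) : ∑ b ∈ F, (j b : ℝ) ^ d ≤ D.card := by
  have h := card_biUnion_box F c j hdisj ▸ Finset.card_le_card (Finset.biUnion_subset.2 hF)
  exact_mod_cast h

lemma uncoveredSites_description (N : ℕ) {R : ℕ} (S : Finset (Word A d R)) (τ : Site d)
    (F : Finset (Block d)) (y : Config A d) :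
    uncoveredSites N (description N S τ F y) =
      cube d N \ (copiedSites F ∪ (tiles N R τ (fun t => wordAt y R t ∈ S)
        (copiedSites F)).biUnion fun t => box t R) := by
  rw [uncoveredSites, description, Finset.toLeft_disjSum, Finset.toRight_disjSum,
    biUnion_tileMarks]

lemma eqOn_of_description_eq {N R : ℕ} {S : Finset (Word A d R)} {τ τ' : Site d}
    {F F' : Finset (Block d)} {y y' : Config A d}
    (h : description N S τ F y = description N S τ' F' y')
    (hD : ∀ v ∈ uncoveredSites N (description N S τ F y), y v = y' v) :
    F = F' ∧ ∀ v ∈ cube d N, v ∉ copiedSites F → y v = y' v := by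
  obtain ⟨hF, hT⟩ := Finset.disjSum_inj.1 h
  refine ⟨hF, fun v hv hvF => ?_⟩
  rw [uncoveredSites_description] at hD
  by_cases hvT : v ∈ (tiles N R τ (fun t => wordAt y R t ∈ S) (copiedSites F)).biUnion
    fun t => box t R
  · obtain ⟨t, ht, hvt⟩ := Finset.mem_biUnion.1 hvT
    exact eqOn_box_of_tileMarks_eq hT ht v hvt
  · refine hD v (Finset.mem_sdiff.2 ⟨hv, fun hvU => ?_⟩)
    exact (Finset.mem_union.1 hvU).elim hvF hvT

namespace IsMarking

variable {N J R : ℕ} {S : Finset (Word A d R)} {ρ γ lam κ a : ℝ} {y : Config A d}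
  {F : Finset (Block d)}

lemma card_copiedSites (h : IsMarking N J S ρ γ lam y F) :
    (copiedSites F).card = ∑ b ∈ F with b.label ≠ 0, b.side ^ d :=
  card_biUnion_box _ _ _ (h.disjoint.subset (Finset.coe_subset.2 (Finset.filter_subset _ _)))

lemma sum_side_pow_le (h : IsMarking N J S ρ γ lam y F) :
    ∑ b ∈ F, (b.side : ℝ) ^ d ≤ (N : ℝ) ^ d := by
  exact (sum_box_pow_le F _ _ (cube d N) h.disjoint h.box_subset).trans_eq
    (by rw [card_cube, Nat.cast_pow])

lemma copiedSites_subset (h : IsMarking N J S ρ γ lam y F) : copiedSites F ⊆ cube d N :=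
  Finset.biUnion_subset.2 fun b hb => h.box_subset b (Finset.mem_filter.1 hb).1

lemma subset_admissibleBlocks (hA : 1 ≤ A) (hd : 1 ≤ d) (hJ : 1 ≤ J)
    (h : IsMarking N J S ρ γ lam y F) : F ⊆ admissibleBlocks A d N J ρ := by
  intro b hb
  have hside := hJ.trans (h.le_side b hb)
  have hcorner : b.corner ∈ cube d N := h.box_subset b hb (corner_mem_box _ hside)
  have hsideN : b.side ≤ N := by
    have := add_le_of_box_subset_cube hside (h.box_subset b hb) ⟨0, hd⟩
    omega
  refine Finset.mem_filter.2 ⟨Finset.mem_product.2 ⟨hcorner, Finset.mem_product.2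
    ⟨Finset.mem_Icc.2 ⟨h.le_side b hb, hsideN⟩, Finset.mem_range.2
      (Nat.lt_succ_of_le (Nat.le_floor ((h.label_le b hb).trans ?_)))⟩⟩, h.label_le b hb⟩
  refine Real.rpow_le_rpow_of_exponent_le (by exact_mod_cast hA) ?_
  gcongr
  exact le_abs_self ρ

lemma prod_blockWeight (hA : 1 ≤ A) (h : IsMarking N J S ρ γ lam y F) :
    ∏ b ∈ F, blockWeight A κ ρ b =
      (A : ℝ) ^ (-(κ * ∑ b ∈ F, (b.side : ℝ) ^ d + ρ * (copiedSites F).card)) := by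
  have hA0 : (0 : ℝ) < A := by exact_mod_cast hA
  have hexp : ∀ b : Block d, blockWeight A κ ρ b = (A : ℝ) ^ (-(κ * (b.side : ℝ) ^ d) +
      -if b.label ≠ 0 then ρ * (b.side : ℝ) ^ d else 0) := fun b => by
    rw [Real.rpow_add hA0, blockWeight]
    by_cases hb : b.label = 0 <;> simp [hb, Real.rpow_neg hA0.le]
  rw [Finset.prod_congr rfl fun b _ => hexp b, ← Real.rpow_sum_of_pos hA0, Finset.sum_add_distrib,
    Finset.sum_neg_distrib, Finset.sum_neg_distrib, ← Finset.sum_filter, ← Finset.mul_sum,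
    ← Finset.mul_sum, h.card_copiedSites, neg_add]
  push_cast
  rfl

lemma description_subset (hA : 1 ≤ A) (hd : 1 ≤ d) (hJ : 1 ≤ J)
    (h : IsMarking N J S ρ γ lam y F) (τ : Site d) :
    description N S τ F y ⊆ (admissibleBlocks A d N J ρ).disjSum (cube d N ×ˢ S) := by
  refine Finset.disjSum_mono (h.subset_admissibleBlocks hA hd hJ) ?_
  rintro ⟨t, u⟩ ht
  obtain ⟨htT, htu⟩ := mem_tileMarks.1 ht
  obtain ⟨htN, -, hS, -⟩ := Finset.mem_filter.1 htT
  exact Finset.mem_product.2 ⟨htN, htu ▸ hS⟩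

lemma rpow_neg_le_prod_description (hA : 1 ≤ A) (hκ : 0 ≤ κ) (ha : 0 ≤ a) (hρ : ρ ≤ a)
    (h : IsMarking N J S ρ γ lam y F) (τ : Site d) :
    (A : ℝ) ^ (-((2 * κ + ρ * γ + a * (1 - γ)) * (N : ℝ) ^ d)) ≤
      ∏ m ∈ description N S τ F y,
        Sum.elim (blockWeight A κ ρ) (fun _ => tileWeight A d R κ a) m := by
  have hA0 : (0 : ℝ) < A := by exact_mod_cast hA
  have hT := card_add_card_tiles_mul_le (R := R) (τ := τ) (G := fun t => wordAt y R t ∈ S)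
    h.copiedSites_subset
  rw [description, Finset.prod_disjSum]
  simp only [Sum.elim_inl, Sum.elim_inr, Finset.prod_const]
  rw [h.prod_blockWeight hA, tileMarks, Finset.card_map, tileWeight, ← Real.rpow_mul_natCast hA0.le,
    ← Real.rpow_add hA0]
  refine Real.rpow_le_rpow_of_exponent_le (by exact_mod_cast hA) ?_
  set T := tiles N R τ (fun t => wordAt y R t ∈ S) (copiedSites F)
  have hVT : ((copiedSites F).card : ℝ) + T.card * (R : ℝ) ^ d ≤ (N : ℝ) ^ d := by
    exact_mod_cast hT
  set V : ℝ := ((copiedSites F).card : ℝ)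
  have hV : 0 ≤ V := Nat.cast_nonneg _
  have htile : (κ + a) * (T.card * (R : ℝ) ^ d) ≤ κ * (N : ℝ) ^ d + a * ((N : ℝ) ^ d - V) := by
    rw [add_mul]
    gcongr <;> linarith
  have hcopied : (a - ρ) * (γ * (N : ℝ) ^ d) ≤ (a - ρ) * V :=
    mul_le_mul_of_nonneg_left h.le_card_copiedSites (by linarith)
  have hblock := mul_le_mul_of_nonneg_left h.sum_side_pow_le hκ
  linarith

lemma card_uncoveredSites_le {τ : Site d} (hτ : ∀ i, τ i < R)
    (hτbad : (R : ℝ) ^ d *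
      ((cube d N).filter fun t => (∀ i, t i % R = τ i) ∧ ¬ wordAt y R t ∈ S).card ≤
        (badSites y N S).card)
    (hJ : ∀ j ≥ J, ((j + 2 * R : ℕ) : ℝ) ^ d - (j : ℝ) ^ d ≤ κ * (j : ℝ) ^ d) (hκ : 0 ≤ κ)
    (hN : (N : ℝ) ^ d - ((N - 2 * R : ℕ) : ℝ) ^ d ≤ κ * (N : ℝ) ^ d)
    (h : IsMarking N J S ρ γ lam y F) :
    ((uncoveredSites N (description N S τ F y)).card : ℝ) ≤ (2 * κ + lam) * (N : ℝ) ^ d := by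
  rw [uncoveredSites_description]
  refine (card_sdiff_tiles_le hτ _ _ _ rfl).trans ?_
  have hcollar : ∑ b ∈ F with b.label ≠ 0, (((b.side + 2 * R : ℕ) : ℝ) ^ d - (b.side : ℝ) ^ d) ≤
      κ * (N : ℝ) ^ d := by
    calc _ ≤ ∑ b ∈ F with b.label ≠ 0, κ * (b.side : ℝ) ^ d :=
          Finset.sum_le_sum fun b hb => hJ _ (h.le_side b (Finset.mem_filter.1 hb).1)
      _ = κ * ∑ b ∈ F with b.label ≠ 0, (b.side : ℝ) ^ d := by rw [Finset.mul_sum]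
      _ ≤ κ * ∑ b ∈ F, (b.side : ℝ) ^ d := by
          gcongr
          exact Finset.filter_subset _ _
      _ ≤ κ * (N : ℝ) ^ d := by
          gcongr
          exact h.sum_side_pow_le
  linarith [h.card_badSites_le]

end IsMarking

lemma mark_weight_nonneg (A d R : ℕ) (κ ρ a : ℝ) {M : Type*} (m : Block d ⊕ M) :
    0 ≤ Sum.elim (blockWeight A κ ρ) (fun _ => tileWeight A d R κ a) m := by
  rcases m with b | t
  · simp only [Sum.elim_inl, blockWeight]
    split_ifs <;> positivity
  · simp only [Sum.elim_inr, tileWeight]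
    positivity

lemma sum_mark_weight_le (hA : 2 ≤ A) {N J R : ℕ} {κ a ρ : ℝ} {S : Finset (Word A d R)}
    (hS : (S.card : ℝ) ≤ (A : ℝ) ^ (a * (R : ℝ) ^ d))
    (hR : (A : ℝ) ^ (-(κ * (R : ℝ) ^ d)) ≤ κ * Real.log A / 2)
    (hJ : ∑ j ∈ Finset.Icc J N, (A : ℝ) ^ (-(κ * (j : ℝ) ^ d)) ≤ κ * Real.log A / 4) :
    ∑ m ∈ (admissibleBlocks A d N J ρ).disjSum (cube d N ×ˢ S),
      Sum.elim (blockWeight A κ ρ) (fun _ => tileWeight A d R κ a) m ≤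
        Real.log A * (κ * (N : ℝ) ^ d) := by
  rw [Finset.sum_disjSum, Finset.sum_product]
  simp only [Sum.elim_inl, Sum.elim_inr, Finset.sum_const, nsmul_eq_mul, card_cube, Nat.cast_pow]
  have hblock := sum_blockWeight_le (d := d) (by omega : 1 ≤ A) N J κ ρ
  have htile := (card_mul_tileWeight_le (by omega) hS).trans hR
  have hNd : (0 : ℝ) ≤ (N : ℝ) ^ d := by positivity
  nlinarith

-- The copied blocks cost `ρ` per site, the good tiles `a` per site, and the other sites are listed.
lemma ncard_wordsOn_le_of_isMarking (hA : 2 ≤ A) (hd : 1 ≤ d) {N J R : ℕ} (hJ1 : 1 ≤ J)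
    (hR1 : 1 ≤ R) {κ a ρ γ lam : ℝ} (hκ : 0 ≤ κ) (hρ : ρ ≤ a) (ha : 0 ≤ a)
    {S : Finset (Word A d R)} (hS : (S.card : ℝ) ≤ (A : ℝ) ^ (a * (R : ℝ) ^ d))
    (hR : (A : ℝ) ^ (-(κ * (R : ℝ) ^ d)) ≤ κ * Real.log A / 2)
    (hJ : ∀ j ≥ J, ((j + 2 * R : ℕ) : ℝ) ^ d - (j : ℝ) ^ d ≤ κ * (j : ℝ) ^ d)
    (hJsum : ∑ j ∈ Finset.Icc J N, (A : ℝ) ^ (-(κ * (j : ℝ) ^ d)) ≤ κ * Real.log A / 4)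
    (hN : (N : ℝ) ^ d - ((N - 2 * R : ℕ) : ℝ) ^ d ≤ κ * (N : ℝ) ^ d)
    {Y : Set (Config A d)} {F : Config A d → Finset (Block d)}
    (hY : ∀ y ∈ Y, IsMarking N J S ρ γ lam y (F y))
    (hdet : ∀ y ∈ Y, ∀ y' ∈ Y, F y = F y' →
      (∀ v ∈ cube d N, v ∉ copiedSites (F y) → y v = y' v) → ∀ v ∈ cube d N, y v = y' v) :
    ((wordsOn N Y).ncard : ℝ) ≤ (A : ℝ) ^ ((ρ * γ + a * (1 - γ) + lam + 5 * κ) * (N : ℝ) ^ d) := by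
  have hA1 : 1 ≤ A := by omega
  have hA0 : (0 : ℝ) < A := by positivity
  choose τ hτ hτbad using fun y : Config A d =>
    exists_phase_card_filter_le hR1 (cube d N) fun t => wordAt y R t ∉ S
  have hcount := ncard_wordsOn_le_of_description hA (uncoveredSites N)
    (F := fun y => description N S (τ y) (F y) y) (fun m _ => mark_weight_nonneg A d R κ ρ a m)
    (fun y hy => (hY y hy).description_subset hA1 hd hJ1 (τ y))
    (fun y hy => (hY y hy).card_uncoveredSites_le (hτ y) (hτbad y) hJ hκ hN)
    (fun y hy => (hY y hy).rpow_neg_le_prod_description hA1 hκ ha hρ (τ y))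
    fun y hy y' hy' h hD => hdet y hy y' hy' (eqOn_of_description_eq h hD).1
      (eqOn_of_description_eq h hD).2
  calc _ ≤ _ := hcount
    _ ≤ (A : ℝ) ^ ((2 * κ + lam) * (N : ℝ) ^ d) *
        (A : ℝ) ^ ((2 * κ + ρ * γ + a * (1 - γ)) * (N : ℝ) ^ d) *
        (A : ℝ) ^ (κ * (N : ℝ) ^ d) := by
        rw [Real.rpow_def_of_pos hA0 (κ * (N : ℝ) ^ d)]
        gcongr
        exact sum_mark_weight_le hA hS hR hJsum
    _ = _ := by
        rw [← Real.rpow_add hA0, ← Real.rpow_add hA0]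
        congr 1
        ring

lemma eventually_ncard_wordsOn_le_of_isMarking (hA : 2 ≤ A) (hd : 1 ≤ d) {κ : ℝ} (hκ : 0 < κ) :
    ∀ᶠ R in atTop, ∀ᶠ J in atTop, ∀ᶠ N : ℕ in atTop, ∀ (a ρ γ lam : ℝ), ρ ≤ a → 0 ≤ a →
      ∀ S : Finset (Word A d R), (S.card : ℝ) ≤ (A : ℝ) ^ (a * (R : ℝ) ^ d) →
      ∀ (Y : Set (Config A d)) (F : Config A d → Finset (Block d)),
        (∀ y ∈ Y, IsMarking N J S ρ γ lam y (F y)) →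
        (∀ y ∈ Y, ∀ y' ∈ Y, F y = F y' →
          (∀ v ∈ cube d N, v ∉ copiedSites (F y) → y v = y' v) → ∀ v ∈ cube d N, y v = y' v) →
        ((wordsOn N Y).ncard : ℝ) ≤
          (A : ℝ) ^ ((ρ * γ + a * (1 - γ) + lam + 5 * κ) * (N : ℝ) ^ d) := by
  have hlog : 0 < Real.log A := Real.log_pos (by exact_mod_cast hA)
  filter_upwards [eventually_ge_atTop 1,
    eventually_rpow_neg_le hA hd hκ (by positivity : 0 < κ * Real.log A / 2)] with R hR1 hR
  filter_upwards [eventually_ge_atTop 1,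
    eventually_forall_ge_atTop.2 (eventually_enlarge_le d (2 * R) hκ),
    eventually_sum_Icc_le (summable_rpow_neg_mul_pow hA hd hκ) (fun j => by positivity)
      (by positivity : 0 < κ * Real.log A / 4)] with J hJ1 hJ hJsum
  filter_upwards [eventually_boundary_le d (2 * R) hκ] with N hN a ρ γ lam hρ ha S hS Y F hY hdet
  exact ncard_wordsOn_le_of_isMarking hA hd hJ1 hR1 hκ.le hρ ha hS hR hJ (hJsum N) hN hY hdet

/-! ### The mean ergodic theorem -/

lemma sum_cube_add {M : Type*} [AddCommMonoid M] (g : Site d → M) (r : Site d) (n : ℕ) :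
    ∑ v ∈ cube d n, g (v + r) = ∑ v ∈ box r n, g v := by
  simp only [box_eq_map, Finset.sum_map, addLeftEmbedding_apply, add_comm r]

lemma pow_sub_le_card_box_inter_cube {r : Site d} {R : ℕ} (hR : ∀ i, r i ≤ R) (n : ℕ) :
    (n - R) ^ d ≤ (box r n ∩ cube d n).card := by
  rw [← card_box (d := d) (fun _ => R) (n - R)]
  refine Finset.card_le_card fun v hv => Finset.mem_inter.2 ⟨mem_box.2 fun i => ?_,
    mem_cube.2 fun i => ?_⟩ <;> have := mem_box.1 hv i <;> have := hR i <;> omega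

lemma norm_sum_box_sub_sum_cube_le {H : Type*} [SeminormedAddCommGroup H] (g : Site d → H) {C : ℝ}
    (hC : ∀ v, ‖g v‖ ≤ C) {r : Site d} {R : ℕ} (hR : ∀ i, r i ≤ R) (n : ℕ) :
    ‖∑ v ∈ box r n, g v - ∑ v ∈ cube d n, g v‖ ≤
      2 * C * ((n : ℝ) ^ d - ((n - R : ℕ) : ℝ) ^ d) := by
  have hC0 : 0 ≤ C := (norm_nonneg _).trans (hC 0)
  have hsdiff : ∀ s t : Finset (Site d), s.card = n ^ d → (n - R) ^ d ≤ (s ∩ t).card →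
      ‖∑ v ∈ s \ t, g v‖ ≤ ((n : ℝ) ^ d - ((n - R : ℕ) : ℝ) ^ d) * C := fun s t hs hst => by
    have hadd : (s \ t).card + (n - R) ^ d ≤ n ^ d := by
      have := Finset.card_sdiff_add_card_inter s t
      omega
    have hcard : ((s \ t).card : ℝ) ≤ (n : ℝ) ^ d - ((n - R : ℕ) : ℝ) ^ d :=
      le_sub_iff_add_le.2 (by exact_mod_cast hadd)
    calc ‖∑ v ∈ s \ t, g v‖ ≤ (s \ t).card • C :=
          Finset.sum_const C ▸ norm_sum_le_of_le _ fun v _ => hC v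
      _ ≤ _ := by rw [nsmul_eq_mul]; gcongr
  have hinter := pow_sub_le_card_box_inter_cube hR n
  rw [← Finset.sum_sdiff_sub_sum_sdiff]
  calc _ ≤ ‖∑ v ∈ box r n \ cube d n, g v‖ + ‖∑ v ∈ cube d n \ box r n, g v‖ := norm_sub_le _ _
    _ ≤ _ := add_le_add (hsdiff _ _ (card_box r n) hinter)
          (hsdiff _ _ (card_cube d n) (by rwa [Finset.inter_comm]))
    _ = _ := by ring

lemma tendsto_boundary_ratio (d R : ℕ) :
    Tendsto (fun n : ℕ => ((n : ℝ) ^ d - ((n - R : ℕ) : ℝ) ^ d) / (n : ℝ) ^ d) atTop (𝓝 0) := by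
  refine tendsto_order.2 ⟨fun b hb => .of_forall fun n =>
    hb.trans_le (div_nonneg ?_ (by positivity)), fun b hb => ?_⟩
  · have : ((n - R : ℕ) : ℝ) ≤ n := by exact_mod_cast Nat.sub_le n R
    exact sub_nonneg.2 (by gcongr)
  · filter_upwards [eventually_boundary_le d R (half_pos hb), eventually_gt_atTop 0] with n hn h0
    rw [div_lt_iff₀ (by positivity)]
    exact hn.trans_lt (by gcongr; exact half_lt_self hb)

section MeanErgodic

variable {H : Type*} [NormedAddCommGroup H]

/-- The average of the isometries `U v` over the sites `v` of `Λ_n`. -/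
noncomputable def cubeAverage [NormedSpace ℝ H] (U : Site d → H →ₗᵢ[ℝ] H) (n : ℕ) : H →L[ℝ] H :=
  ((n : ℝ) ^ d)⁻¹ • ∑ v ∈ cube d n, (U v).toContinuousLinearMap

lemma cubeAverage_apply [NormedSpace ℝ H] (U : Site d → H →ₗᵢ[ℝ] H) (n : ℕ) (f : H) :
    cubeAverage U n f = ((n : ℝ) ^ d)⁻¹ • ∑ v ∈ cube d n, U v f := by
  simp [cubeAverage]

lemma norm_cubeAverage_apply_le [NormedSpace ℝ H] (U : Site d → H →ₗᵢ[ℝ] H) (n : ℕ) (f : H) :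
    ‖cubeAverage U n f‖ ≤ ‖f‖ := by
  have hsum : ‖∑ v ∈ cube d n, U v f‖ ≤ (n : ℝ) ^ d * ‖f‖ := by
    refine (norm_sum_le_of_le _ fun v _ => ((U v).norm_map f).le).trans ?_
    simp [card_cube]
  rw [cubeAverage_apply, norm_smul, norm_inv, Real.norm_of_nonneg (by positivity)]
  exact inv_mul_le_of_le_mul₀ (by positivity) (norm_nonneg f) hsum

lemma cubeAverage_apply_eq_self [NormedSpace ℝ H] {U : Site d → H →ₗᵢ[ℝ] H} {f c : H}
    (h : ∀ v, U v f = c) {n : ℕ} (hn : 0 < n) : cubeAverage U n f = c := by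
  simp only [cubeAverage_apply, h, Finset.sum_const, card_cube]
  rw [← Nat.cast_smul_eq_nsmul ℝ, Nat.cast_pow, inv_smul_smul₀ (by positivity)]

lemma tendsto_cubeAverage_sub [NormedSpace ℝ H] {U : Site d → H →ₗᵢ[ℝ] H}
    (hU : ∀ r s f, U r (U s f) = U (r + s) f) (r : Site d) (f : H) :
    Tendsto (fun n => cubeAverage U n (U r f - f)) atTop (𝓝 0) := by
  have hR : ∀ i, r i ≤ ∑ j, r j := fun i =>
    Finset.single_le_sum (f := r) (fun _ _ => Nat.zero_le _) (Finset.mem_univ i)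
  refine squeeze_zero_norm (fun n => ?_)
    ((tendsto_boundary_ratio d (∑ j, r j)).const_mul (2 * ‖f‖) |>.trans_eq (by simp))
  have hbound := norm_sum_box_sub_sum_cube_le (fun v => U v f) (fun v => ((U v).norm_map f).le) hR n
  simp only [← sum_cube_add (fun v => U v f), ← hU] at hbound
  rw [cubeAverage_apply, norm_smul, norm_inv, Real.norm_of_nonneg (by positivity),
    mul_div_assoc', div_eq_inv_mul]
  simp only [map_sub, Finset.sum_sub_distrib]
  gcongr

variable [InnerProductSpace ℝ H]

-- Vectors orthogonal to all coboundaries `U r f - f` are invariant, and the averages of a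
-- coboundary tend to zero.
theorem exists_tendsto_cubeAverage [CompleteSpace H] {U : Site d → H →ₗᵢ[ℝ] H}
    (hU : ∀ r s f, U r (U s f) = U (r + s) f) (f : H) :
    ∃ m, (∀ r, U r m = m) ∧ Tendsto (fun n => cubeAverage U n f) atTop (𝓝 m) := by
  set W := Submodule.span ℝ {g | ∃ r f, U r f - f = g}
  set m := Wᗮ.starProjection f
  have hmW : ∀ r, inner ℝ (U r m) m = ‖m‖ ^ 2 := fun r => by
    have := (Submodule.mem_orthogonal W m).1 (Wᗮ.starProjection_apply_mem f) (U r m - m)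
      (Submodule.subset_span ⟨r, m, rfl⟩)
    rwa [inner_sub_left, sub_eq_zero, real_inner_self_eq_norm_sq] at this
  have hm : ∀ r, U r m = m := fun r =>
    eq_of_norm_le_re_inner_eq_norm_sq (𝕜 := ℝ) ((U r).norm_map m).le (hmW r)
  have hclosed : IsClosed {g | Tendsto (fun n => cubeAverage U n g) atTop (𝓝 0)} := by
    refine Equicontinuous.isClosed_setOfPred_tendsto (UniformEquicontinuous.equicontinuous
      (LipschitzWith.uniformEquicontinuous _ 1 fun n => ?_)) continuous_const
    exact AddMonoidHomClass.lipschitz_of_bound_nnnorm (cubeAverage U n) 1 fun g =>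
      (norm_cubeAverage_apply_le U n g).trans_eq (one_mul _).symm
  have hspan : ∀ g ∈ W, Tendsto (fun n => cubeAverage U n g) atTop (𝓝 0) := fun g hg => by
    induction hg using Submodule.span_induction with
    | mem g hg => obtain ⟨r, f, rfl⟩ := hg; exact tendsto_cubeAverage_sub hU r f
    | zero => simp
    | add g g' _ _ hg hg' => simpa using hg.add hg'
    | smul a g _ hg => simpa using hg.const_smul a
  have hsub : f - m ∈ closure (W : Set H) := by
    rw [← Submodule.topologicalClosure_coe, ← Submodule.orthogonal_orthogonal_eq_closure]
    exact Submodule.sub_starProjection_mem_orthogonal f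
  have hlim : Tendsto (fun n => cubeAverage U n (f - m)) atTop (𝓝 0) :=
    closure_minimal hspan hclosed hsub
  refine ⟨m, hm, (zero_add m ▸ hlim.add_const m).congr' ?_⟩
  filter_upwards [eventually_gt_atTop 0] with n hn
  rw [map_sub, cubeAverage_apply_eq_self hm hn, sub_add_cancel]

end MeanErgodic

lemma measurable_shift (r : Site d) : Measurable (shift r : Config A d → Config A d) :=
  measurable_pi_lambda _ fun i => measurable_pi_apply (i + r)

lemma shift_shift (r s : Site d) (x : Config A d) : shift r (shift s x) = shift (r + s) x := by
  funext i
  simp only [shift, add_assoc]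

lemma Stationary.measurePreserving_shift {μ : Measure (Config A d)} (hμ : Stationary μ)
    (r : Site d) : MeasurePreserving (shift r) μ μ := ⟨measurable_shift r, hμ r⟩

lemma map_add_atTop_eq_site (r : Site d) : map (· + r) (atTop : Filter (Site d)) = atTop :=
  map_atTop_eq_of_gc (· - r) r (fun _ _ h => add_le_add_left h r)
    (fun _ _ h => (le_tsub_iff_right h).symm) fun _ h => (tsub_add_cancel_of_le h).ge

lemma shift_preimage_setOf_eventually_mem (P : Set (Config A d)) (r : Site d) :
    shift r ⁻¹' {x | ∀ᶠ s in atTop, shift s x ∈ P} = {x | ∀ᶠ s in atTop, shift s x ∈ P} := by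
  ext x
  simp only [Set.mem_preimage, Set.mem_ofPred_eq, shift_shift]
  nth_rw 2 [← map_add_atTop_eq_site r]
  rfl

lemma ErgodicShift.ae_eq_const {μ : Measure (Config A d)} [IsProbabilityMeasure μ]
    (hμ : ErgodicShift μ) {F : Config A d → ℝ} (hF : Measurable F)
    (hinv : ∀ r, F ∘ shift r =ᵐ[μ] F) : ∃ c, F =ᵐ[μ] Function.const _ c := by
  refine exists_eventuallyEq_const_of_forall_separating MeasurableSet fun V hV => ?_
  -- `F ∘ shift r = F` only almost everywhere; passing to far translates makes the event invariant.
  set E : Set (Config A d) := {x | ∀ᶠ s in atTop, shift s x ∈ F ⁻¹' V}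
  have hEm : MeasurableSet E := by
    have : E = ⋃ s : Site d, ⋂ r : Site d, ⋂ _ : s ≤ r, (F ∘ shift r) ⁻¹' V := by
      ext x
      simp [E, eventually_atTop]
    rw [this]
    exact .iUnion fun s => .iInter fun r => .iInter fun _ => (hF.comp (measurable_shift r)) hV
  have hae : ∀ᵐ x ∂μ, (x ∈ E ↔ F x ∈ V) := by
    filter_upwards [ae_all_iff.2 hinv] with x hx
    simp only [Function.comp_apply] at hx
    simp only [E, Set.mem_ofPred_eq, Set.mem_preimage, hx, eventually_const]
  rcases hμ.2 E hEm (shift_preimage_setOf_eventually_mem _) with h | h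
  · right
    filter_upwards [measure_eq_zero_iff_ae_notMem.1 h, hae] with x hxE hx using mt hx.2 hxE
  · left
    filter_upwards [(mem_ae_iff_prob_eq_one hEm).2 h, hae] with x hxE hx using hx.1 hxE

section Koopman

variable {μ : Measure (Config A d)}

/-- The Koopman isometries `g ↦ g ∘ σ_r` of `L²(μ)`. -/
noncomputable def koopman (hμ : Stationary μ) (r : Site d) : Lp ℝ 2 μ →ₗᵢ[ℝ] Lp ℝ 2 μ :=
  Lp.compMeasurePreservingₗᵢ ℝ (shift r) (hμ.measurePreserving_shift r)

lemma coeFn_koopman (hμ : Stationary μ) (r : Site d) (g : Lp ℝ 2 μ) :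
    koopman hμ r g =ᵐ[μ] g ∘ shift r :=
  Lp.coeFn_compMeasurePreserving g (hμ.measurePreserving_shift r)

lemma Stationary.ae_eq_comp_shift (hμ : Stationary μ) {f g : Config A d → ℝ} (h : f =ᵐ[μ] g)
    (r : Site d) : f ∘ shift r =ᵐ[μ] g ∘ shift r :=
  (hμ.measurePreserving_shift r).quasiMeasurePreserving.ae_eq_comp h

lemma koopman_koopman (hμ : Stationary μ) (r s : Site d) (g : Lp ℝ 2 μ) :
    koopman hμ r (koopman hμ s g) = koopman hμ (r + s) g := by
  refine Lp.ext ?_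
  filter_upwards [coeFn_koopman hμ r (koopman hμ s g),
    hμ.ae_eq_comp_shift (coeFn_koopman hμ s g) r, coeFn_koopman hμ (r + s) g] with x h1 h2 h3
  rw [h1, h2, h3]
  simp only [Function.comp_apply, shift_shift, add_comm r s]

lemma coeFn_cubeAverage_koopman_toLp (hμ : Stationary μ) {f : Config A d → ℝ} (hf : MemLp f 2 μ)
    (n : ℕ) : cubeAverage (koopman hμ) n (hf.toLp f) =ᵐ[μ]
      fun x => ((n : ℝ) ^ d)⁻¹ * ∑ v ∈ cube d n, f (shift v x) := by
  have hcoe : ∀ v, koopman hμ v (hf.toLp f) =ᵐ[μ] f ∘ shift v := fun v =>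
    (coeFn_koopman hμ v _).trans (hμ.ae_eq_comp_shift hf.coeFn_toLp v)
  rw [cubeAverage_apply]
  filter_upwards [Lp.coeFn_smul ((n : ℝ) ^ d)⁻¹ (∑ v ∈ cube d n, koopman hμ v (hf.toLp f)),
    Lp.coeFn_finsetSum (cube d n) (fun v => koopman hμ v (hf.toLp f)),
    ae_all_iff.2 hcoe] with x hsmul hsum hx
  rw [hsmul, Pi.smul_apply, hsum, smul_eq_mul]
  simp [hx]

lemma integral_koopman (hμ : Stationary μ) (r : Site d) (g : Lp ℝ 2 μ) :
    ∫ x, koopman hμ r g x ∂μ = ∫ x, g x ∂μ := by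
  rw [integral_congr_ae (coeFn_koopman hμ r g)]
  simp only [Function.comp_apply]
  rw [← integral_map (measurable_shift r).aemeasurable, hμ r]
  rw [hμ r]
  exact Lp.aestronglyMeasurable g

variable [IsProbabilityMeasure μ]

/-- The integral on `L²` of a probability measure, as a bounded linear functional. -/
noncomputable def integralL2 (μ : Measure (Config A d)) [IsProbabilityMeasure μ] :
    Lp ℝ 2 μ →L[ℝ] ℝ :=
  innerSL ℝ (indicatorConstLp 2 MeasurableSet.univ (measure_ne_top μ Set.univ) (1 : ℝ))

lemma integralL2_apply (g : Lp ℝ 2 μ) : integralL2 μ g = ∫ x, g x ∂μ := by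
  rw [integralL2, innerSL_apply_apply, L2.inner_indicatorConstLp_one, setIntegral_univ]

lemma ErgodicShift.tendsto_cubeAverage_koopman (hμ : ErgodicShift μ) (g : Lp ℝ 2 μ) :
    Tendsto (fun n => cubeAverage (koopman hμ.1) n g) atTop
      (𝓝 (Lp.const 2 μ (∫ x, g x ∂μ))) := by
  obtain ⟨m, hm, hlim⟩ := exists_tendsto_cubeAverage (koopman_koopman hμ.1) g
  have hint : ∫ x, m x ∂μ = ∫ x, g x ∂μ := by
    have h := ((integralL2 μ).continuous.tendsto m).comp hlim
    refine tendsto_nhds_unique (h.trans_eq (by rw [integralL2_apply])) ?_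
    refine tendsto_const_nhds.congr' ?_
    filter_upwards [eventually_gt_atTop 0] with n hn
    have : (0 : ℝ) < (n : ℝ) ^ d := by positivity
    simp only [Function.comp_apply, cubeAverage_apply, map_smul, map_sum, integralL2_apply,
      integral_koopman, Finset.sum_const, card_cube, nsmul_eq_mul, smul_eq_mul, Nat.cast_pow]
    rw [inv_mul_cancel_left₀ this.ne']
  obtain ⟨F, hF, hmF⟩ := (Lp.aestronglyMeasurable m).aemeasurable
  obtain ⟨c, hc⟩ := hμ.ae_eq_const hF fun r => by
    have hr := coeFn_koopman hμ.1 r m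
    rw [hm r] at hr
    exact (hμ.1.ae_eq_comp_shift hmF r).symm.trans (hr.symm.trans hmF)
  have hcg : c = ∫ x, g x ∂μ := by
    rw [← hint, integral_congr_ae (hmF.trans hc)]
    simp
  rw [← hcg]
  convert hlim
  exact Lp.ext ((Lp.coeFn_const 2 μ c).trans (hmF.trans hc).symm)

lemma ErgodicShift.tendsto_measure_average (hμ : ErgodicShift μ) {f : Config A d → ℝ}
    (hf : Measurable f) {C : ℝ} (hC : ∀ x, |f x| ≤ C) {η : ℝ} (hη : 0 < η) :
    Tendsto (fun n : ℕ => μ.real {x | η ≤ |((n : ℝ) ^ d)⁻¹ * ∑ v ∈ cube d n, f (shift v x) -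
      ∫ y, f y ∂μ|}) atTop (𝓝 0) := by
  have hf2 : MemLp f 2 μ := MemLp.of_bound hf.aestronglyMeasurable C (ae_of_all _ hC)
  have hmeas := tendstoInMeasure_of_tendsto_Lp (hμ.tendsto_cubeAverage_koopman (hf2.toLp f))
  rw [tendstoInMeasure_iff_measureReal_dist] at hmeas
  refine (hmeas η hη).congr fun n => measureReal_congr ?_
  filter_upwards [coeFn_cubeAverage_koopman_toLp hμ.1 hf2 n,
    Lp.coeFn_const 2 μ (∫ x, hf2.toLp f x ∂μ)] with x havg hconst
  refine propext (show η ≤ _ ↔ η ≤ _ from ?_)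
  rw [havg, hconst, Function.const_apply, integral_congr_ae hf2.coeFn_toLp, Real.dist_eq]

end Koopman

/-! ### Entropy-typical words -/

lemma measurable_wordAt (k : ℕ) (c : Site d) :
    Measurable (fun x : Config A d => wordAt x k c) :=
  measurable_pi_lambda _ fun _ => measurable_pi_apply _

lemma measurableSet_wordAt {k : ℕ} (c : Site d) (P : Word A d k → Prop) :
    MeasurableSet {x : Config A d | P (wordAt x k c)} :=
  measurable_wordAt k c (Set.toFinite {w | P w}).measurableSet

lemma measurable_comp_wordAt {k : ℕ} (c : Site d) (g : Word A d k → ℝ) :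
    Measurable (fun x : Config A d => g (wordAt x k c)) :=
  (measurable_of_finite g).comp (measurable_wordAt k c)

section TypicalWords

variable {μ : Measure (Config A d)}

lemma wordDist_nonneg {k : ℕ} (w : Word A d k) : 0 ≤ wordDist μ k w := ENNReal.toReal_nonneg

variable [IsProbabilityMeasure μ]

lemma integral_comp_wordAt {k : ℕ} (g : Word A d k → ℝ) :
    ∫ x, g (wordAt x k 0) ∂μ = ∑ w, wordDist μ k w * g w := by
  have hm := measurable_wordAt (A := A) k (0 : Site d)
  have : IsProbabilityMeasure (μ.map fun x => wordAt x k 0) :=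
    Measure.isProbabilityMeasure_map hm.aemeasurable
  rw [← integral_map (φ := fun x => wordAt x k 0) hm.aemeasurable
    (measurable_of_finite g).aestronglyMeasurable, integral_fintype .of_finite]
  refine Finset.sum_congr rfl fun w _ => ?_
  rw [measureReal_def, Measure.map_apply hm (measurableSet_singleton w), smul_eq_mul]
  rfl

lemma sum_wordDist (k : ℕ) : ∑ w, wordDist μ k w = 1 := by
  simpa using (integral_comp_wordAt (μ := μ) (k := k) fun _ => 1).symm

lemma wordDist_le_one {k : ℕ} (w : Word A d k) : wordDist μ k w ≤ 1 :=
  measureReal_le_one (μ := μ)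

lemma entH_wordDist_nonneg (hA : 2 ≤ A) (k : ℕ) : 0 ≤ entH A (wordDist μ k) :=
  neg_nonneg.2 <| Finset.sum_nonpos fun w _ => mul_nonpos_of_nonneg_of_nonpos (wordDist_nonneg w)
    (Real.logb_nonpos (by exact_mod_cast (by omega : 1 < A)) (wordDist_nonneg w)
      (wordDist_le_one w))

lemma integral_neg_logb_wordDist (k : ℕ) :
    ∫ x, -Real.logb A (wordDist μ k (wordAt x k 0)) ∂μ = entH A (wordDist μ k) := by
  rw [integral_comp_wordAt fun w => -Real.logb A (wordDist μ k w), entH,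
    ← Finset.sum_neg_distrib]
  simp only [mul_neg]

lemma HasEntropyRate.nonneg (hA : 2 ≤ A) {h : ℝ} (hrate : HasEntropyRate μ h) : 0 ≤ h :=
  ge_of_tendsto' hrate fun n => div_nonneg (entH_wordDist_nonneg hA n) (by positivity)

lemma ae_wordDist_wordAt_zero_pos (k : ℕ) : ∀ᵐ x ∂μ, 0 < wordDist μ k (wordAt x k 0) := by
  have hnull : ∀ᵐ x ∂μ, ∀ w : Word A d k, wordDist μ k w = 0 → wordAt x k 0 ≠ w := by
    refine ae_all_iff.2 fun w => ?_
    by_cases hw : wordDist μ k w = 0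
    · have h0 : μ {x | wordAt x k 0 = w} = 0 :=
        (measureReal_eq_zero_iff (μ := μ)).1 hw
      filter_upwards [measure_eq_zero_iff_ae_notMem.1 h0] with x hx _
      exact hx
    · exact ae_of_all _ fun _ h => absurd h hw
  filter_upwards [hnull] with x hx
  exact (wordDist_nonneg _).lt_of_ne fun h => hx _ h.symm rfl

lemma Stationary.ae_wordDist_pos (hμ : Stationary μ) (k : ℕ) :
    ∀ᵐ x ∂μ, ∀ v : Site d, 0 < wordDist μ k (wordAt x k v) := by
  refine ae_all_iff.2 fun v => ?_
  filter_upwards [(hμ.measurePreserving_shift v).quasiMeasurePreserving.ae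
    (ae_wordDist_wordAt_zero_pos k)] with x hx
  rwa [wordAt_shift, zero_add] at hx

end TypicalWords

lemma tiles_eq_filter {K M N : ℕ} (hK : 1 ≤ K) (hN : M + K = N + 1) (τ : Site d) :
    tiles N K τ (fun _ => True) ∅ = (cube d M).filter fun t => ∀ i, t i % K = τ i := by
  ext t
  simp only [tiles, Finset.mem_filter, mem_cube, true_and, Finset.disjoint_empty_right, and_true]
  refine ⟨fun ⟨_, hτ, hsub⟩ => ⟨fun i => ?_, hτ⟩, fun ⟨hM, hτ⟩ =>
    ⟨fun i => ?_, hτ, box_subset_cube fun i => ?_⟩⟩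
  · have := add_le_of_box_subset_cube hK hsub i
    omega
  · have := hM i
    omega
  · have := hM i
    omega

section LowInformation

variable {K : ℕ} {p : Word A d K → ℝ}

lemma prod_tileMarks_eq_rpow (hA : 2 ≤ A) (hK : 1 ≤ K) {y : Config A d} {T : Finset (Site d)}
    (hp : ∀ t ∈ T, 0 < p (wordAt y K t)) :
    ∏ m ∈ tileMarks y K T, ((K : ℝ) ^ d)⁻¹ * p m.2 =
      (A : ℝ) ^ (-∑ t ∈ T, (Real.logb A ((K : ℝ) ^ d) + -Real.logb A (p (wordAt y K t)))) := by
  have hA1 : (1 : ℝ) < A := by exact_mod_cast (by omega : 1 < A)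
  have hKd : (0 : ℝ) < (K : ℝ) ^ d := by positivity
  rw [tileMarks, Finset.prod_map, ← Finset.sum_neg_distrib, Real.rpow_sum_of_pos (by positivity)]
  refine Finset.prod_congr rfl fun t ht => ?_
  rw [← sub_eq_add_neg, ← Real.logb_div hKd.ne' (hp t ht).ne', ← Real.logb_inv, inv_div,
    Real.rpow_logb (by positivity) hA1.ne' (div_pos (hp t ht) hKd), div_eq_inv_mul]
  rfl

lemma sum_logb_add_le (hA : 2 ≤ A) (hK : 1 ≤ K) {N : ℕ} {T : Finset (Site d)} {I : Site d → ℝ}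
    {B : ℝ} (hT : T.card * K ^ d ≤ N ^ d) (hB : (K : ℝ) ^ d * ∑ t ∈ T, I t ≤ B) :
    ∑ t ∈ T, (Real.logb A ((K : ℝ) ^ d) + I t) ≤
      (N : ℝ) ^ d * (Real.logb A ((K : ℝ) ^ d) / (K : ℝ) ^ d) + B / (K : ℝ) ^ d := by
  have hKd : (0 : ℝ) < (K : ℝ) ^ d := by positivity
  have hl : 0 ≤ Real.logb A ((K : ℝ) ^ d) := Real.logb_nonneg
    (by exact_mod_cast (by omega : 1 < A)) (by exact_mod_cast Nat.one_le_pow _ _ hK)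
  have hT' : (T.card : ℝ) * (K : ℝ) ^ d ≤ (N : ℝ) ^ d := by exact_mod_cast hT
  rw [Finset.sum_add_distrib, Finset.sum_const, nsmul_eq_mul]
  refine add_le_add ?_ ((le_div_iff₀' hKd).2 hB)
  rw [mul_div_assoc', le_div_iff₀ hKd, mul_right_comm]
  exact mul_le_mul_of_nonneg_right hT' hl

-- A word is described by its `K`-subwords along the phase with the least total information.
lemma ncard_wordsOn_le_of_information_le (hA : 2 ≤ A) (hK : 1 ≤ K) {M N : ℕ} (hN : M + K = N + 1)
    (hp0 : ∀ w, 0 ≤ p w) (hp1 : ∑ w, p w = 1) {B : ℝ} {Y : Set (Config A d)}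
    (hY : ∀ y ∈ Y, ∀ v ∈ cube d M, 0 < p (wordAt y K v))
    (hB : ∀ y ∈ Y, ∑ v ∈ cube d M, -Real.logb A (p (wordAt y K v)) ≤ B) :
    ((wordsOn N Y).ncard : ℝ) ≤
      (A : ℝ) ^ (((N : ℝ) ^ d - ((N - 2 * K : ℕ) : ℝ) ^ d) +
        ((N : ℝ) ^ d * (Real.logb A ((K : ℝ) ^ d) / (K : ℝ) ^ d) + B / (K : ℝ) ^ d) +
        (M : ℝ) ^ d / ((K : ℝ) ^ d * Real.log A)) := by
  have hA0 : (0 : ℝ) < A := by positivity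
  have hlog : 0 < Real.log A := Real.log_pos (by exact_mod_cast (by omega : 1 < A))
  choose τ hτ hτI using fun y : Config A d =>
    exists_phase_sum_filter_le hK (cube d M) fun v => -Real.logb A (p (wordAt y K v))
  set T : Config A d → Finset (Site d) := fun y => tiles N K (τ y) (fun _ => True) ∅
  have hTM : ∀ y, T y = (cube d M).filter fun t => ∀ i, t i % K = τ y i := fun y =>
    tiles_eq_filter hK hN _
  refine (ncard_wordsOn_le_of_description hA (F := fun y => tileMarks y K (T y))
    (fun m => cube d N \ m.biUnion fun t => box t.1 K) (marks := cube d M ×ˢ Finset.univ)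
    (w := fun m => ((K : ℝ) ^ d)⁻¹ * p m.2) (s := (N : ℝ) ^ d - ((N - 2 * K : ℕ) : ℝ) ^ d)
    (cost := (N : ℝ) ^ d * (Real.logb A ((K : ℝ) ^ d) / (K : ℝ) ^ d) + B / (K : ℝ) ^ d)
    (fun m _ => mul_nonneg (by positivity) (hp0 _)) (fun y _ m hm => ?_) (fun y _ => ?_)
    (fun y hy => ?_) fun y _ y' _ hyy' hD v hv => ?_).trans_eq ?_
  · have := (mem_tileMarks.1 hm).1
    rw [hTM] at this
    exact Finset.mem_product.2 ⟨(Finset.mem_filter.1 this).1, Finset.mem_univ _⟩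
  · have := card_sdiff_tiles_le (N := N) (G := fun _ => True) (O := ∅) (hτ y)
      (∅ : Finset (Site d)) id (fun _ => 0) rfl
    simpa [biUnion_tileMarks] using this
  · rw [prod_tileMarks_eq_rpow hA hK fun t ht => hY y hy t (Finset.mem_filter.1 (hTM y ▸ ht)).1]
    refine Real.rpow_le_rpow_of_exponent_le (by exact_mod_cast (by omega : 1 ≤ A)) <| neg_le_neg <|
      sum_logb_add_le hA hK ?_ ?_
    · simpa using card_add_card_tiles_mul_le (N := N) (R := K) (τ := τ y) (G := fun _ => True)
        (Finset.empty_subset (cube d N))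
    · rw [hTM]
      exact (hτI y).trans (hB y hy)
  · by_cases hvD : v ∈ (tileMarks y K (T y)).biUnion fun t => box t.1 K
    · rw [biUnion_tileMarks] at hvD
      obtain ⟨t, ht, hvt⟩ := Finset.mem_biUnion.1 hvD
      exact eqOn_box_of_tileMarks_eq hyy' ht v hvt
    · exact hD v (Finset.mem_sdiff.2 ⟨hv, hvD⟩)
  · rw [Real.rpow_add hA0 (_ + _), Real.rpow_add hA0 (_ - _), Finset.sum_product,
      Real.rpow_def_of_pos hA0 ((M : ℝ) ^ d / _)]
    congr 2
    simp only [← Finset.mul_sum, hp1, Finset.sum_const, card_cube, nsmul_eq_mul]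
    push_cast
    field_simp

end LowInformation

lemma eventually_logb_div_le (hA : 2 ≤ A) (hd : 1 ≤ d) {θ : ℝ} (hθ : 0 < θ) :
    ∀ᶠ K : ℕ in atTop,
      Real.logb A ((K : ℝ) ^ d) / (K : ℝ) ^ d + 1 / ((K : ℝ) ^ d * Real.log A) ≤ θ := by
  have hA1 : (1 : ℝ) < A := by exact_mod_cast (by omega : 1 < A)
  have hlim : Tendsto (fun x : ℝ => (Real.log x / x + 1 / x) / Real.log A) atTop
      (𝓝 ((0 + 0) / Real.log A)) :=
    ((Real.isLittleO_log_id_atTop.tendsto_div_nhds_zero).add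
      (tendsto_const_nhds.div_atTop tendsto_id)).div_const _
  have hpow : Tendsto (fun K : ℕ => (K : ℝ) ^ d) atTop atTop :=
    (tendsto_pow_atTop (by omega)).comp tendsto_natCast_atTop_atTop
  filter_upwards [(hlim.comp hpow).eventually (gt_mem_nhds (by simpa using hθ))] with K hK
  refine le_trans (le_of_eq ?_) hK.le
  simp only [Function.comp_apply, Real.logb]
  have := (Real.log_pos hA1).ne'
  field_simp

lemma ncard_wordsOn_le_of_average_information_le (hA : 2 ≤ A) {K M N : ℕ} (hK : 1 ≤ K)
    (hN : M + K = N + 1) {p : Word A d K → ℝ} (hp0 : ∀ w, 0 ≤ p w) (hp1 : ∑ w, p w = 1)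
    {H ε : ℝ} (hH : 0 ≤ H) (hbdry : (N : ℝ) ^ d - ((N - 2 * K : ℕ) : ℝ) ^ d ≤ ε * (N : ℝ) ^ d)
    (hlogb : Real.logb A ((K : ℝ) ^ d) / (K : ℝ) ^ d + 1 / ((K : ℝ) ^ d * Real.log A) ≤ ε)
    {Y : Set (Config A d)} (hY : ∀ y ∈ Y, ∀ v ∈ cube d M, 0 < p (wordAt y K v))
    (hB : ∀ y ∈ Y, ∑ v ∈ cube d M, -Real.logb A (p (wordAt y K v)) ≤
      (M : ℝ) ^ d * ((K : ℝ) ^ d * H)) :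
    ((wordsOn N Y).ncard : ℝ) ≤ (A : ℝ) ^ ((H + 2 * ε) * (N : ℝ) ^ d) := by
  have hA1 : (1 : ℝ) < A := by exact_mod_cast (by omega : 1 < A)
  have hlog : 0 < Real.log A := Real.log_pos hA1
  have hMN : (M : ℝ) ^ d ≤ (N : ℝ) ^ d := by
    gcongr
    omega
  refine (ncard_wordsOn_le_of_information_le hA hK hN hp0 hp1 hY hB).trans
    (Real.rpow_le_rpow_of_exponent_le hA1.le ?_)
  calc _ ≤ ε * (N : ℝ) ^ d + ((N : ℝ) ^ d * (Real.logb A ((K : ℝ) ^ d) / (K : ℝ) ^ d) +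
        (N : ℝ) ^ d * ((K : ℝ) ^ d * H) / (K : ℝ) ^ d) +
        (N : ℝ) ^ d / ((K : ℝ) ^ d * Real.log A) := by gcongr
    _ = ε * (N : ℝ) ^ d + H * (N : ℝ) ^ d + (N : ℝ) ^ d * (Real.logb A ((K : ℝ) ^ d) /
        (K : ℝ) ^ d + 1 / ((K : ℝ) ^ d * Real.log A)) := by
      field_simp
      ring
    _ ≤ ε * (N : ℝ) ^ d + H * (N : ℝ) ^ d + (N : ℝ) ^ d * ε := by gcongr
    _ = _ := by ring

lemma ErgodicShift.exists_typical_words {μ : Measure (Config A d)} [IsProbabilityMeasure μ]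
    (hμ : ErgodicShift μ) (hA : 2 ≤ A) (hd : 1 ≤ d) {h : ℝ} (hrate : HasEntropyRate μ h)
    {ε : ℝ} (hε : 0 < ε) (R₀ : ℕ) : ∃ R ≥ R₀, ∃ S : Finset (Word A d R),
      (S.card : ℝ) ≤ (A : ℝ) ^ ((h + ε) * (R : ℝ) ^ d) ∧
      μ.real {x | wordAt x R 0 ∉ S} ≤ ε := by
  obtain ⟨K, hK1, hKH, hKl⟩ := ((eventually_ge_atTop 1).and
    ((hrate.eventually (gt_mem_nhds (by linarith : h < h + ε / 4))).and
      (eventually_logb_div_le hA hd (by positivity : 0 < ε / 4)))).exists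
  have hKd : (0 : ℝ) < (K : ℝ) ^ d := by positivity
  rw [div_lt_iff₀' hKd] at hKH
  set I : Word A d K → ℝ := fun w => -Real.logb A (wordDist μ K w)
  have hbd : ∀ x : Config A d, |I (wordAt x K 0)| ≤ ∑ w, |I w| := fun x =>
    Finset.single_le_sum (f := fun w => |I w|) (fun _ _ => abs_nonneg _) (Finset.mem_univ _)
  obtain ⟨M, hMμ, hM1, hMb⟩ := (((hμ.tendsto_measure_average (measurable_comp_wordAt 0 I) hbd
    (by positivity : 0 < (K : ℝ) ^ d * (ε / 4))).eventually (gt_mem_nhds hε)).and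
    ((eventually_ge_atTop (R₀ + 1)).and ((tendsto_add_atTop_nat (K - 1)).eventually
      (eventually_boundary_le d (2 * K) (by positivity : 0 < ε / 4))))).exists
  have hMd : (0 : ℝ) < (M : ℝ) ^ d := by
    have : 0 < M := by omega
    positivity
  set Y : Set (Config A d) := {x | (∀ v : Site d, 0 < wordDist μ K (wordAt x K v)) ∧
    ∑ v ∈ cube d M, I (wordAt x K v) ≤ (M : ℝ) ^ d * ((K : ℝ) ^ d * (h + ε / 2))}
  refine ⟨M + (K - 1), by omega, (Set.toFinite (wordsOn _ Y)).toFinset, ?_, ?_⟩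
  · rw [← Set.ncard_eq_toFinset_card]
    refine (ncard_wordsOn_le_of_average_information_le hA hK1 (by omega) wordDist_nonneg
      (sum_wordDist K) (by linarith [hrate.nonneg hA]) hMb hKl (fun y hy v _ => hy.1 v)
      fun y hy => hy.2).trans_eq ?_
    ring_nf
  · refine le_trans ?_ hMμ.le
    refine ENNReal.toReal_mono (measure_ne_top _ _) (measure_mono_ae ?_)
    filter_upwards [hμ.1.ae_wordDist_pos K] with x hpos hxS
    by_contra hdev
    refine hxS ((Set.Finite.mem_toFinset _).2 ⟨x, ⟨hpos, ?_⟩, rfl⟩)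
    have hclose := (abs_lt.1 (not_le.1 hdev)).2
    simp only [wordAt_shift, zero_add, I, integral_neg_logb_wordDist] at hclose
    rw [← inv_mul_le_iff₀ hMd]
    linarith

/-! ### The maximal inequality -/

section Maximal

variable {μ : Measure (Config A d)} {f : Config A d → ℝ}

lemma Stationary.integrable_comp_shift (hμ : Stationary μ) (hf : Integrable f μ) (v : Site d) :
    Integrable (fun x => f (shift v x)) μ :=
  (hμ.measurePreserving_shift v).integrable_comp_of_integrable hf

lemma Stationary.integral_sum_shift (hμ : Stationary μ) (hf : Integrable f μ)
    (s : Finset (Site d)) : ∫ x, ∑ v ∈ s, f (shift v x) ∂μ = s.card * ∫ x, f x ∂μ := by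
  have hshift : ∀ v : Site d, ∫ x, f (shift v x) ∂μ = ∫ x, f x ∂μ := fun v => by
    rw [← integral_map (measurable_shift v).aemeasurable ((hμ v).symm ▸ hf.aestronglyMeasurable),
      hμ v]
  simp only [integral_finsetSum _ fun v _ => hμ.integrable_comp_shift hf v, hshift,
    Finset.sum_const, nsmul_eq_mul]

/-- The configurations for which the average of `f` over some cube `Λ_n`, `1 ≤ n ≤ n₀`, is larger
than `lam`. -/
def exceedanceSet (f : Config A d → ℝ) (lam : ℝ) (n₀ : ℕ) : Set (Config A d) :=
  {x | ∃ n, (1 ≤ n ∧ n ≤ n₀) ∧ lam * (n : ℝ) ^ d < ∑ v ∈ cube d n, f (shift v x)}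

lemma measurableSet_exceedanceSet (hf : Measurable f) (lam : ℝ) (n₀ : ℕ) :
    MeasurableSet (exceedanceSet f lam n₀) := by
  simp only [exceedanceSet, Set.ofPred_exists, Set.ofPred_and]
  exact .iUnion fun n => ((MeasurableSet.const _).inter (MeasurableSet.const _)).inter <|
    measurableSet_lt measurable_const <|
      Finset.measurable_fun_sum _ fun v _ => hf.comp (measurable_shift v)

lemma sum_cube_shift_shift (f : Config A d → ℝ) (n : ℕ) (u : Site d) (x : Config A d) :
    ∑ v ∈ cube d n, f (shift v (shift u x)) = ∑ v ∈ box u n, f (shift v x) := by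
  simp only [box_eq_map, Finset.sum_map, addLeftEmbedding_apply, shift_shift, add_comm]

lemma mul_card_exceedances_le (hf : ∀ x, 0 ≤ f x) {lam : ℝ} (hlam : 0 < lam) {n₀ N : ℕ}
    {x : Config A d} {V : Finset (Site d)} (hVN : V ⊆ cube d N)
    (hV : ∀ v ∈ V, shift v x ∈ exceedanceSet f lam n₀) :
    lam * V.card ≤ 3 ^ d * ∑ v ∈ cube d (N + n₀), f (shift v x) := by
  choose! n hn hlt using hV
  obtain ⟨U, hUV, hdisj, hcard⟩ := exists_disjoint_boxes V n fun v hv => (hn v hv).1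
  have hsub : (U.biUnion fun u => box u (n u)) ⊆ cube d (N + n₀) := by
    refine Finset.biUnion_subset.2 fun u hu => box_subset_cube fun i => ?_
    have := mem_cube.1 (hVN (hUV hu)) i
    have := (hn u (hUV hu)).2
    omega
  have hcard' : (V.card : ℝ) ≤ 3 ^ d * ∑ u ∈ U, (n u : ℝ) ^ d := by exact_mod_cast hcard
  calc lam * V.card ≤ lam * (3 ^ d * ∑ u ∈ U, (n u : ℝ) ^ d) := by gcongr
    _ = 3 ^ d * ∑ u ∈ U, lam * (n u : ℝ) ^ d := by
        rw [← Finset.mul_sum]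
        ring
    _ ≤ 3 ^ d * ∑ u ∈ U, ∑ v ∈ box u (n u), f (shift v x) := by
        gcongr with u hu
        exact (hlt u (hUV hu)).le.trans_eq (sum_cube_shift_shift f _ u x)
    _ = 3 ^ d * ∑ v ∈ U.biUnion fun u => box u (n u), f (shift v x) := by
        rw [Finset.sum_biUnion hdisj]
    _ ≤ 3 ^ d * ∑ v ∈ cube d (N + n₀), f (shift v x) := by
        gcongr
        exact fun v _ _ => hf _

lemma sum_indicator_exceedanceSet_le (hf : ∀ x, 0 ≤ f x) {lam : ℝ} (hlam : 0 < lam) (n₀ N : ℕ)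
    (x : Config A d) :
    ∑ v ∈ cube d N, (exceedanceSet f lam n₀).indicator (fun _ => (1 : ℝ)) (shift v x) ≤
      3 ^ d / lam * ∑ v ∈ cube d (N + n₀), f (shift v x) := by
  classical
  simp only [Set.indicator_apply, Finset.sum_boole]
  rw [div_mul_eq_mul_div, le_div_iff₀' hlam]
  exact mul_card_exceedances_le hf hlam (Finset.filter_subset _ _)
    fun v hv => (Finset.mem_filter.1 hv).2

lemma le_of_forall_pow_mul_le_pow_add_mul {a b : ℝ} (d n₀ : ℕ)
    (h : ∀ N : ℕ, (N : ℝ) ^ d * a ≤ ((N + n₀ : ℕ) : ℝ) ^ d * b) : a ≤ b := by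
  have hlim : Tendsto (fun N : ℕ => (1 + (n₀ : ℝ) / N) ^ d * b) atTop (𝓝 ((1 + 0) ^ d * b)) :=
    ((tendsto_const_nhds.add (tendsto_const_div_atTop_nhds_zero_nat (n₀ : ℝ))).pow d).mul_const b
  rw [add_zero, one_pow, one_mul] at hlim
  refine ge_of_tendsto hlim ?_
  filter_upwards [eventually_gt_atTop 0] with N hN
  have hfactor : ((N + n₀ : ℕ) : ℝ) = N * (1 + (n₀ : ℝ) / N) := by
    push_cast
    field_simp
  have hN' := h N
  rw [hfactor, mul_pow, mul_assoc] at hN'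
  exact le_of_mul_le_mul_left hN' (by positivity)

variable [IsProbabilityMeasure μ]

lemma Stationary.measure_exceedanceSet_le (hμ : Stationary μ) (hf : Measurable f)
    (hfi : Integrable f μ) (hf0 : ∀ x, 0 ≤ f x) {lam : ℝ} (hlam : 0 < lam) (n₀ : ℕ) :
    μ.real (exceedanceSet f lam n₀) ≤ 3 ^ d * (∫ x, f x ∂μ) / lam := by
  have hE := measurableSet_exceedanceSet hf lam n₀
  have hEi : Integrable ((exceedanceSet f lam n₀).indicator fun _ => (1 : ℝ)) μ :=
    (integrable_const 1).indicator hE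
  refine le_of_forall_pow_mul_le_pow_add_mul d n₀ fun N => ?_
  have hmono := integral_mono
    (integrable_finsetSum (cube d N) fun v _ => hμ.integrable_comp_shift hEi v)
    ((integrable_finsetSum (cube d (N + n₀)) fun v _ =>
      hμ.integrable_comp_shift hfi v).const_mul (3 ^ d / lam))
    (sum_indicator_exceedanceSet_le hf0 hlam n₀ N)
  rw [integral_const_mul, hμ.integral_sum_shift hEi, hμ.integral_sum_shift hfi, card_cube,
    card_cube, integral_indicator_const _ hE, smul_eq_mul, mul_one] at hmono
  push_cast at hmono ⊢
  exact hmono.trans_eq (by ring)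

lemma Stationary.measure_maximal_le (hμ : Stationary μ) (hf : Measurable f)
    (hfi : Integrable f μ) (hf0 : ∀ x, 0 ≤ f x) {lam : ℝ} (hlam : 0 < lam) :
    μ.real {x | ∃ n : ℕ, 1 ≤ n ∧ lam * (n : ℝ) ^ d < ∑ v ∈ cube d n, f (shift v x)} ≤
      3 ^ d * (∫ x, f x ∂μ) / lam := by
  have hunion : {x | ∃ n : ℕ, 1 ≤ n ∧ lam * (n : ℝ) ^ d < ∑ v ∈ cube d n, f (shift v x)} =
      ⋃ n₀, exceedanceSet f lam n₀ := by
    ext x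
    simp only [exceedanceSet, Set.mem_iUnion]
    exact ⟨fun ⟨n, h1, h⟩ => ⟨n, n, ⟨h1, le_rfl⟩, h⟩, fun ⟨_, n, ⟨h1, _⟩, h⟩ => ⟨n, h1, h⟩⟩
  have hmono : Monotone (exceedanceSet f lam) := fun _ _ hab _ ⟨n, ⟨h1, h2⟩, h⟩ =>
    ⟨n, ⟨h1, h2.trans hab⟩, h⟩
  rw [hunion]
  exact le_of_tendsto' ((ENNReal.tendsto_toReal (measure_ne_top μ _)).comp
    (tendsto_measure_iUnion_atTop hmono)) (hμ.measure_exceedanceSet_le hf hfi hf0 hlam)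

/-- The words of `x` outside `S` are rare in every cube. -/
def RareOutside (x : Config A d) {R : ℕ} (S : Finset (Word A d R)) (lam : ℝ) : Prop :=
  ∀ n : ℕ, ((badSites x n S).card : ℝ) ≤ lam * (n : ℝ) ^ d

lemma Stationary.measure_not_rareOutside_le (hμ : Stationary μ) (hd : 1 ≤ d) {R : ℕ}
    (S : Finset (Word A d R)) {lam : ℝ} (hlam : 0 < lam) :
    μ.real {x | ¬ RareOutside x S lam} ≤ 3 ^ d * μ.real {x | wordAt x R 0 ∉ S} / lam := by
  have hZ : MeasurableSet {x : Config A d | wordAt x R 0 ∉ S} := measurableSet_wordAt 0 (· ∉ S)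
  set f : Config A d → ℝ := {x | wordAt x R 0 ∉ S}.indicator fun _ => 1
  have hcount : ∀ n x, ∑ v ∈ cube d n, f (shift v x) = (badSites x n S).card := fun n x => by
    classical
    simp [f, Set.indicator_apply, badSites, wordAt_shift, Finset.card_filter, ite_not]
  have hmax := hμ.measure_maximal_le (measurable_const.indicator hZ)
    ((integrable_const (1 : ℝ)).indicator hZ)
    (fun x => Set.indicator_nonneg (fun _ _ => zero_le_one) x) hlam
  rw [integral_indicator_const _ hZ, smul_eq_mul, mul_one] at hmax
  refine (measureReal_mono fun x hx => ?_).trans hmax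
  obtain ⟨n, hn⟩ := not_forall.1 hx
  refine ⟨n, Nat.one_le_iff_ne_zero.2 ?_, by rw [hcount]; exact not_le.1 hn⟩
  rintro rfl
  have hcube : cube d 0 = ∅ := Finset.card_eq_zero.1 (by rw [card_cube, zero_pow (by omega)])
  simp [badSites, hcube, show d ≠ 0 by omega] at hn

lemma ErgodicShift.ae_exists_typical_words (hμ : ErgodicShift μ) (hA : 2 ≤ A) (hd : 1 ≤ d) {h : ℝ}
    (hrate : HasEntropyRate μ h) {ε : ℝ} (hε : 0 < ε) {lam : ℝ} (hlam : 0 < lam) (R₀ : ℕ) :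
    ∀ᵐ x ∂μ, ∃ R ≥ R₀, ∃ S : Finset (Word A d R),
      (S.card : ℝ) ≤ (A : ℝ) ^ ((h + ε) * (R : ℝ) ^ d) ∧ RareOutside x S lam := by
  rw [ae_iff, ← measureReal_eq_zero_iff]
  refine le_antisymm (le_of_forall_pos_le_add fun θ hθ => ?_) measureReal_nonneg
  obtain ⟨R, hR, S, hS, hμS⟩ := hμ.exists_typical_words hA hd hrate
    (by positivity : 0 < min ε (θ * lam / 3 ^ d)) R₀
  have hA1 : (1 : ℝ) ≤ A := by exact_mod_cast (by omega : 1 ≤ A)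
  have hsub : {x | ¬ ∃ R ≥ R₀, ∃ S : Finset (Word A d R),
      (S.card : ℝ) ≤ (A : ℝ) ^ ((h + ε) * (R : ℝ) ^ d) ∧ RareOutside x S lam} ⊆
      {x | ¬ RareOutside x S lam} := fun x hx hrare =>
    hx ⟨R, hR, S, hS.trans (Real.rpow_le_rpow_of_exponent_le hA1 (by
      gcongr
      exact min_le_left _ _)), hrare⟩
  calc _ ≤ μ.real {x | ¬ RareOutside x S lam} := measureReal_mono hsub
    _ ≤ 3 ^ d * μ.real {x | wordAt x R 0 ∉ S} / lam := hμ.1.measure_not_rareOutside_le hd S hlam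
    _ ≤ 3 ^ d * (θ * lam / 3 ^ d) / lam := by
        gcongr
        exact hμS.trans (min_le_right _ _)
    _ = 0 + θ := by
        field_simp
        ring

end Maximal

/-! ### Thin families of words are eventually avoided -/

section Entropy

variable {W : Type*} [Fintype W] {p q : W → ℝ}

lemma mul_log_sub_log_le {s t : ℝ} (hs : 0 ≤ s) (ht : 0 < t) :
    s * (Real.log t - Real.log s) ≤ t - s := by
  rcases hs.eq_or_lt with rfl | hs
  · simpa using ht.le
  · rw [← Real.log_div ht.ne' hs.ne']
    calc s * Real.log (t / s) ≤ s * (t / s - 1) := by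
          gcongr
          exact Real.log_le_sub_one_of_pos (by positivity)
      _ = t - s := by field_simp

lemma entH_le_neg_sum_mul_logb (hA : 1 ≤ A) (hp : ∀ w, 0 ≤ p w) (hq : ∀ w, 0 < q w)
    (hqp : ∑ w, q w ≤ ∑ w, p w) : entH A p ≤ -∑ w, p w * Real.logb A (q w) := by
  have hlog : 0 ≤ Real.log A := Real.log_nonneg (by exact_mod_cast hA)
  have hgap : ∑ w, p w * Real.logb A (q w) - ∑ w, p w * Real.logb A (p w) =
      (∑ w, p w * (Real.log (q w) - Real.log (p w))) / Real.log A := by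
    rw [← Finset.sum_sub_distrib, Finset.sum_div]
    exact Finset.sum_congr rfl fun w _ => by rw [Real.logb, Real.logb]; ring
  have hle : ∑ w, p w * (Real.log (q w) - Real.log (p w)) ≤ 0 :=
    calc _ ≤ ∑ w, (q w - p w) := Finset.sum_le_sum fun w _ => mul_log_sub_log_le (hp w) (hq w)
      _ ≤ 0 := by rw [Finset.sum_sub_distrib]; linarith
  have := div_nonpos_of_nonpos_of_nonneg hle hlog
  rw [entH]
  linarith

lemma sum_inv_two_mul_ite_le [DecidableEq W] (T : Finset W) {B : ℝ} (hB0 : 0 < B)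
    (hB : (T.card : ℝ) ≤ B) :
    ∑ w, (2 * if w ∈ T then B else (Fintype.card W : ℝ))⁻¹ ≤ 1 := by
  have hT : ∑ w ∈ T, (2 * if w ∈ T then B else (Fintype.card W : ℝ))⁻¹ = T.card * (2 * B)⁻¹ := by
    rw [Finset.sum_congr rfl fun w hw => by rw [if_pos hw], Finset.sum_const, nsmul_eq_mul]
  have hTc : ∑ w ∈ Tᶜ, (2 * if w ∈ T then B else (Fintype.card W : ℝ))⁻¹ =
      (Tᶜ).card * (2 * (Fintype.card W : ℝ))⁻¹ := by
    rw [Finset.sum_congr rfl fun w hw => by rw [if_neg (Finset.mem_compl.1 hw)], Finset.sum_const,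
      nsmul_eq_mul]
  have hcard : ((Tᶜ).card : ℝ) ≤ Fintype.card W := by exact_mod_cast Finset.card_le_univ _
  rw [← Finset.sum_add_sum_compl T, hT, hTc]
  calc _ ≤ B * (2 * B)⁻¹ + Fintype.card W * (2 * (Fintype.card W : ℝ))⁻¹ := by gcongr
    _ ≤ 1 / 2 + 1 / 2 := by
        rw [mul_inv, mul_inv, mul_left_comm, mul_left_comm (Fintype.card W : ℝ)]
        have h1 := mul_inv_le_one (a := B)
        have h2 := mul_inv_le_one (a := (Fintype.card W : ℝ))
        linarith
    _ = 1 := add_halves 1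

-- Compare `p` with the mean of the uniform distributions on a superset of `T` of size `B` and
-- on `W`.
lemma entH_le_of_card_le (hA : 2 ≤ A) [DecidableEq W] (hp : ∀ w, 0 ≤ p w)
    (hp1 : ∑ w, p w = 1) (T : Finset W) {B : ℝ} (hB1 : 1 ≤ B) (hB : (T.card : ℝ) ≤ B) :
    entH A p ≤ 1 + Real.logb A B + (∑ w ∈ Tᶜ, p w) * Real.logb A (Fintype.card W) := by
  have hA1 : (1 : ℝ) < A := by exact_mod_cast hA
  have hne : Nonempty W := by
    by_contra hW
    simp [not_nonempty_iff.1 hW] at hp1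
  have hW : (0 : ℝ) < Fintype.card W := by exact_mod_cast Fintype.card_pos
  have hlog2 : Real.logb A 2 ≤ 1 :=
    (Real.logb_le_logb_of_le hA1 two_pos (by exact_mod_cast hA)).trans_eq
      (Real.logb_self_eq_one hA1)
  set r : W → ℝ := fun w => if w ∈ T then B else Fintype.card W
  have hr0 : ∀ w, 0 < r w := fun w => by
    dsimp only [r]
    split_ifs <;> linarith
  have hrT : ∀ w ∈ T, r w = B := fun w hw => if_pos hw
  have hrTc : ∀ w ∈ Tᶜ, r w = Fintype.card W := fun w hw => if_neg (Finset.mem_compl.1 hw)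
  have hsum : ∑ w, (2 * r w)⁻¹ ≤ ∑ w, p w :=
    hp1.symm ▸ sum_inv_two_mul_ite_le T (by linarith) hB
  have hlogr : ∀ w, -(p w * Real.logb A (2 * r w)⁻¹) =
      p w * Real.logb A 2 + p w * Real.logb A (r w) := fun w => by
    rw [Real.logb_inv, Real.logb_mul two_ne_zero (hr0 w).ne']
    ring
  have hT : ∑ w ∈ T, p w ≤ 1 := hp1 ▸ Finset.sum_le_univ_sum_of_nonneg hp
  calc entH A p ≤ -∑ w, p w * Real.logb A (2 * r w)⁻¹ :=
        entH_le_neg_sum_mul_logb (by omega) hp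
          (fun w => inv_pos.2 (mul_pos two_pos (hr0 w))) hsum
    _ = Real.logb A 2 + ((∑ w ∈ T, p w) * Real.logb A B +
          (∑ w ∈ Tᶜ, p w) * Real.logb A (Fintype.card W)) := by
        rw [← Finset.sum_neg_distrib, Finset.sum_congr rfl fun w _ => hlogr w,
          Finset.sum_add_distrib, ← Finset.sum_mul, hp1, one_mul,
          ← Finset.sum_add_sum_compl T fun w => p w * Real.logb A (r w), Finset.sum_mul,
          Finset.sum_mul, Finset.sum_congr rfl fun w hw => by rw [hrT w hw],
          Finset.sum_congr (s₁ := Tᶜ) rfl fun w hw => by rw [hrTc w hw]]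
    _ ≤ 1 + (1 * Real.logb A B + (∑ w ∈ Tᶜ, p w) * Real.logb A (Fintype.card W)) := by
        gcongr
        exact Real.logb_nonneg hA1 hB1
    _ = _ := by rw [one_mul, add_assoc]

end Entropy

section Thin

variable {μ : Measure (Config A d)} [IsProbabilityMeasure μ]

lemma sum_compl_wordDist {k : ℕ} (T : Finset (Word A d k)) :
    ∑ w ∈ Tᶜ, wordDist μ k w = μ.real {x | wordAt x k 0 ∉ T} := by
  have hmeas : MeasurableSet {x : Config A d | wordAt x k 0 ∉ T} := measurableSet_wordAt 0 (· ∉ T)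
  have hind := integral_comp_wordAt (μ := μ) fun w : Word A d k => if w ∈ Tᶜ then 1 else 0
  simp only [mul_ite, mul_one, mul_zero, Finset.sum_ite_mem, Finset.univ_inter] at hind
  rw [← hind, ← mul_one (μ.real _), ← smul_eq_mul, ← integral_indicator_const _ hmeas]
  exact integral_congr_ae (ae_of_all _ fun x => by simp [Set.indicator_apply])

lemma logb_card_word (hA : 2 ≤ A) (k : ℕ) :
    Real.logb A (Fintype.card (Word A d k)) = (k : ℝ) ^ d := by
  have hA1 : (1 : ℝ) < A := by exact_mod_cast hA
  simp [Word, Real.logb_pow, Real.logb_self_eq_one hA1]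

lemma HasEntropyRate.eventually_lt_measure_notMem {h : ℝ} (hrate : HasEntropyRate μ h) (hA : 2 ≤ A)
    (hd : 1 ≤ d) {η : ℝ} (hη : 0 < η) (hηh : η ≤ h) : ∀ᶠ N : ℕ in atTop, ∀ T : Finset (Word A d N),
      (T.card : ℝ) ≤ (A : ℝ) ^ ((h - η) * (N : ℝ) ^ d) →
        η / 2 < μ.real {x | wordAt x N 0 ∉ T} := by
  have hA1 : (1 : ℝ) < A := by exact_mod_cast hA
  have hA0 : (0 : ℝ) < A := by linarith
  filter_upwards [hrate.eventually (lt_mem_nhds (by linarith : h - η / 4 < h)),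
    tendsto_natCast_atTop_atTop.eventually (eventually_ge_atTop (4 / η)),
    eventually_gt_atTop 0] with N hN hNη hN0 T hT
  have hpos : (0 : ℝ) < (N : ℝ) ^ d := by positivity
  have hentropy := entH_le_of_card_le hA wordDist_nonneg (sum_wordDist (μ := μ) N) T
    (Real.one_le_rpow hA1.le (mul_nonneg (sub_nonneg.2 hηh) hpos.le)) hT
  rw [sum_compl_wordDist, logb_card_word hA, Real.logb_rpow hA0 hA1.ne'] at hentropy
  have hone : 1 ≤ η / 4 * (N : ℝ) ^ d := by
    have := hNη.trans (natCast_le_natCast_pow hd N)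
    rw [div_le_iff₀ hη] at this
    linarith
  rw [lt_div_iff₀ hpos] at hN
  exact lt_of_mul_lt_mul_right (by linarith) hpos.le

/-- An injective numbering of the elements of a finite set by positive integers. -/
noncomputable def numbering {ι : Type*} [DecidableEq ι] (s : Finset ι) (a : ι) : ℕ :=
  s.toList.idxOf a + 1

lemma injOn_numbering {ι : Type*} [DecidableEq ι] (s : Finset ι) :
    Set.InjOn (numbering s) s := fun _ ha _ _ h =>
  (List.idxOf_inj (Finset.mem_toList.2 ha)).1 (Nat.succ_injective h)

lemma numbering_le_card {ι : Type*} [DecidableEq ι] {s : Finset ι} {a : ι} (ha : a ∈ s) :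
    numbering s a ≤ s.card := by
  rw [numbering, ← Finset.length_toList]
  exact List.idxOf_lt_length_of_mem (Finset.mem_toList.2 ha)

/-- The sites of `Λ_L` which are the lower corner of a word of `y` in `G n` for some `J ≤ n ≤ M`. -/
def occurrences (y : Config A d) (L J M : ℕ) (G : ∀ n, Finset (Word A d n)) : Finset (Site d) :=
  (cube d L).filter fun v => ∃ n ∈ Finset.Icc J M, wordAt y n v ∈ G n

lemma exists_isMarking_of_le_card_occurrences {G : ∀ n, Finset (Word A d n)} {N J M R : ℕ}
    {S : Finset (Word A d R)} {ρ γ lam : ℝ} {y : Config A d} (hJ : 1 ≤ J)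
    (hG : ∀ n ≥ J, ((G n).card : ℝ) ≤ (A : ℝ) ^ (ρ * (n : ℝ) ^ d))
    (hbad : ((badSites y N S).card : ℝ) ≤ lam * (N : ℝ) ^ d)
    (hocc : 3 ^ d * (γ * (N : ℝ) ^ d) ≤ (occurrences y (N - M) J M G).card) :
    ∃ F, IsMarking N J S ρ γ lam y F ∧ ∀ b ∈ F, wordAt y b.side b.corner ∈ G b.side ∧
      b.label = numbering (G b.side) (wordAt y b.side b.corner) := by
  have hocc' : ∀ v ∈ occurrences y (N - M) J M G,
      v ∈ cube d (N - M) ∧ ∃ n ∈ Finset.Icc J M, wordAt y n v ∈ G n :=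
    fun v hv => Finset.mem_filter.1 hv
  choose! hcube n hn hnG using hocc'
  replace hn := fun v hv => Finset.mem_Icc.1 (hn v hv)
  obtain ⟨U, hUV, hdisj, hcard⟩ := exists_disjoint_boxes _ n fun v hv => hJ.trans (hn v hv).1
  set block : Site d → Block d := fun u => (u, n u, numbering (G (n u)) (wordAt y (n u) u))
  have hinj : Function.Injective block := fun u u' h => congrArg Prod.fst h
  refine ⟨U.image block, ⟨hbad, ?_, ?_, ?_, ?_, ?_⟩, ?_⟩
  · exact Finset.forall_mem_image.2 fun u hu => (hn u (hUV hu)).1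
  · refine Finset.forall_mem_image.2 fun u hu => box_subset_cube fun i => ?_
    have := mem_cube.1 (hcube u (hUV hu)) i
    have := (hn u (hUV hu)).2
    dsimp only [block, Block.corner, Block.side]
    omega
  · refine Finset.forall_mem_image.2 fun u hu => le_trans ?_ (hG _ (hn u (hUV hu)).1)
    exact_mod_cast numbering_le_card (hnG u (hUV hu))
  · rw [Finset.coe_image, hinj.injOn.pairwiseDisjoint_image]
    exact hdisj
  · have hall : (U.image block).filter (fun b => b.label ≠ 0) = U.image block :=
      Finset.filter_true_of_mem (Finset.forall_mem_image.2 fun u _ => Nat.succ_ne_zero _)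
    rw [copiedSites, hall, Finset.image_biUnion, Finset.card_biUnion hdisj]
    simp only [card_box]
    have := hocc.trans (Nat.cast_le.2 hcard)
    push_cast at this ⊢
    exact le_of_mul_le_mul_left this (by positivity)
  · exact Finset.forall_mem_image.2 fun u hu => ⟨hnG u (hUV hu), rfl⟩

/-- The `N`-words with at most `lam * N ^ d` occurrences of patterns outside `S` and so many
occurrences of words of `G` in `Λ_{N-M}` that disjoint ones cover a proportion `γ` of `Λ_N`. -/
noncomputable def coveredWords {R : ℕ} (S : Finset (Word A d R)) (G : ∀ n, Finset (Word A d n))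
    (N J M : ℕ) (γ lam : ℝ) : Finset (Word A d N) :=
  (wordsOn N {y | ((badSites y N S).card : ℝ) ≤ lam * (N : ℝ) ^ d ∧
    3 ^ d * (γ * (N : ℝ) ^ d) ≤ (occurrences y (N - M) J M G).card}).toFinite.toFinset

lemma eventually_card_coveredWords_le (hA : 2 ≤ A) (hd : 1 ≤ d) {κ : ℝ} (hκ : 0 < κ)
    {G : ∀ n, Finset (Word A d n)} {ρ : ℝ}
    (hG : ∀ᶠ n in atTop, ((G n).card : ℝ) ≤ (A : ℝ) ^ (ρ * (n : ℝ) ^ d)) :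
    ∀ᶠ R in atTop, ∀ᶠ J in atTop, ∀ᶠ N : ℕ in atTop, ∀ (M : ℕ) (a γ lam : ℝ), ρ ≤ a → 0 ≤ a →
      ∀ S : Finset (Word A d R), (S.card : ℝ) ≤ (A : ℝ) ^ (a * (R : ℝ) ^ d) →
        ((coveredWords S G N J M γ lam).card : ℝ) ≤
          (A : ℝ) ^ ((ρ * γ + a * (1 - γ) + lam + 5 * κ) * (N : ℝ) ^ d) := by
  filter_upwards [eventually_ncard_wordsOn_le_of_isMarking hA hd hκ] with R hR
  filter_upwards [hR, eventually_ge_atTop 1, eventually_forall_ge_atTop.2 hG] with J hJ hJ1 hGJ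
  filter_upwards [hJ] with N hN M a γ lam hρ ha S hS
  choose! F hF hlabel using fun y (hy : ((badSites y N S).card : ℝ) ≤ lam * (N : ℝ) ^ d ∧
      3 ^ d * (γ * (N : ℝ) ^ d) ≤ (occurrences y (N - M) J M G).card) =>
    exists_isMarking_of_le_card_occurrences hJ1 hGJ hy.1 hy.2
  rw [coveredWords, ← Set.ncard_eq_toFinset_card]
  refine hN a ρ γ lam hρ ha S hS _ F hF fun y hy y' hy' hFF hout v hv => ?_
  by_cases hvF : v ∈ copiedSites (F y)
  swap
  · exact hout v hv hvF
  obtain ⟨b, hb, hvb⟩ := Finset.mem_biUnion.1 hvF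
  obtain ⟨hG, hb1⟩ := hlabel y hy b (Finset.mem_filter.1 hb).1
  obtain ⟨hG', hb2⟩ := hlabel y' hy' b (hFF ▸ (Finset.mem_filter.1 hb).1)
  exact wordAt_eq_iff_eqOn_box.1 (injOn_numbering _ hG hG' (hb1.symm.trans hb2)) v hvb

lemma exists_lt_measure_exists_mem_Icc {Ω : Type*} [MeasurableSpace Ω] {ν : Measure Ω}
    [IsFiniteMeasure ν] {E : ℕ → Set Ω} {q : ℝ} (hq : q < ν.real {x | ∃ᶠ n in atTop, x ∈ E n})
    (J : ℕ) : ∃ M, q < ν.real {x | ∃ n ∈ Finset.Icc J M, x ∈ E n} := by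
  set D : ℕ → Set Ω := fun M => {x | ∃ n ∈ Finset.Icc J M, x ∈ E n}
  have hD : Monotone D := fun _ _ hab _ ⟨n, hn, h⟩ => ⟨n, Finset.Icc_subset_Icc_right hab hn, h⟩
  have hsub : {x | ∃ᶠ n in atTop, x ∈ E n} ⊆ ⋃ M, D M := fun x hx => by
    obtain ⟨n, hn, h⟩ := frequently_atTop.1 hx J
    exact Set.mem_iUnion.2 ⟨n, n, Finset.mem_Icc.2 ⟨hn, le_rfl⟩, h⟩
  exact (((ENNReal.tendsto_toReal (measure_ne_top ν _)).comp
    (tendsto_measure_iUnion_atTop hD)).eventually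
      (lt_mem_nhds (hq.trans_le (measureReal_mono hsub)))).exists

lemma ErgodicShift.tendsto_measure_card_occurrences_lt (hμ : ErgodicShift μ) (J M : ℕ)
    (G : ∀ n, Finset (Word A d n)) {q : ℝ}
    (hq : q < μ.real {x | ∃ n ∈ Finset.Icc J M, wordAt x n 0 ∈ G n}) :
    Tendsto (fun N : ℕ => μ.real {x | ((occurrences x N J M G).card : ℝ) < q * (N : ℝ) ^ d})
      atTop (𝓝 0) := by
  set E : Set (Config A d) := {x | ∃ n ∈ Finset.Icc J M, wordAt x n 0 ∈ G n} with hE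
  have hmeas : MeasurableSet E := by
    simp only [hE, Set.ofPred_exists, Set.ofPred_and]
    exact .iUnion fun n => (MeasurableSet.const _).inter (measurableSet_wordAt 0 (· ∈ G n))
  have hcount : ∀ N x, ∑ v ∈ cube d N, E.indicator (fun _ => (1 : ℝ)) (shift v x) =
      (occurrences x N J M G).card := fun N x => by
    classical
    simp [hE, Set.indicator_apply, occurrences, wordAt_shift]
  have hlim := hμ.tendsto_measure_average (f := E.indicator fun _ => (1 : ℝ))
    (measurable_const.indicator hmeas) (C := 1)
    (fun x => by by_cases hx : x ∈ E <;> simp [hx]) (sub_pos.2 hq)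
  simp only [hcount, integral_indicator_const _ hmeas, smul_eq_mul, mul_one] at hlim
  refine squeeze_zero' (.of_forall fun N => measureReal_nonneg) ?_ hlim
  filter_upwards [eventually_gt_atTop 0] with N hN
  refine measureReal_mono fun x hx => ?_
  have hN0 : (0 : ℝ) < (N : ℝ) ^ d := by positivity
  have hlt : ((N : ℝ) ^ d)⁻¹ * (occurrences x N J M G).card < q := by
    rw [inv_mul_lt_iff₀' hN0]
    exact hx
  have hgap : μ.real E - q ≤ -(((N : ℝ) ^ d)⁻¹ * (occurrences x N J M G).card - μ.real E) := by
    linarith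
  exact le_abs.2 (Or.inr hgap)

lemma ErgodicShift.tendsto_measure_card_occurrences_sub_lt (hμ : ErgodicShift μ) (J M : ℕ)
    (G : ∀ n, Finset (Word A d n)) {q : ℝ} (hq0 : 0 < q)
    (hq : q < μ.real {x | ∃ n ∈ Finset.Icc J M, wordAt x n 0 ∈ G n}) :
    Tendsto (fun N : ℕ => μ.real {x | ((occurrences x (N - M) J M G).card : ℝ) < q * (N : ℝ) ^ d})
      atTop (𝓝 0) := by
  obtain ⟨r, hqr, hr⟩ := exists_between hq
  have hlim := (hμ.tendsto_measure_card_occurrences_lt J M G hr).comp (tendsto_sub_atTop_nat M)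
  refine squeeze_zero' (.of_forall fun N => measureReal_nonneg) ?_ hlim
  filter_upwards [eventually_boundary_le d M (sub_pos.2 ((div_lt_one (hq0.trans hqr)).2 hqr))]
    with N hN
  refine measureReal_mono fun x hx => lt_of_lt_of_le (Set.mem_ofPred_eq ▸ hx) ?_
  calc q * (N : ℝ) ^ d = r * (q / r * (N : ℝ) ^ d) := by
        field_simp [(hq0.trans hqr).ne']
    _ ≤ r * ((N - M : ℕ) : ℝ) ^ d := by
        gcongr
        · exact (hq0.trans hqr).le
        · linarith

lemma Stationary.measure_notMem_coveredWords_le (hμ : Stationary μ) (hd : 1 ≤ d) {R : ℕ}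
    (S : Finset (Word A d R)) (G : ∀ n, Finset (Word A d n)) (N J M : ℕ) (γ : ℝ) {lam : ℝ}
    (hlam : 0 < lam) : μ.real {x | wordAt x N 0 ∉ coveredWords S G N J M γ lam} ≤
      3 ^ d * μ.real {x | wordAt x R 0 ∉ S} / lam +
        μ.real {x | ((occurrences x (N - M) J M G).card : ℝ) < 3 ^ d * γ * (N : ℝ) ^ d} := by
  have hsub : {x | wordAt x N 0 ∉ coveredWords S G N J M γ lam} ⊆ {x | ¬ RareOutside x S lam} ∪
      {x | ((occurrences x (N - M) J M G).card : ℝ) < 3 ^ d * γ * (N : ℝ) ^ d} := by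
    refine fun x hx => or_iff_not_imp_right.2 fun hfew hrare => hx ?_
    refine (Set.Finite.mem_toFinset _).2 ⟨x, ⟨hrare N, ?_⟩, rfl⟩
    rw [← mul_assoc]
    exact not_lt.1 hfew
  exact (measureReal_mono hsub).trans <| (measureReal_union_le _ _).trans <|
    add_le_add_left (hμ.measure_not_rareOutside_le hd S hlam) _

lemma ErgodicShift.eventually_exists_words_of_frequently_mem (hμ : ErgodicShift μ) (hA : 2 ≤ A)
    (hd : 1 ≤ d) {h : ℝ} (hrate : HasEntropyRate μ h) {G : ∀ n, Finset (Word A d n)} {δ : ℝ}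
    (hδ : 0 < δ) (hG : ∀ᶠ n in atTop, ((G n).card : ℝ) ≤ (A : ℝ) ^ ((h - δ) * (n : ℝ) ^ d))
    {γ : ℝ} (hγ : 0 < γ)
    (hμG : 3 ^ d * γ < μ.real {x | ∃ᶠ n in atTop, wordAt x n 0 ∈ G n}) :
    ∀ᶠ N : ℕ in atTop, ∃ T : Finset (Word A d N),
      (T.card : ℝ) ≤ (A : ℝ) ^ ((h - δ * γ / 2) * (N : ℝ) ^ d) ∧
        μ.real {x | wordAt x N 0 ∉ T} ≤ δ * γ / 4 := by
  set θ : ℝ := δ * γ with hθ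
  have hθ0 : 0 < θ := by positivity
  set ε : ℝ := min (θ / 32) (θ / 32 * (θ / 8) / 3 ^ d)
  have hε : 0 < ε := by positivity
  obtain ⟨R₀, hR₀⟩ := eventually_atTop.1 <|
    eventually_card_coveredWords_le hA hd (by positivity : 0 < θ / 32) hG
  obtain ⟨R, hR, S, hS, hSμ⟩ := hμ.exists_typical_words hA hd hrate hε R₀
  obtain ⟨J, hJ⟩ := (hR₀ R hR).exists
  obtain ⟨M, hM⟩ := exists_lt_measure_exists_mem_Icc hμG J
  filter_upwards [hJ, (hμ.tendsto_measure_card_occurrences_sub_lt J M G (by positivity)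
    hM).eventually (gt_mem_nhds (by positivity : 0 < θ / 8))] with N hcard hocc
  refine ⟨coveredWords S G N J M γ (θ / 32), ?_, ?_⟩
  · refine (hcard M (h + ε) γ (θ / 32) (by linarith)
      (by linarith [hrate.nonneg hA]) S hS).trans <|
      Real.rpow_le_rpow_of_exponent_le (by exact_mod_cast (by omega : 1 ≤ A)) ?_
    have hε1 : ε * (1 - γ) ≤ θ / 32 :=
      (mul_le_of_le_one_right hε.le (sub_le_self _ hγ.le)).trans (min_le_left _ _)
    gcongr
    linarith [hθ]
  · have hrare : 3 ^ d * μ.real {x | wordAt x R 0 ∉ S} / (θ / 32) ≤ θ / 8 :=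
      calc _ ≤ 3 ^ d * (θ / 32 * (θ / 8) / 3 ^ d) / (θ / 32) := by
            gcongr
            exact hSμ.trans (min_le_right _ _)
        _ = θ / 8 := by field_simp
    have := hμ.1.measure_notMem_coveredWords_le hd S G N J M γ (by positivity : 0 < θ / 32)
    linarith

theorem ErgodicShift.ae_eventually_notMem (hμ : ErgodicShift μ) (hA : 2 ≤ A) (hd : 1 ≤ d) {h : ℝ}
    (hrate : HasEntropyRate μ h) {G : ∀ n, Finset (Word A d n)} {δ : ℝ} (hδ : 0 < δ) (hδh : δ ≤ h)
    (hG : ∀ᶠ n in atTop, ((G n).card : ℝ) ≤ (A : ℝ) ^ ((h - δ) * (n : ℝ) ^ d)) :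
    ∀ᵐ x ∂μ, ∀ᶠ n in atTop, wordAt x n 0 ∉ G n := by
  suffices hnull : μ.real {x | ∃ᶠ n in atTop, wordAt x n 0 ∈ G n} = 0 by
    rw [measureReal_eq_zero_iff] at hnull
    filter_upwards [measure_eq_zero_iff_ae_notMem.1 hnull] with x hx using not_frequently.1 hx
  by_contra hne
  set p : ℝ := μ.real {x | ∃ᶠ n in atTop, wordAt x n 0 ∈ G n}
  have hp0 : 0 < p := measureReal_nonneg.lt_of_ne' hne
  have hγ1 : p / 2 / 3 ^ d ≤ 1 :=
    (div_le_self (by positivity) (one_le_pow₀ (by norm_num))).trans <|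
      (half_le_self hp0.le).trans measureReal_le_one
  have hθh : δ * (p / 2 / 3 ^ d) ≤ h := (mul_le_of_le_one_right hδ.le hγ1).trans hδh
  obtain ⟨N, ⟨T, hT, hμT⟩, hent⟩ :=
    ((hμ.eventually_exists_words_of_frequently_mem hA hd hrate hδ hG (γ := p / 2 / 3 ^ d)
      (by positivity) (by rw [mul_div_cancel₀ _ (by positivity)]; exact half_lt_self hp0)).and
      (hrate.eventually_lt_measure_notMem hA hd (η := δ * (p / 2 / 3 ^ d) / 2) (by positivity)
        (by linarith [(by positivity : 0 < δ * (p / 2 / 3 ^ d))]))).exists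
  exact (hent T hT).not_ge (hμT.trans_eq (by ring))

end Thin

/-! ### The structure of the parsing -/

lemma mem_tuples {n : ℕ} {r : Site d} : r ∈ tuples d n ↔ r ∈ cube d n := by
  rw [mem_cube]
  induction d with
  | zero => simp [tuples, Subsingleton.elim r fun i => i.elim0]
  | succ d ih =>
    simp only [tuples, List.mem_flatMap, List.mem_range, List.mem_map]
    constructor
    · rintro ⟨a, ha, t, ht, rfl⟩ i
      refine Fin.cases ?_ (fun i => ?_) i
      · simpa using ha
      · simpa using ih.1 ht i
    · exact fun h => ⟨r 0, h 0, Fin.tail r, ih.2 fun i => h i.succ, Fin.cons_self_tail r⟩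

lemma nodup_tuples (d n : ℕ) : (tuples d n).Nodup := by
  induction d with
  | zero => simp [tuples]
  | succ d ih =>
    refine List.nodup_flatMap.2
      ⟨fun a _ => ih.map (Fin.cons_right_injective (α := fun _ => ℕ) a), ?_⟩
    refine List.nodup_range.imp fun hab => ?_
    simp only [Function.onFun, List.disjoint_left, List.mem_map]
    rintro _ ⟨t, _, rfl⟩ ⟨t', _, h⟩
    exact hab (by simpa using (congrFun h 0).symm)

/-- The positions, in units of the block size, of the blocks parsed between the cube of side `q`
and the cube of side `p`. -/
def corners (d q p : ℕ) : Finset (Site d) := cube d p \ cube d q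

/-- The smallest site of the block of side `k` at position `r`. -/
def corner (k : ℕ) (r : Site d) : Site d := fun j => k * r j

/-- The positions in `corners d q p` whose `k`-word occurs at another of these positions, so that
`J = |recurring x k q p| / |corners d q p|`. -/
def recurring (x : Config A d) (k q p : ℕ) : Finset (Site d) :=
  (corners d q p).filter fun r => ∃ r' ∈ corners d q p, r' ≠ r ∧
    wordAt x k (corner k r') = wordAt x k (corner k r)

/-- The set of distinct `k`-words parsed at the positions in `corners d q p`. -/
def parsedWords (x : Config A d) (k q p : ℕ) : Finset (Word A d k) :=
  (corners d q p).image fun r => wordAt x k (corner k r)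

lemma card_corners {q p : ℕ} (h : q ≤ p) :
    ((corners d q p).card : ℝ) = (p : ℝ) ^ d - (q : ℝ) ^ d := by
  rw [corners, Finset.cast_card_sdiff (cube_mono h), card_cube, card_cube]
  push_cast
  rfl

lemma card_corners_pos (hd : 1 ≤ d) {q p : ℕ} (h : q < p) : (0 : ℝ) < (corners d q p).card := by
  rw [card_corners h.le, sub_pos]
  exact pow_lt_pow_left₀ (Nat.cast_lt.2 h) (Nat.cast_nonneg _) (by omega)

lemma sub_le_card_corners (hd : 1 ≤ d) {q p : ℕ} (h : q ≤ p) :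
    (p : ℝ) - q ≤ (corners d q p).card := by
  obtain ⟨t, rfl⟩ := Nat.exists_eq_add_of_le h
  have hpow := pow_add_pow_le (Nat.cast_nonneg (α := ℝ) q) (Nat.cast_nonneg t) (by omega : d ≠ 0)
  have ht := natCast_le_natCast_pow hd t
  rw [card_corners h]
  push_cast
  linarith

lemma recurring_subset (x : Config A d) (k q p : ℕ) : recurring x k q p ⊆ corners d q p :=
  Finset.filter_subset _ _

lemma mem_recurring_iff_two_le_card {x : Config A d} {k q p : ℕ} {r : Site d}
    (hr : r ∈ corners d q p) :
    r ∈ recurring x k q p ↔ 2 ≤ ((corners d q p).filter fun r' =>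
      wordAt x k (corner k r') = wordAt x k (corner k r)).card := by
  rw [recurring, Finset.mem_filter, and_iff_right hr]
  constructor
  · rintro ⟨r', hr', hne, hw⟩
    exact Finset.one_lt_card.2 ⟨r', Finset.mem_filter.2 ⟨hr', hw⟩, r,
      Finset.mem_filter.2 ⟨hr, rfl⟩, hne⟩
  · intro h
    obtain ⟨r', hr', hne⟩ := Finset.exists_mem_ne h r
    rw [Finset.mem_filter] at hr'
    exact ⟨r', hr'.1, hne, hr'.2⟩

lemma card_corners_sub_card_recurring_le (x : Config A d) (k q p : ℕ) :
    ((corners d q p).card : ℝ) - (recurring x k q p).card ≤ (parsedWords x k q p).card := by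
  rw [← Finset.cast_card_sdiff (recurring_subset x k q p), Nat.cast_le]
  refine Finset.card_le_card_of_injOn (fun r => wordAt x k (corner k r)) (fun r hr => ?_) ?_
  · exact Finset.mem_image_of_mem _ (Finset.mem_sdiff.1 hr).1
  · intro r hr r' hr' h
    by_contra hne
    have hr := Finset.mem_sdiff.1 hr
    exact hr.2 (Finset.mem_filter.2 ⟨hr.1, r', (Finset.mem_sdiff.1 hr').1, Ne.symm hne, h.symm⟩)

/-- The positions in `corners d q (q + t)`, listed layer by layer as the parser appends them. -/
def layerList (d q : ℕ) : ℕ → List (Site d)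
  | 0 => []
  | t + 1 => layerList d q t ++
      (tuples d (q + t + 1)).filter fun r => decide (¬ ∀ j, r j < q + t)

lemma mem_layerList {q t : ℕ} {r : Site d} : r ∈ layerList d q t ↔ r ∈ corners d q (q + t) := by
  induction t with
  | zero => simp [layerList, corners]
  | succ t ih =>
    simp only [layerList, List.mem_append, ih, List.mem_filter, mem_tuples, corners,
      Finset.mem_sdiff, decide_eq_true_eq, ← mem_cube]
    have hsucc : r ∈ cube d (q + t) → r ∈ cube d (q + t + 1) := fun h => cube_mono (by omega) h
    have hbase : r ∈ cube d q → r ∈ cube d (q + t) := fun h => cube_mono (by omega) h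
    rw [← add_assoc]
    tauto

lemma nodup_layerList (d q t : ℕ) : (layerList d q t).Nodup := by
  induction t with
  | zero => simp [layerList]
  | succ t ih =>
    refine List.nodup_append'.2 ⟨ih, (nodup_tuples _ _).filter _, fun r hr hr' => ?_⟩
    rw [mem_layerList, corners, Finset.mem_sdiff, mem_cube] at hr
    simp only [List.mem_filter, decide_eq_true_eq] at hr'
    exact hr'.2 hr.1

lemma length_filter_layerList (q t : ℕ) (P : Site d → Prop) [DecidablePred P] :
    ((layerList d q t).filter fun r => decide (P r)).length =
      ((corners d q (q + t)).filter P).card := by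
  rw [← List.toFinset_card_of_nodup ((nodup_layerList d q t).filter _)]
  congr 1
  ext r
  simp [mem_layerList]

lemma length_layerList (q t : ℕ) : (layerList d q t).length = (corners d q (q + t)).card := by
  simpa using length_filter_layerList (d := d) q t fun _ => True

/-- The state reached from `s` after parsing `t` layers without changing the block size. -/
def layered (s : PState d) (t : ℕ) : PState d where
  m := if t = 0 then s.m else s.k * (s.m / s.k + t)
  k := s.k
  blocks := s.blocks ++ (layerList d (s.m / s.k) t).map fun r => (corner s.k r, s.k)

lemma Jval_layered (x : Config A d) {s : PState d} (hs : ∀ b ∈ s.blocks, b.2 ≠ s.k) (t : ℕ) :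
    Jval x (layered s t).blocks s.k =
      ((recurring x s.k (s.m / s.k) (s.m / s.k + t)).card : ℝ) /
        (corners d (s.m / s.k) (s.m / s.k + t)).card := by
  set q := s.m / s.k with hq
  have hfilter : (layered s t).blocks.filter (fun b => decide (b.2 = s.k)) =
      (layerList d q t).map fun r => (corner s.k r, s.k) := by
    rw [layered, ← hq, List.filter_append, List.filter_eq_nil_iff.2 (by simpa using hs),
      List.nil_append, List.filter_eq_self]
    simp
  have hcount (r : Site d) : ((layerList d q t).filter ((fun b' : Site d × ℕ =>
      decide (wordAt x s.k b'.1 = wordAt x s.k (corner s.k r))) ∘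
        fun r' => (corner s.k r', s.k))).length =
      ((corners d q (q + t)).filter fun r' =>
        wordAt x s.k (corner s.k r') = wordAt x s.k (corner s.k r)).card :=
    length_filter_layerList q t _
  simp only [Jval, hfilter, List.filter_map, List.length_map, length_layerList]
  congr 2
  refine (congrArg List.length (List.filter_congr fun r _ => ?_)).trans
    ((length_filter_layerList q t fun r => r ∈ recurring x s.k q (q + t)).trans ?_)
  · rw [mem_layerList] at *
    simp only [Function.comp_apply, hcount]
    simp only [mem_recurring_iff_two_le_card ‹_›]
  · rw [Finset.filter_mem_eq_inter, Finset.inter_eq_right.2 (recurring_subset x s.k q _)]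

lemma le_Jval_layered_iff (hd : 1 ≤ d) {φ : ℝ} {x : Config A d} {s : PState d}
    (hs : ∀ b ∈ s.blocks, b.2 ≠ s.k) {p : ℕ} (hp : s.m / s.k < p) :
    φ ≤ Jval x (layered s (p - s.m / s.k)).blocks s.k ↔
      φ * (corners d (s.m / s.k) p).card ≤ (recurring x s.k (s.m / s.k) p).card := by
  rw [Jval_layered x hs, Nat.add_sub_cancel' hp.le, le_div_iff₀ (card_corners_pos hd hp)]

lemma step_layered {φ : ℝ} {x : Config A d} {s : PState d} (hk : 1 ≤ s.k) {t : ℕ}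
    (hJ : ¬ φ ≤ Jval x (layered s t).blocks s.k) :
    step φ x (layered s t) = layered s (t + 1) := by
  have hq : (layered s t).m / s.k = s.m / s.k + t := by
    by_cases ht : t = 0
    · simp [layered, ht]
    · simp only [layered, if_neg ht]
      exact Nat.mul_div_cancel_left _ hk
  have hblock : (layered s t).k = s.k := rfl
  rw [step, hblock, if_neg hJ, hq]
  simp only [layered, Nat.add_eq_zero_iff, one_ne_zero, and_false, if_false, PState.mk.injEq,
    true_and, layerList, List.map_append, List.append_assoc]
  exact ⟨by ring, rfl⟩

/-- The parser, with block size `k` and starting from the cube of side `k * q`, moves on to the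
next block size when it has parsed the cube of side `k * p`. -/
structure IsPhase (φ : ℝ) (x : Config A d) (k q p : ℕ) : Prop where
  lt : q < p
  le_recurring : φ * (corners d q p).card ≤ (recurring x k q p).card
  recurring_lt : ∀ p', q < p' → p' < p →
    ((recurring x k q p').card : ℝ) < φ * (corners d q p').card

lemma iter_add_eq_layered {φ : ℝ} {x : Config A d} {a T : ℕ} (hk : 1 ≤ (iter φ x a).k)
    (hJ : ∀ t < T, ¬ φ ≤ Jval x (layered (iter φ x a) t).blocks (iter φ x a).k) {t : ℕ}
    (ht : t ≤ T) : iter φ x (a + t) = layered (iter φ x a) t := by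
  induction t with
  | zero => simp [layered, layerList]
  | succ t ih =>
    rw [← add_assoc, iter, ih (by omega)]
    exact step_layered hk (hJ t (by omega))

lemma IsPhase.iter_eq (hd : 1 ≤ d) {φ : ℝ} (hφ : 0 < φ) {x : Config A d} {a p : ℕ}
    (hk : 1 ≤ (iter φ x a).k) (hs : ∀ b ∈ (iter φ x a).blocks, b.2 ≠ (iter φ x a).k)
    (hp : IsPhase φ x (iter φ x a).k ((iter φ x a).m / (iter φ x a).k) p) :
    iter φ x (a + (p - (iter φ x a).m / (iter φ x a).k) + 1) =
      { layered (iter φ x a) (p - (iter φ x a).m / (iter φ x a).k) with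
        k := (iter φ x a).k + 1 } := by
  set s := iter φ x a
  set q := s.m / s.k
  have hJ : ∀ t < p - q, ¬ φ ≤ Jval x (layered s t).blocks s.k := by
    intro t ht
    rcases t.eq_zero_or_pos with rfl | ht0
    · rw [Jval_layered x hs]
      simp [corners, hφ]
    · rw [show t = q + t - s.m / s.k from (Nat.add_sub_cancel_left q t).symm,
        le_Jval_layered_iff hd hs (Nat.lt_add_of_pos_right ht0), not_le]
      exact hp.recurring_lt _ (by omega) (by omega)
  have hleave : φ ≤ Jval x (layered s (p - q)).blocks (layered s (p - q)).k :=
    (le_Jval_layered_iff hd hs hp.lt).2 hp.le_recurring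
  rw [iter, iter_add_eq_layered hk hJ le_rfl, step, if_pos hleave]
  rfl

lemma exists_le_card_recurring (hd : 1 ≤ d) {φ : ℝ} (hφ : φ < 1) (x : Config A d) (k q : ℕ) :
    ∃ p > q, φ * (corners d q p).card ≤ (recurring x k q p).card := by
  obtain ⟨t, ht⟩ := exists_nat_gt ((Fintype.card (Word A d k) : ℝ) / (1 - φ))
  have ht0 : (0 : ℝ) < t := (div_nonneg (Nat.cast_nonneg _) (by linarith)).trans_lt ht
  refine ⟨q + t, Nat.lt_add_of_pos_right (by exact_mod_cast ht0), ?_⟩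
  rw [div_lt_iff₀ (by linarith)] at ht
  have hwords : ((parsedWords x k q (q + t)).card : ℝ) ≤ Fintype.card (Word A d k) :=
    Nat.cast_le.2 (Finset.card_le_univ _)
  have hcorners : (t : ℝ) ≤ (corners d q (q + t)).card := by
    simpa using sub_le_card_corners hd (Nat.le_add_right q t)
  have hmul : (t : ℝ) * (1 - φ) ≤ (corners d q (q + t)).card * (1 - φ) := by
    gcongr
  linarith [card_corners_sub_card_recurring_le x k q (q + t)]

/-- The value of `p` for which `IsPhase φ x k q p` holds. -/
noncomputable def phaseStop (φ : ℝ) (x : Config A d) (k q : ℕ) : ℕ :=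
  sInf {p | q < p ∧ φ * (corners d q p).card ≤ (recurring x k q p).card}

lemma isPhase_phaseStop (hd : 1 ≤ d) {φ : ℝ} (hφ : φ < 1) (x : Config A d) (k q : ℕ) :
    IsPhase φ x k q (phaseStop φ x k q) := by
  obtain ⟨hlt, hle⟩ := Nat.sInf_mem (exists_le_card_recurring hd hφ x k q)
  exact ⟨hlt, hle, fun p' hq hp' => not_le.1 fun h => Nat.notMem_of_lt_sInf hp' ⟨hq, h⟩⟩

/-- The parser has parsed the cube of side `k * phaseEnd φ x k` when it moves on from block size
`k` to block size `k + 1`. -/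
noncomputable def phaseEnd (φ : ℝ) (x : Config A d) : ℕ → ℕ
  | 0 => 0
  | k + 1 => phaseStop φ x (k + 1) (k * phaseEnd φ x k / (k + 1))

/-- The blocks of side `k` are parsed outside the cube of side `k * phaseStart φ x k`. -/
noncomputable def phaseStart (φ : ℝ) (x : Config A d) (k : ℕ) : ℕ :=
  (k - 1) * phaseEnd φ x (k - 1) / k

lemma isPhase (hd : 1 ≤ d) {φ : ℝ} (hφ : φ < 1) (x : Config A d) {k : ℕ} (hk : 1 ≤ k) :
    IsPhase φ x k (phaseStart φ x k) (phaseEnd φ x k) := by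
  obtain ⟨k, rfl⟩ := Nat.exists_eq_add_of_le' hk
  exact isPhase_phaseStop hd hφ x (k + 1) _

/-- The corners and side lengths of the blocks parsed with block sizes `1, …, K`. -/
def IsParsedBlock (φ : ℝ) (x : Config A d) (K : ℕ) (b : Site d × ℕ) : Prop :=
  b.2 ∈ Finset.Icc 1 K ∧
    ∃ r ∈ corners d (phaseStart φ x b.2) (phaseEnd φ x b.2), b.1 = corner b.2 r

lemma isParsedBlock_succ {φ : ℝ} {x : Config A d} {K : ℕ} {b : Site d × ℕ} :
    IsParsedBlock φ x (K + 1) b ↔ IsParsedBlock φ x K b ∨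
      ∃ r ∈ corners d (phaseStart φ x (K + 1)) (phaseEnd φ x (K + 1)),
        (corner (K + 1) r, K + 1) = b := by
  obtain ⟨c, k⟩ := b
  simp only [IsParsedBlock, Finset.mem_Icc, Prod.mk.injEq]
  constructor
  · rintro ⟨⟨hk1, hkK⟩, h⟩
    rcases hkK.lt_or_eq with hlt | rfl
    · exact Or.inl ⟨⟨hk1, by omega⟩, h⟩
    · obtain ⟨r, hr, rfl⟩ := h
      exact Or.inr ⟨r, hr, rfl, rfl⟩
  · rintro (⟨hk, h⟩ | ⟨r, hr, rfl, rfl⟩)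
    · exact ⟨⟨hk.1, by omega⟩, h⟩
    · exact ⟨⟨by omega, le_rfl⟩, r, hr, rfl⟩

lemma exists_iter_eq_phaseEnd (hd : 1 ≤ d) {φ : ℝ} (hφ0 : 0 < φ) (hφ : φ < 1) (x : Config A d)
    (K : ℕ) :
    ∃ t ≥ K, (iter φ x t).k = K + 1 ∧ (iter φ x t).m = K * phaseEnd φ x K ∧
      ∀ b, b ∈ (iter φ x t).blocks ↔ IsParsedBlock φ x K b := by
  induction K with
  | zero =>
    refine ⟨0, le_rfl, rfl, by simp [iter], fun b => ?_⟩
    simp only [iter, IsParsedBlock, Finset.mem_Icc, List.not_mem_nil, false_iff]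
    omega
  | succ K ih =>
    obtain ⟨t, htK, hk, hm, hblocks⟩ := ih
    have hq : (iter φ x t).m / (iter φ x t).k = phaseStart φ x (K + 1) := by
      rw [hk, hm]
      rfl
    have hphase := isPhase hd hφ x (Nat.le_add_left 1 K)
    have hiter := IsPhase.iter_eq hd hφ0 (x := x) (a := t) (p := phaseEnd φ x (K + 1)) (by omega)
      (fun b hb => by have := Finset.mem_Icc.1 ((hblocks b).1 hb).1; omega)
      (by rwa [hq, hk])
    refine ⟨_, ?_, congrArg PState.k hiter |>.trans (congrArg (· + 1) hk), ?_, fun b => ?_⟩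
    · omega
    · rw [hiter]
      dsimp only [layered]
      rw [hq, if_neg (Nat.sub_ne_zero_of_lt hphase.lt), Nat.add_sub_cancel' hphase.lt.le, hk]
    · rw [hiter, isParsedBlock_succ, ← hblocks]
      simp only [layered, List.mem_append, List.mem_map, mem_layerList, hq]
      simp only [hk, Nat.add_sub_cancel' hphase.lt.le]

lemma blocks_iter_subset {φ : ℝ} {x : Config A d} {s t : ℕ} (h : s ≤ t) :
    (iter φ x s).blocks ⊆ (iter φ x t).blocks := by
  induction t, h using Nat.le_induction with
  | base => exact List.Subset.refl _
  | succ t _ ih =>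
    rw [iter, step]
    split_ifs
    · exact ih
    · exact List.subset_append_of_subset_left _ ih

lemma exists_mem_blocks_iff (hd : 1 ≤ d) {φ : ℝ} (hφ0 : 0 < φ) (hφ : φ < 1) (x : Config A d)
    {k : ℕ} (hk : 1 ≤ k) {c : Site d} :
    (∃ t, (c, k) ∈ (iter φ x t).blocks) ↔
      ∃ r ∈ corners d (phaseStart φ x k) (phaseEnd φ x k), c = corner k r := by
  constructor
  · rintro ⟨t, ht⟩
    obtain ⟨T, htT, -, -, hblocks⟩ := exists_iter_eq_phaseEnd hd hφ0 hφ x t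
    exact ((hblocks _).1 (blocks_iter_subset htT ht)).2
  · intro h
    obtain ⟨t, -, -, -, hblocks⟩ := exists_iter_eq_phaseEnd hd hφ0 hφ x k
    exact ⟨t, (hblocks _).2 ⟨Finset.mem_Icc.2 ⟨hk, le_rfl⟩, h⟩⟩

/-- The region covered by the blocks of side `k` at the positions in `corners d q p`. -/
def region (d k q p : ℕ) : Finset (Site d) := cube d (k * p) \ cube d (k * q)

lemma mem_region {k q p : ℕ} (hk : 1 ≤ k) {i : Site d} :
    i ∈ region d k q p ↔ (fun j => i j / k) ∈ corners d q p := by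
  simp only [region, corners, Finset.mem_sdiff, mem_cube, Nat.div_lt_iff_lt_mul hk, mul_comm]

lemma mem_box_corner {k : ℕ} (hk : 1 ≤ k) {i r : Site d} :
    i ∈ box (corner k r) k ↔ r = fun j => i j / k := by
  rw [mem_box, funext_iff]
  refine forall_congr' fun j => ?_
  rw [eq_comm, Nat.div_eq_iff hk, corner, mul_comm]
  omega

lemma Lregion_eq_region (hd : 1 ≤ d) {φ : ℝ} (hφ0 : 0 < φ) (hφ : φ < 1) (x : Config A d)
    {k : ℕ} (hk : 1 ≤ k) :
    Lregion φ x k = region d k (phaseStart φ x k) (phaseEnd φ x k) := by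
  ext i
  rw [Finset.mem_coe, mem_region hk]
  constructor
  · rintro ⟨t, ⟨c, j⟩, hb, rfl : j = k, hi⟩
    obtain ⟨r, hr, rfl⟩ := (exists_mem_blocks_iff hd hφ0 hφ x hk).1 ⟨t, hb⟩
    rwa [← (mem_box_corner hk).1 (mem_box.2 hi)]
  · intro hi
    obtain ⟨t, ht⟩ := (exists_mem_blocks_iff hd hφ0 hφ x hk).2 ⟨_, hi, rfl⟩
    exact ⟨t, _, ht, rfl, mem_box.1 ((mem_box_corner hk).2 rfl)⟩

lemma Mk_eq_card_parsedWords (hd : 1 ≤ d) {φ : ℝ} (hφ0 : 0 < φ) (hφ : φ < 1) (x : Config A d)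
    {k : ℕ} (hk : 1 ≤ k) :
    Mk φ x k = (parsedWords x k (phaseStart φ x k) (phaseEnd φ x k)).card := by
  rw [Mk, ← Set.ncard_coe_finset]
  congr 1
  ext w
  simp only [parsedWords, Set.mem_ofPred_eq, Finset.coe_image, Set.mem_image, Finset.mem_coe]
  constructor
  · rintro ⟨t, ⟨c, j⟩, hb, rfl : j = k, rfl⟩
    obtain ⟨r, hr, rfl⟩ := (exists_mem_blocks_iff hd hφ0 hφ x hk).1 ⟨t, hb⟩
    exact ⟨r, hr, rfl⟩
  · rintro ⟨r, hr, rfl⟩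
    obtain ⟨t, ht⟩ := (exists_mem_blocks_iff hd hφ0 hφ x hk).2 ⟨r, hr, rfl⟩
    exact ⟨t, _, ht, rfl, rfl⟩

/-! ### Upper bound on the parsed volume -/

/-- The words of side `k` with at most `lam * k ^ d` sites whose `R`-word is outside `S`. -/
noncomputable def sparseWords {R : ℕ} (S : Finset (Word A d R)) (lam : ℝ) (k : ℕ) :
    Finset (Word A d k) :=
  (wordsOn k {y | ((badSites y k S).card : ℝ) ≤ lam * (k : ℝ) ^ d}).toFinite.toFinset

lemma eventually_card_sparseWords_le (hA : 2 ≤ A) (hd : 1 ≤ d) {κ : ℝ} (hκ : 0 < κ) :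
    ∀ᶠ R in atTop, ∀ᶠ k : ℕ in atTop, ∀ (a lam : ℝ), 0 ≤ a →
      ∀ S : Finset (Word A d R), (S.card : ℝ) ≤ (A : ℝ) ^ (a * (R : ℝ) ^ d) →
        ((sparseWords S lam k).card : ℝ) ≤ (A : ℝ) ^ ((a + lam + 5 * κ) * (k : ℝ) ^ d) := by
  filter_upwards [eventually_ncard_wordsOn_le_of_isMarking (d := d) hA hd hκ] with R hR
  obtain ⟨J, hJ⟩ := hR.exists
  filter_upwards [hJ] with k hk a lam ha S hS
  rw [sparseWords, ← Set.ncard_eq_toFinset_card]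
  have hcard := hk a 0 0 lam ha ha S hS {y | ((badSites y k S).card : ℝ) ≤ lam * (k : ℝ) ^ d}
    (fun _ => ∅) (fun y hy => ⟨hy, by simp, by simp, by simp, by simp, by simp⟩)
    (fun y _ y' _ _ h v hv => h v hv (by simp [copiedSites]))
  rwa [zero_mul, zero_add, sub_zero, mul_one] at hcard

lemma pairwiseDisjoint_box_corner {k : ℕ} (hk : 1 ≤ k) (s : Set (Site d)) :
    s.PairwiseDisjoint fun r => box (corner k r) k := by
  intro r _ r' _ hne
  refine Finset.disjoint_left.2 fun v hv hv' => hne ?_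
  rw [(mem_box_corner hk).1 hv, (mem_box_corner hk).1 hv']

lemma box_corner_subset_region {k q p : ℕ} (hk : 1 ≤ k) {r : Site d} (hr : r ∈ corners d q p) :
    box (corner k r) k ⊆ region d k q p := by
  intro v hv
  rwa [mem_region hk, ← (mem_box_corner hk).1 hv]

lemma lt_card_filter_box_of_notMem_sparseWords {R : ℕ} {S : Finset (Word A d R)} {x : Config A d}
    {lam : ℝ} {k : ℕ} {c : Site d} (hc : wordAt x k c ∉ sparseWords S lam k) :
    lam * (k : ℝ) ^ d < ((box c k).filter fun v => wordAt x R v ∉ S).card := by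
  by_contra! hle
  refine hc ((wordsOn k _).toFinite.mem_toFinset.2 ⟨shift c x, ?_, by simp [wordAt_shift]⟩)
  rw [box_eq_map, Finset.filter_map, Finset.card_map] at hle
  simpa [badSites, wordAt_shift, Function.comp_def, add_comm] using hle

lemma RareOutside.card_filter_notMem_sparseWords_le {R : ℕ} {S : Finset (Word A d R)}
    {x : Config A d} {lam lam' : ℝ} (hx : RareOutside x S lam) (hlam' : 0 < lam') {k : ℕ}
    (hk : 1 ≤ k) (q p : ℕ) :
    (((corners d q p).filter fun r => wordAt x k (corner k r) ∉ sparseWords S lam' k).card : ℝ) ≤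
      lam / lam' * (p : ℝ) ^ d := by
  set B := (corners d q p).filter fun r => wordAt x k (corner k r) ∉ sparseWords S lam' k
  have hunion : (B.biUnion fun r => (box (corner k r) k).filter fun v => wordAt x R v ∉ S) ⊆
      badSites x (k * p) S := by
    intro v hv
    obtain ⟨r, hr, hv⟩ := Finset.mem_biUnion.1 hv
    obtain ⟨hvr, hvS⟩ := Finset.mem_filter.1 hv
    have hreg := box_corner_subset_region hk (Finset.mem_filter.1 hr).1 hvr
    exact Finset.mem_filter.2 ⟨(Finset.mem_sdiff.1 hreg).1, hvS⟩
  have hcard := Finset.card_le_card hunion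
  rw [Finset.card_biUnion fun r hr r' hr' hne => (pairwiseDisjoint_box_corner hk (B : Set (Site d))
    hr hr' hne).mono (Finset.filter_subset _ _) (Finset.filter_subset _ _)] at hcard
  have hmul : (B.card : ℝ) * (lam' * (k : ℝ) ^ d) ≤ lam * ((k * p : ℕ) : ℝ) ^ d := by
    refine le_trans ?_ ((Nat.cast_le.2 hcard).trans (hx (k * p)))
    rw [← nsmul_eq_mul]
    push_cast
    exact Finset.card_nsmul_le_sum _ _ _ fun r hr =>
      (lt_card_filter_box_of_notMem_sparseWords (Finset.mem_filter.1 hr).2).le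
  rw [div_mul_eq_mul_div, le_div_iff₀ hlam']
  refine le_of_mul_le_mul_right ?_ (by positivity : (0 : ℝ) < (k : ℝ) ^ d)
  calc _ = (B.card : ℝ) * (lam' * (k : ℝ) ^ d) := by ring
    _ ≤ _ := hmul
    _ = _ := by
        push_cast
        ring

lemma RareOutside.card_parsedWords_le {R : ℕ} {S : Finset (Word A d R)} {x : Config A d}
    {lam lam' : ℝ} (hx : RareOutside x S lam) (hlam' : 0 < lam') {k : ℕ} (hk : 1 ≤ k) (q p : ℕ) :
    ((parsedWords x k q p).card : ℝ) ≤
      (sparseWords S lam' k).card + lam / lam' * (p : ℝ) ^ d := by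
  refine le_trans ?_ (add_le_add_right (hx.card_filter_notMem_sparseWords_le hlam' hk q p) _)
  have hsub : parsedWords x k q p ⊆ sparseWords S lam' k ∪
      ((corners d q p).filter fun r => wordAt x k (corner k r) ∉ sparseWords S lam' k).image
        fun r => wordAt x k (corner k r) := by
    refine Finset.image_subset_iff.2 fun r hr => ?_
    by_cases hw : wordAt x k (corner k r) ∈ sparseWords S lam' k
    · exact Finset.mem_union_left _ hw
    · exact Finset.mem_union_right _ (Finset.mem_image_of_mem _ (Finset.mem_filter.2 ⟨hr, hw⟩))
  exact_mod_cast (Finset.card_le_card hsub).trans ((Finset.card_union_le _ _).trans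
    (add_le_add_right Finset.card_image_le _))

lemma IsPhase.mul_sub_pow_le {φ : ℝ} {x : Config A d} {k q n : ℕ} (h : IsPhase φ x k q (n + 1))
    (hk : 1 ≤ k) {R : ℕ} {S : Finset (Word A d R)} {lam lam' : ℝ} (hx : RareOutside x S lam)
    (hlam : 0 ≤ lam) (hlam' : 0 < lam') :
    (1 - φ) * ((n : ℝ) ^ d - (q : ℝ) ^ d) ≤
      (sparseWords S lam' k).card + lam / lam' * (n : ℝ) ^ d := by
  rcases (Nat.lt_succ_iff.1 h.lt).eq_or_lt with rfl | hlt
  · rw [sub_self, mul_zero]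
    positivity
  have hrec := h.recurring_lt n hlt n.lt_succ_self
  have hwords := card_corners_sub_card_recurring_le x k q n
  rw [card_corners hlt.le] at hrec hwords
  linarith [hx.card_parsedWords_le hlam' hk q n]

lemma exists_add_one_pow_le (d : ℕ) {b : ℝ} (hb : 1 < b) :
    ∃ η > 0, ∃ C ≥ 0, ∀ n : ℕ, ((n + 1 : ℕ) : ℝ) ^ d ≤ b * ((1 - η) * (n : ℝ) ^ d + C) := by
  set η : ℝ := (b - 1) / (b + 1)
  have hη : 0 < η := div_pos (by linarith) (by linarith)
  have hbη : b * (1 - η) = 1 + η := by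
    have : b + 1 ≠ 0 := by linarith
    simp only [η]
    field_simp
    ring
  obtain ⟨P, hP⟩ := eventually_atTop.1 (eventually_enlarge_le d 1 hη)
  have hC : (0 : ℝ) ≤ ((P + 1 : ℕ) : ℝ) ^ d := by positivity
  refine ⟨η, hη, ((P + 1 : ℕ) : ℝ) ^ d, hC, fun n => ?_⟩
  rw [mul_add, ← mul_assoc, hbη]
  have hbC := le_mul_of_one_le_left hC hb.le
  rcases le_total P n with hn | hn
  · linarith [hP n hn]
  · have hle : ((n + 1 : ℕ) : ℝ) ^ d ≤ ((P + 1 : ℕ) : ℝ) ^ d := by gcongr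
    have hnn : 0 ≤ (1 + η) * (n : ℝ) ^ d := by positivity
    linarith

lemma IsPhase.mul_pow_le {φ : ℝ} (hφ : φ < 1) {x : Config A d} {k q p : ℕ}
    (h : IsPhase φ x k q p) (hk : 1 ≤ k) {R : ℕ} {S : Finset (Word A d R)} {b η C lam' W : ℝ}
    (hb : 0 ≤ b) (hη : 0 ≤ η) (hC : 0 ≤ C)
    (hpow : ∀ n : ℕ, ((n + 1 : ℕ) : ℝ) ^ d ≤ b * ((1 - η) * (n : ℝ) ^ d + C)) (hlam' : 0 < lam')
    (hx : RareOutside x S ((1 - φ) * η * lam')) (hW : 1 ≤ W)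
    (hSW : ((sparseWords S lam' k).card : ℝ) ≤ W) :
    ((k * p : ℕ) : ℝ) ^ d ≤
      b * (((k * q : ℕ) : ℝ) ^ d + (1 / (1 - φ) + C) * (k : ℝ) ^ d * W) := by
  have hφ' : 0 < 1 - φ := by linarith
  obtain ⟨n, rfl⟩ := Nat.exists_eq_add_of_lt h.lt
  have hphase := h.mul_sub_pow_le (n := q + n) hk hx (by positivity) hlam'
  rw [mul_div_cancel_right₀ _ hlam'.ne'] at hphase
  have hn : (1 - η) * ((q + n : ℕ) : ℝ) ^ d ≤ W / (1 - φ) + (q : ℝ) ^ d := by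
    rw [← sub_le_iff_le_add, le_div_iff₀ hφ']
    linarith
  have hCW : C ≤ C * W := le_mul_of_one_le_right hC hW
  calc ((k * (q + n + 1) : ℕ) : ℝ) ^ d = (k : ℝ) ^ d * ((q + n + 1 : ℕ) : ℝ) ^ d := by
        rw [Nat.cast_mul, mul_pow]
    _ ≤ (k : ℝ) ^ d * (b * ((1 - η) * ((q + n : ℕ) : ℝ) ^ d + C)) := by
        gcongr
        exact hpow (q + n)
    _ ≤ (k : ℝ) ^ d * (b * ((W / (1 - φ) + (q : ℝ) ^ d) + C * W)) := by gcongr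
    _ = b * (((k * q : ℕ) : ℝ) ^ d + (1 / (1 - φ) + C) * (k : ℝ) ^ d * W) := by
        rw [Nat.cast_mul, mul_pow]
        ring

lemma le_of_affine_recursion {u e : ℕ → ℝ} {b : ℝ} (hb : 1 ≤ b) (he : Monotone e)
    (he0 : ∀ j, 0 ≤ e j) {j₀ : ℕ} (h : ∀ j ≥ j₀, u (j + 1) ≤ b * (u j + e (j + 1))) (n : ℕ) :
    u (j₀ + n) ≤ b ^ n * (u j₀ + n * e (j₀ + n)) := by
  induction n with
  | zero => simp
  | succ n ih =>
    have hmono : e (j₀ + n) ≤ e (j₀ + (n + 1)) := he (by omega)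
    have hbn : 1 ≤ b ^ n := one_le_pow₀ hb
    have hu : u (j₀ + n) ≤ b ^ n * (u j₀ + n * e (j₀ + (n + 1))) := by
      refine ih.trans ?_
      gcongr
    have hle : e (j₀ + (n + 1)) ≤ b ^ n * e (j₀ + (n + 1)) := le_mul_of_one_le_left (he0 _) hbn
    calc u (j₀ + (n + 1)) ≤ b * (u (j₀ + n) + e (j₀ + (n + 1))) := h (j₀ + n) (by omega)
      _ ≤ b * (b ^ n * (u j₀ + n * e (j₀ + (n + 1))) + b ^ n * e (j₀ + (n + 1))) := by gcongr
      _ = _ := by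
          push_cast
          ring

lemma eventually_mul_pow_le_rpow (hA : 2 ≤ A) {δ : ℝ} (hδ : 0 < δ) (C : ℝ) (m : ℕ) :
    ∀ᶠ l : ℕ in atTop, C * (l : ℝ) ^ m ≤ (A : ℝ) ^ (δ * (l : ℝ)) := by
  have hA1 : (1 : ℝ) < A := by exact_mod_cast hA
  have hb : 1 < (A : ℝ) ^ δ := Real.one_lt_rpow hA1 hδ
  have hlim := (tendsto_pow_const_div_const_pow_of_one_lt m hb).const_mul C
  filter_upwards [hlim.eventually (gt_mem_nhds (by simp : C * 0 < 1))] with l hl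
  rw [Real.rpow_mul (by positivity), Real.rpow_natCast]
  rw [← mul_div_assoc, div_lt_one (by positivity)] at hl
  exact hl.le

lemma add_nat_mul_le {a C W : ℝ} (ha : 0 ≤ a) (hC : 0 ≤ C) (hW : 1 ≤ W) {l n : ℕ} (hl : 1 ≤ l)
    (hnl : n ≤ l) : a + n * (C * (l : ℝ) ^ d * W) ≤ (a + C) * (l : ℝ) ^ (d + 1) * W := by
  have hl' : (1 : ℝ) ≤ l := by exact_mod_cast hl
  have hnl' : (n : ℝ) ≤ l := Nat.cast_le.2 hnl
  calc a + n * (C * (l : ℝ) ^ d * W)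
      ≤ a * ((l : ℝ) ^ (d + 1) * W) + l * (C * (l : ℝ) ^ d * W) := by
        gcongr
        exact le_mul_of_one_le_right ha (one_le_mul_of_one_le_of_one_le (one_le_pow₀ hl') hW)
    _ = (a + C) * (l : ℝ) ^ (d + 1) * W := by ring

lemma eventually_le_of_affine_recursion (hA : 2 ≤ A) (hd : 1 ≤ d) {δ E C : ℝ} (hδ : 0 < δ)
    (hE : 0 ≤ E) (hC : 0 ≤ C) {u : ℕ → ℝ} (hu : ∀ j, 0 ≤ u j)
    (h : ∀ᶠ j in atTop, u (j + 1) ≤ (A : ℝ) ^ δ *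
      (u j + C * ((j + 1 : ℕ) : ℝ) ^ d * (A : ℝ) ^ (E * ((j + 1 : ℕ) : ℝ) ^ d))) :
    ∀ᶠ l : ℕ in atTop, u l ≤ (A : ℝ) ^ ((E + 2 * δ) * (l : ℝ) ^ d) := by
  have hA1 : (1 : ℝ) < A := by exact_mod_cast hA
  have hA0 : (0 : ℝ) < A := by linarith
  obtain ⟨N, hN⟩ := eventually_atTop.1 h
  set e : ℕ → ℝ := fun j => C * (j : ℝ) ^ d * (A : ℝ) ^ (E * (j : ℝ) ^ d)
  have he0 : ∀ j, 0 ≤ e j := fun j => by positivity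
  have he : Monotone e := by
    intro i j hij
    have : (i : ℝ) ≤ j := Nat.cast_le.2 hij
    simp only [e]
    gcongr
    exact hA1.le
  filter_upwards [eventually_mul_pow_le_rpow hA hδ (u N + C) (d + 1), eventually_ge_atTop N,
    eventually_ge_atTop 1] with l hpoly hlN hl1
  have hgrow := le_of_affine_recursion (Real.one_le_rpow hA1.le hδ.le) he he0 hN (l - N)
  rw [Nat.add_sub_cancel' hlN] at hgrow
  have hnl : ((l - N : ℕ) : ℝ) ≤ l := Nat.cast_le.2 (Nat.sub_le l N)
  have hld := natCast_le_natCast_pow hd l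
  set W : ℝ := (A : ℝ) ^ (E * (l : ℝ) ^ d)
  have hW : 1 ≤ W := Real.one_le_rpow hA1.le (by positivity)
  have hexp {s : ℝ} (hs : s ≤ (l : ℝ) ^ d) : (A : ℝ) ^ (δ * s) ≤ (A : ℝ) ^ (δ * (l : ℝ) ^ d) :=
    Real.rpow_le_rpow_of_exponent_le hA1.le (by gcongr)
  have hsum : u N + (l - N : ℕ) * e l ≤ (u N + C) * (l : ℝ) ^ (d + 1) * W :=
    add_nat_mul_le (hu N) hC hW hl1 (Nat.sub_le l N)
  have hpos : 0 ≤ u N + (l - N : ℕ) * e l := add_nonneg (hu N) (mul_nonneg (by positivity) (he0 l))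
  calc u l ≤ ((A : ℝ) ^ δ) ^ (l - N) * (u N + (l - N : ℕ) * e l) := hgrow
    _ ≤ (A : ℝ) ^ (δ * (l : ℝ) ^ d) * ((A : ℝ) ^ (δ * (l : ℝ) ^ d) * W) := by
        rw [← Real.rpow_mul_natCast hA0.le]
        exact mul_le_mul (hexp (hnl.trans hld))
          (hsum.trans (mul_le_mul_of_nonneg_right (hpoly.trans (hexp hld)) (by linarith))) hpos
          (by positivity)
    _ = _ := by
        rw [← Real.rpow_add hA0, ← Real.rpow_add hA0]
        congr 1
        ring

lemma mul_phaseStart_succ_le (φ : ℝ) (x : Config A d) (k : ℕ) :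
    (k + 1) * phaseStart φ x (k + 1) ≤ k * phaseEnd φ x k :=
  Nat.mul_div_le _ _

lemma exists_eventually_volume_le (hA : 2 ≤ A) (hd : 1 ≤ d) {φ : ℝ} (hφ : φ < 1) {h δ : ℝ}
    (hh : 0 ≤ h) (hδ : 0 < δ) :
    ∃ lam > 0, ∀ᶠ R : ℕ in atTop, ∀ S : Finset (Word A d R),
      (S.card : ℝ) ≤ (A : ℝ) ^ ((h + δ / 8) * (R : ℝ) ^ d) → ∀ x, RareOutside x S lam →
        ∀ᶠ l : ℕ in atTop, ((l * phaseEnd φ x l : ℕ) : ℝ) ^ d ≤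
          (A : ℝ) ^ ((h + δ) * (l : ℝ) ^ d) := by
  have hA1 : (1 : ℝ) < A := by exact_mod_cast hA
  have : 0 < 1 - φ := by linarith
  have hb : 1 < (A : ℝ) ^ (δ / 4) := Real.one_lt_rpow hA1 (by positivity)
  obtain ⟨η, hη, C, hC, hpow⟩ := exists_add_one_pow_le d hb
  refine ⟨(1 - φ) * η * (δ / 8), by positivity, ?_⟩
  filter_upwards [eventually_card_sparseWords_le (d := d) hA hd (by positivity : 0 < δ / 20)]
    with R hR S hS x hx
  have hrec := eventually_le_of_affine_recursion hA hd (δ := δ / 4) (E := h + δ / 2)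
    (C := 1 / (1 - φ) + C) (u := fun j => ((j * phaseEnd φ x j : ℕ) : ℝ) ^ d) (by positivity)
    (by positivity) (by positivity) (fun j => by positivity) ?_
  · filter_upwards [hrec] with l hl
    convert hl using 3
    ring
  filter_upwards [(tendsto_add_atTop_nat 1).eventually hR] with j hj
  have hcard := hj (h + δ / 8) (δ / 8) (by positivity) S hS
  rw [show h + δ / 8 + δ / 8 + 5 * (δ / 20) = h + δ / 2 by ring] at hcard
  refine ((isPhase hd hφ x (Nat.le_add_left 1 j)).mul_pow_le hφ (Nat.le_add_left 1 j)
    (by positivity) hη.le hC hpow (by positivity) hx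
    (Real.one_le_rpow hA1.le (by positivity)) hcard).trans ?_
  have hstart : (((j + 1) * phaseStart φ x (j + 1) : ℕ) : ℝ) ^ d ≤
      ((j * phaseEnd φ x j : ℕ) : ℝ) ^ d :=
    pow_le_pow_left₀ (Nat.cast_nonneg _) (Nat.cast_le.2 (mul_phaseStart_succ_le φ x j)) d
  exact mul_le_mul_of_nonneg_left (add_le_add hstart le_rfl) (by positivity)

lemma ErgodicShift.ae_eventually_volume_le {μ : Measure (Config A d)} [IsProbabilityMeasure μ]
    (hμ : ErgodicShift μ) (hA : 2 ≤ A) (hd : 1 ≤ d) {h : ℝ} (hrate : HasEntropyRate μ h)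
    {φ : ℝ} (hφ : φ < 1) {δ : ℝ} (hδ : 0 < δ) :
    ∀ᵐ x ∂μ, ∀ᶠ l : ℕ in atTop, ((l * phaseEnd φ x l : ℕ) : ℝ) ^ d ≤
      (A : ℝ) ^ ((h + δ) * (l : ℝ) ^ d) := by
  obtain ⟨lam, hlam, hvol⟩ := exists_eventually_volume_le (A := A) hA hd hφ (hrate.nonneg hA) hδ
  obtain ⟨R₀, hR₀⟩ := eventually_atTop.1 hvol
  filter_upwards [hμ.ae_exists_typical_words hA hd hrate (by positivity : 0 < δ / 8) hlam R₀]
    with x ⟨R, hR, S, hS, hx⟩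
  exact hR₀ R hR S hS x hx

/-! ### Scales with many distinct words -/

lemma exists_first_le {a b : ℕ → ℕ} (hab : ∀ j, a (j + 1) ≤ b j) {J l : ℕ} (hJl : J < l)
    (h : b J < a l) :
    ∃ i, J < i ∧ i < l ∧ a l ≤ b i ∧ ∀ i', J < i' → i' < i → b i' < a l := by
  obtain ⟨n, rfl⟩ := Nat.exists_eq_add_of_lt hJl
  have hn : J < J + n ∧ a (J + n + 1) ≤ b (J + n) := by
    refine ⟨Nat.lt_add_of_pos_right (Nat.pos_of_ne_zero ?_), hab _⟩
    rintro rfl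
    exact absurd (hab J) (not_le.2 h)
  have hex : ∃ i, J < i ∧ a (J + n + 1) ≤ b i := ⟨_, hn⟩
  refine ⟨Nat.find hex, (Nat.find_spec hex).1, Nat.lt_succ_iff.2 (Nat.find_min' hex hn),
    (Nat.find_spec hex).2, fun i' hJ hi' => not_le.1 fun hle => Nat.find_min hex hi' ⟨hJ, hle⟩⟩

-- The members of a chain of intervals without redundant members go alternately to two families.
lemma exists_two_disjoint_intervals {a b : ℕ → ℕ} (hab : ∀ j, a (j + 1) ≤ b j) {f : ℕ → ℝ}
    (hf : Monotone f) {J : ℕ} (l : ℕ) (hJl : J < l) :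
    ∃ S S' : Finset ℕ, S ⊆ Finset.Ioc J l ∧ S' ⊆ Finset.Ioo J l ∧
      (∀ i ∈ S, ∀ j ∈ S, i < j → b i ≤ a j) ∧ (∀ i ∈ S', ∀ j ∈ S', i < j → b i ≤ a j) ∧
      f (b l) - f (b J) ≤ ∑ j ∈ S, (f (b j) - f (a j)) + ∑ j ∈ S', (f (b j) - f (a j)) := by
  induction l using Nat.strong_induction_on with
  | _ l ih =>
  rcases le_or_gt (a l) (b J) with h | h
  · refine ⟨{l}, ∅, by simpa using hJl, by simp, by simp, by simp, ?_⟩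
    rw [Finset.sum_singleton, Finset.sum_empty]
    linarith [hf h]
  obtain ⟨i, hJi, hil, hi, hmin⟩ := exists_first_le hab hJl h
  obtain ⟨S, S', hS, hS', hd, hd', hsum⟩ := ih i hil hJi
  have hS'i (j : ℕ) (hj : j ∈ S') : J < j ∧ j < i := Finset.mem_Ioo.1 (hS' hj)
  refine ⟨insert l S', S, ?_, ?_, ?_, hd, ?_⟩
  · refine Finset.insert_subset (Finset.mem_Ioc.2 ⟨hJl, le_rfl⟩) fun j hj => ?_
    exact Finset.mem_Ioc.2 ⟨(hS'i j hj).1, ((hS'i j hj).2.trans hil).le⟩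
  · exact fun j hj => Finset.mem_Ioo.2
      ⟨(Finset.mem_Ioc.1 (hS hj)).1, (Finset.mem_Ioc.1 (hS hj)).2.trans_lt hil⟩
  · intro i' hi' j hj hij
    rcases Finset.mem_insert.1 hi' with rfl | hi'S
    · rcases Finset.mem_insert.1 hj with rfl | hjS
      · exact absurd hij (lt_irrefl _)
      · exact absurd (hij.trans (hS'i j hjS).2) (not_lt.2 hil.le)
    · rcases Finset.mem_insert.1 hj with rfl | hjS
      · exact (hmin i' (hS'i i' hi'S).1 (hS'i i' hi'S).2).le
      · exact hd' i' hi'S j hjS hij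
  · rw [Finset.sum_insert fun hl => (hil.trans (hS'i l hl).2).false]
    linarith [hf hi]

lemma exists_disjoint_intervals {a b : ℕ → ℕ} (hab : ∀ j, a (j + 1) ≤ b j) {f : ℕ → ℝ}
    (hf : Monotone f) {J l : ℕ} (hJl : J < l) :
    ∃ S ⊆ Finset.Ioc J l, (∀ i ∈ S, ∀ j ∈ S, i < j → b i ≤ a j) ∧
      (f (b l) - f (b J)) / 2 ≤ ∑ j ∈ S, (f (b j) - f (a j)) := by
  obtain ⟨S, S', hS, hS', hd, hd', hsum⟩ := exists_two_disjoint_intervals hab hf l hJl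
  rcases le_total (∑ j ∈ S, (f (b j) - f (a j))) (∑ j ∈ S', (f (b j) - f (a j))) with h | h
  · exact ⟨S', hS'.trans Finset.Ioo_subset_Ioc_self, hd', by linarith⟩
  · exact ⟨S, hS, hd, by linarith⟩

/-- The blocks of side `k` in `F` which are not copied. -/
def originals (F : Finset (Block d)) (k : ℕ) : Finset (Block d) :=
  F.filter fun b => b.label = 0 ∧ b.side = k

/-- The nonzero labels of `F` name, by their number, the original block of the same side whose word
is repeated. -/
def IsCopied (F : Finset (Block d)) (y : Config A d) : Prop :=
  ∀ b ∈ F, b.label ≠ 0 → ∃ b' ∈ originals F b.side,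
    b.label = numbering (originals F b.side) b' ∧
      wordAt y b.side b.corner = wordAt y b.side b'.corner

lemma IsCopied.eqOn {F : Finset (Block d)} {y y' : Config A d} (hy : IsCopied F y)
    (hy' : IsCopied F y') {N : ℕ} (hsub : ∀ b ∈ F, box b.corner b.side ⊆ cube d N)
    (hdisj : (F : Set (Block d)).PairwiseDisjoint fun b => box b.corner b.side)
    (h : ∀ v ∈ cube d N, v ∉ copiedSites F → y v = y' v) :
    ∀ v ∈ cube d N, y v = y' v := by
  intro v hv
  by_cases hvF : v ∈ copiedSites F
  swap
  · exact h v hv hvF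
  obtain ⟨b, hb, hvb⟩ := Finset.mem_biUnion.1 hvF
  obtain ⟨hb, hb0⟩ := Finset.mem_filter.1 hb
  obtain ⟨c, hc, hbc, hw⟩ := hy b hb hb0
  obtain ⟨c', hc', hbc', hw'⟩ := hy' b hb hb0
  obtain rfl : c = c' := injOn_numbering _ hc hc' (hbc ▸ hbc')
  obtain ⟨hcF, hc0, hcb⟩ := Finset.mem_filter.1 hc
  have hcw : wordAt y b.side c.corner = wordAt y' b.side c.corner := by
    refine wordAt_eq_iff_eqOn_box.2 fun u hu => ?_
    rw [← hcb] at hu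
    refine h u (hsub c hcF hu) fun huF => ?_
    obtain ⟨e, he, hue⟩ := Finset.mem_biUnion.1 huF
    obtain ⟨he, he0⟩ := Finset.mem_filter.1 he
    have hne : c ≠ e := fun hce => he0 (hce ▸ hc0)
    exact Finset.disjoint_left.1 (hdisj hcF he hne) hu hue
  exact wordAt_eq_iff_eqOn_box.1 (hw.trans (hcw.trans hw'.symm)) v hvb

/-- A position in `corners d q p` chosen among those with the same `k`-word as `r`. -/
noncomputable def representative (x : Config A d) (k q p : ℕ) (r : Site d) : Site d :=
  Function.invFunOn (fun r => wordAt x k (corner k r)) (corners d q p) (wordAt x k (corner k r))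

section Representative

variable {x : Config A d} {k q p : ℕ} {r r' : Site d}

lemma representative_congr (h : wordAt x k (corner k r) = wordAt x k (corner k r')) :
    representative x k q p r = representative x k q p r' := by
  simp only [representative, h]

lemma representative_mem (hr : r ∈ corners d q p) : representative x k q p r ∈ corners d q p :=
  Function.invFunOn_mem ⟨r, hr, rfl⟩

lemma wordAt_corner_representative (hr : r ∈ corners d q p) :
    wordAt x k (corner k (representative x k q p r)) = wordAt x k (corner k r) :=
  Function.invFunOn_eq (s := (corners d q p : Set (Site d)))
    (f := fun r => wordAt x k (corner k r)) ⟨r, hr, rfl⟩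

lemma representative_representative (hr : r ∈ corners d q p) :
    representative x k q p (representative x k q p r) = representative x k q p r :=
  representative_congr (wordAt_corner_representative hr)

end Representative

/-- The positions in `corners d q p` other than the `representative` of their `k`-word. -/
noncomputable def copies (x : Config A d) (k q p : ℕ) : Finset (Site d) :=
  (corners d q p).filter fun r => representative x k q p r ≠ r

lemma card_recurring_le (x : Config A d) (k q p : ℕ) :
    (recurring x k q p).card ≤ 2 * (copies x k q p).card := by
  have hsub : recurring x k q p ⊆
      copies x k q p ∪ (copies x k q p).image (representative x k q p) := by
    intro r hr
    obtain ⟨hr, r', hr', hne, hw⟩ := Finset.mem_filter.1 hr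
    by_cases hψ : representative x k q p r = r
    · have hψ' := (representative_congr (q := q) (p := p) hw).trans hψ
      exact Finset.mem_union_right _ (Finset.mem_image.2
        ⟨r', Finset.mem_filter.2 ⟨hr', fun h => hne (h.symm.trans hψ')⟩, hψ'⟩)
    · exact Finset.mem_union_left _ (Finset.mem_filter.2 ⟨hr, hψ⟩)
  have hcard := (Finset.card_le_card hsub).trans (Finset.card_union_le _ _)
  have himage := Finset.card_image_le (s := copies x k q p) (f := representative x k q p)
  omega

/-- The block of side `k` at the position `r`, as an original. -/
def originalBlock (k : ℕ) (r : Site d) : Block d := (corner k r, k, 0)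

/-- The originals among the blocks of side `k` at the positions in `corners d q p`. -/
noncomputable def originalBlocks (x : Config A d) (k q p : ℕ) : Finset (Block d) :=
  ((corners d q p).filter fun r => representative x k q p r = r).image (originalBlock k)

/-- The label of the block at the position `r`; it is the number of the original block whose word
is repeated. -/
noncomputable def copyLabel (x : Config A d) (k q p : ℕ) (r : Site d) : ℕ :=
  if representative x k q p r = r then 0
  else numbering (originalBlocks x k q p) (originalBlock k (representative x k q p r))

/-- The labelled blocks of side `k` at the positions in `corners d q p`. -/
noncomputable def phaseBlocks (x : Config A d) (k q p : ℕ) : Finset (Block d) :=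
  (corners d q p).image fun r => (corner k r, k, copyLabel x k q p r)

section PhaseBlocks

variable {x : Config A d} {k q p : ℕ} {r : Site d}

lemma originalBlock_representative_mem (hr : r ∈ corners d q p) :
    originalBlock k (representative x k q p r) ∈ originalBlocks x k q p :=
  Finset.mem_image_of_mem _
    (Finset.mem_filter.2 ⟨representative_mem hr, representative_representative hr⟩)

lemma copyLabel_eq_zero_iff : copyLabel x k q p r = 0 ↔ representative x k q p r = r := by
  simp [copyLabel, numbering]

lemma card_originalBlocks_le (x : Config A d) (k q p : ℕ) :
    (originalBlocks x k q p).card ≤ (parsedWords x k q p).card := by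
  refine Finset.card_image_le.trans
    (Finset.card_le_card_of_injOn (fun r => wordAt x k (corner k r)) (fun r hr => ?_)
      fun r hr r' hr' h => ?_)
  · exact Finset.mem_image_of_mem _ (Finset.mem_filter.1 hr).1
  · rw [← (Finset.mem_filter.1 hr).2, ← (Finset.mem_filter.1 hr').2]
    exact representative_congr h

lemma copyLabel_le (hr : r ∈ corners d q p) :
    copyLabel x k q p r ≤ (parsedWords x k q p).card := by
  rw [copyLabel]
  split_ifs
  · exact Nat.zero_le _
  · exact (numbering_le_card (originalBlock_representative_mem hr)).trans
      (card_originalBlocks_le x k q p)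

lemma filter_label_eq_zero_phaseBlocks (x : Config A d) (k q p : ℕ) :
    ((phaseBlocks x k q p).filter fun b => b.label = 0) = originalBlocks x k q p := by
  have hfilter : ((corners d q p).filter fun r => copyLabel x k q p r = 0) =
      (corners d q p).filter fun r => representative x k q p r = r := by
    simp only [copyLabel_eq_zero_iff]
  rw [phaseBlocks, Finset.filter_image, originalBlocks]
  simp only [Block.label]
  rw [hfilter]
  refine Finset.image_congr fun r hr => ?_
  rw [originalBlock, copyLabel_eq_zero_iff.2 (Finset.mem_filter.1 hr).2]

lemma side_of_mem_phaseBlocks {b : Block d} (hb : b ∈ phaseBlocks x k q p) : b.side = k := by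
  obtain ⟨r, -, rfl⟩ := Finset.mem_image.1 hb
  rfl

lemma box_subset_region_of_mem_phaseBlocks (hk : 1 ≤ k) {b : Block d}
    (hb : b ∈ phaseBlocks x k q p) : box b.corner b.side ⊆ region d k q p := by
  obtain ⟨r, hr, rfl⟩ := Finset.mem_image.1 hb
  exact box_corner_subset_region hk hr

lemma pairwiseDisjoint_phaseBlocks (hk : 1 ≤ k) :
    (phaseBlocks x k q p : Set (Block d)).PairwiseDisjoint fun b => box b.corner b.side := by
  rw [phaseBlocks, Finset.coe_image]
  rintro _ ⟨r, hr, rfl⟩ _ ⟨r', hr', rfl⟩ hne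
  exact pairwiseDisjoint_box_corner hk _ hr hr' fun h => hne (by rw [h])

lemma copiedSites_phaseBlocks (x : Config A d) (k q p : ℕ) :
    copiedSites (phaseBlocks x k q p) =
      (copies x k q p).biUnion fun r => box (corner k r) k := by
  have hfilter : ((corners d q p).filter fun r => copyLabel x k q p r ≠ 0) = copies x k q p := by
    simp only [copies, ne_eq, copyLabel_eq_zero_iff]
  rw [copiedSites, phaseBlocks, Finset.filter_image, Finset.image_biUnion]
  simp only [Block.label, Block.corner, Block.side]
  rw [hfilter]

lemma card_copiedSites_phaseBlocks (hk : 1 ≤ k) :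
    (copiedSites (phaseBlocks x k q p)).card = (copies x k q p).card * k ^ d := by
  rw [copiedSites_phaseBlocks, Finset.card_biUnion (pairwiseDisjoint_box_corner hk _)]
  simp only [card_box, Finset.sum_const, smul_eq_mul]

lemma copiedSites_phaseBlocks_subset_region (hk : 1 ≤ k) :
    copiedSites (phaseBlocks x k q p) ⊆ region d k q p :=
  Finset.biUnion_subset.2 fun _ hb =>
    box_subset_region_of_mem_phaseBlocks hk (Finset.mem_filter.1 hb).1

end PhaseBlocks

lemma IsPhase.le_card_copiedSites {φ : ℝ} {x : Config A d} {k q p : ℕ} (h : IsPhase φ x k q p)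
    (hk : 1 ≤ k) :
    φ / 2 * (((k * p : ℕ) : ℝ) ^ d - ((k * q : ℕ) : ℝ) ^ d) ≤
      (copiedSites (phaseBlocks x k q p)).card := by
  have hrec := h.le_recurring
  rw [card_corners h.lt.le] at hrec
  have hcopies : ((recurring x k q p).card : ℝ) ≤ 2 * (copies x k q p).card := by
    exact_mod_cast card_recurring_le x k q p
  rw [card_copiedSites_phaseBlocks hk]
  push_cast
  calc φ / 2 * (((k : ℝ) * p) ^ d - ((k : ℝ) * q) ^ d)
      = φ * ((p : ℝ) ^ d - (q : ℝ) ^ d) / 2 * (k : ℝ) ^ d := by ring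
    _ ≤ (copies x k q p).card * (k : ℝ) ^ d := by
        gcongr
        linarith

section BiUnion

variable {x : Config A d} {q p : ℕ → ℕ} {T : Finset ℕ}

lemma originals_biUnion_phaseBlocks {k : ℕ} (hk : k ∈ T) :
    originals (T.biUnion fun k => phaseBlocks x k (q k) (p k)) k =
      originalBlocks x k (q k) (p k) := by
  rw [← filter_label_eq_zero_phaseBlocks]
  ext b
  simp only [originals, Finset.mem_filter, Finset.mem_biUnion]
  constructor
  · rintro ⟨⟨j, -, hb⟩, h0, rfl⟩
    rw [side_of_mem_phaseBlocks hb]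
    exact ⟨hb, h0⟩
  · exact fun ⟨hb, h0⟩ => ⟨⟨k, hk, hb⟩, h0, side_of_mem_phaseBlocks hb⟩

lemma isCopied_biUnion_phaseBlocks (x : Config A d) (q p : ℕ → ℕ) (T : Finset ℕ) :
    IsCopied (T.biUnion fun k => phaseBlocks x k (q k) (p k)) x := by
  intro b hb hb0
  obtain ⟨k, hk, hb⟩ := Finset.mem_biUnion.1 hb
  obtain ⟨r, hr, rfl⟩ := Finset.mem_image.1 hb
  simp only [Block.side, originals_biUnion_phaseBlocks hk]
  have hne : representative x k (q k) (p k) r ≠ r := fun h => hb0 (copyLabel_eq_zero_iff.2 h)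
  exact ⟨_, originalBlock_representative_mem hr, if_neg hne,
    (wordAt_corner_representative hr).symm⟩

lemma pairwiseDisjoint_biUnion_phaseBlocks (hT : ∀ k ∈ T, 1 ≤ k)
    (hdisj : (T : Set ℕ).PairwiseDisjoint fun k => region d k (q k) (p k)) :
    ((T.biUnion fun k => phaseBlocks x k (q k) (p k) : Finset (Block d)) :
      Set (Block d)).PairwiseDisjoint fun b => box b.corner b.side := by
  intro b hb b' hb' hne
  obtain ⟨i, hi, hb⟩ := Finset.mem_biUnion.1 hb
  obtain ⟨j, hj, hb'⟩ := Finset.mem_biUnion.1 hb'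
  by_cases hij : i = j
  · subst hij
    exact pairwiseDisjoint_phaseBlocks (hT i hi) hb hb' hne
  · exact (hdisj hi hj hij).mono (box_subset_region_of_mem_phaseBlocks (hT i hi) hb)
      (box_subset_region_of_mem_phaseBlocks (hT j hj) hb')

lemma card_copiedSites_biUnion_phaseBlocks (hT : ∀ k ∈ T, 1 ≤ k)
    (hdisj : (T : Set ℕ).PairwiseDisjoint fun k => region d k (q k) (p k)) :
    (copiedSites (T.biUnion fun k => phaseBlocks x k (q k) (p k))).card =
      ∑ k ∈ T, (copiedSites (phaseBlocks x k (q k) (p k))).card := by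
  rw [copiedSites, Finset.filter_biUnion, Finset.biUnion_biUnion]
  exact Finset.card_biUnion fun i hi j hj hij => (hdisj hi hj hij).mono
    (copiedSites_phaseBlocks_subset_region (hT i hi))
    (copiedSites_phaseBlocks_subset_region (hT j hj))

end BiUnion

lemma disjoint_region {i j q p q' p' : ℕ} (h : i * p ≤ j * q') :
    Disjoint (region d i q p) (region d j q' p') :=
  Finset.disjoint_left.2 fun _ hv hv' =>
    (Finset.mem_sdiff.1 hv').2 (cube_mono h (Finset.mem_sdiff.1 hv).1)

lemma monotone_mul_phaseEnd (hd : 1 ≤ d) {φ : ℝ} (hφ : φ < 1) (x : Config A d) :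
    Monotone fun k => k * phaseEnd φ x k := by
  refine monotone_nat_of_le_succ fun k => ?_
  have hlt : k * phaseEnd φ x k / (k + 1) < phaseEnd φ x (k + 1) :=
    (isPhase hd hφ x (Nat.le_add_left 1 k)).lt
  rw [Nat.div_lt_iff_lt_mul k.succ_pos, mul_comm _ (k + 1)] at hlt
  exact hlt.le

lemma exists_isMarking_isCopied (hd : 1 ≤ d) {φ : ℝ} (hφ0 : 0 < φ) (hφ : φ < 1)
    {x : Config A d} {J l R : ℕ} (hJl : J < l) {S : Finset (Word A d R)} {ρ lam : ℝ}
    (hx : RareOutside x S lam)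
    (hfew : ∀ j > J, ((parsedWords x j (phaseStart φ x j) (phaseEnd φ x j)).card : ℝ) ≤
      (A : ℝ) ^ (ρ * (j : ℝ) ^ d))
    (hvol : 2 * ((J * phaseEnd φ x J : ℕ) : ℝ) ^ d ≤ ((l * phaseEnd φ x l : ℕ) : ℝ) ^ d) :
    ∃ F, IsMarking (l * phaseEnd φ x l) J S ρ (φ / 8) lam x F ∧ IsCopied F x := by
  obtain ⟨T, hT, hsep, hsum⟩ := exists_disjoint_intervals (mul_phaseStart_succ_le φ x)
    (a := fun k => k * phaseStart φ x k) (b := fun k => k * phaseEnd φ x k)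
    (f := fun n => (n : ℝ) ^ d) (fun m n h => by dsimp only; gcongr) hJl
  have hTJ (k : ℕ) (hk : k ∈ T) : J < k ∧ k ≤ l := Finset.mem_Ioc.1 (hT hk)
  have hT1 (k : ℕ) (hk : k ∈ T) : 1 ≤ k := Nat.one_le_of_lt (hTJ k hk).1
  have hdisj : (T : Set ℕ).PairwiseDisjoint
      fun k => region d k (phaseStart φ x k) (phaseEnd φ x k) := by
    intro i hi j hj hij
    rcases hij.lt_or_gt with h | h
    · exact disjoint_region (hsep i hi j hj h)
    · exact (disjoint_region (hsep j hj i hi h)).symm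
  refine ⟨T.biUnion fun k => phaseBlocks x k (phaseStart φ x k) (phaseEnd φ x k), ⟨hx _, ?_, ?_, ?_,
    pairwiseDisjoint_biUnion_phaseBlocks hT1 hdisj, ?_⟩, isCopied_biUnion_phaseBlocks x _ _ T⟩
  · intro b hb
    obtain ⟨k, hk, hb⟩ := Finset.mem_biUnion.1 hb
    rw [side_of_mem_phaseBlocks hb]
    exact (hTJ k hk).1.le
  · intro b hb
    obtain ⟨k, hk, hb⟩ := Finset.mem_biUnion.1 hb
    exact (box_subset_region_of_mem_phaseBlocks (hT1 k hk) hb).trans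
      (Finset.sdiff_subset.trans (cube_mono (monotone_mul_phaseEnd hd hφ x (hTJ k hk).2)))
  · intro b hb
    obtain ⟨k, hk, hb⟩ := Finset.mem_biUnion.1 hb
    obtain ⟨r, hr, rfl⟩ := Finset.mem_image.1 hb
    exact (Nat.cast_le.2 (copyLabel_le hr)).trans (hfew k (hTJ k hk).1)
  · rw [card_copiedSites_biUnion_phaseBlocks hT1 hdisj]
    push_cast
    refine le_trans ?_ (Finset.sum_le_sum fun k hk =>
      (isPhase hd hφ x (hT1 k hk)).le_card_copiedSites (hT1 k hk))
    rw [← Finset.mul_sum]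
    have hmul := mul_le_mul_of_nonneg_left hsum (by positivity : 0 ≤ φ / 2)
    have hvol' := mul_le_mul_of_nonneg_left hvol hφ0.le
    push_cast at hmul hvol' ⊢
    linarith

/-- The configurations on `Λ_N` which can be marked with copied blocks. -/
def copyConfigs (N J : ℕ) {R : ℕ} (S : Finset (Word A d R)) (ρ γ lam : ℝ) : Set (Config A d) :=
  {y | ∃ F, IsMarking N J S ρ γ lam y F ∧ IsCopied F y}

lemma eventually_ncard_wordsOn_copyConfigs_le (hA : 2 ≤ A) (hd : 1 ≤ d) {γ h ε : ℝ} (hγ : 0 < γ)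
    (hh : 0 ≤ h) (hε : 0 < ε) :
    ∀ᶠ R in atTop, ∀ᶠ J in atTop, ∀ᶠ N : ℕ in atTop, ∀ S : Finset (Word A d R),
      (S.card : ℝ) ≤ (A : ℝ) ^ ((h + ε * γ / 16) * (R : ℝ) ^ d) →
        ((wordsOn N (copyConfigs N J S (h - ε) γ (ε * γ / 16))).ncard : ℝ) ≤
          (A : ℝ) ^ ((h - ε * γ / 2) * (N : ℝ) ^ d) := by
  have hA1 : (1 : ℝ) ≤ A := by exact_mod_cast (by omega : 1 ≤ A)
  have hεγ : 0 < ε * γ := mul_pos hε hγ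
  filter_upwards [eventually_ncard_wordsOn_le_of_isMarking hA hd (by positivity : 0 < ε * γ / 16)]
    with R hR
  filter_upwards [hR] with J hJ
  filter_upwards [hJ] with N hN S hS
  have hmark (y : Config A d) (hy : y ∈ copyConfigs N J S (h - ε) γ (ε * γ / 16)) :
    ∃ F, IsMarking N J S (h - ε) γ (ε * γ / 16) y F ∧ IsCopied F y := hy
  choose! F hF hcopied using hmark
  refine (hN (h + ε * γ / 16) (h - ε) γ (ε * γ / 16) (by linarith) (by linarith) S hS _ F hF
    fun y hy y' hy' hFF hagree => ?_).trans ?_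
  · exact (hcopied y hy).eqOn (hFF ▸ hcopied y' hy') (hF y hy).box_subset (hF y hy).disjoint hagree
  · gcongr
    linarith [mul_pos hεγ hγ]

lemma ErgodicShift.ae_eventually_notMem_copyConfigs {μ : Measure (Config A d)}
    [IsProbabilityMeasure μ] (hμ : ErgodicShift μ) (hA : 2 ≤ A) (hd : 1 ≤ d) {h : ℝ}
    (hrate : HasEntropyRate μ h) {γ ε : ℝ} (hγ : 0 < γ) (hε : 0 < ε) (hεh : ε * γ / 2 ≤ h) :
    ∀ᶠ R in atTop, ∀ᵐ x ∂μ, ∀ S : Finset (Word A d R),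
      (S.card : ℝ) ≤ (A : ℝ) ^ ((h + ε * γ / 16) * (R : ℝ) ^ d) →
        ∀ᶠ J in atTop, ∀ᶠ n in atTop, x ∉ copyConfigs n J S (h - ε) γ (ε * γ / 16) := by
  filter_upwards [eventually_ncard_wordsOn_copyConfigs_le (d := d) hA hd hγ (hrate.nonneg hA) hε]
    with R hR
  obtain ⟨J₀, hJ₀⟩ := eventually_atTop.1 hR
  have hnotMem : ∀ᵐ x ∂μ, ∀ S : Finset (Word A d R), ∀ J : ℕ,
      (S.card : ℝ) ≤ (A : ℝ) ^ ((h + ε * γ / 16) * (R : ℝ) ^ d) → J₀ ≤ J →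
        ∀ᶠ n in atTop, x ∉ copyConfigs n J S (h - ε) γ (ε * γ / 16) := by
    refine ae_all_iff.2 fun S => ae_all_iff.2 fun J => eventually_imp_distrib_left.2 fun hS =>
      eventually_imp_distrib_left.2 fun hJ => ?_
    let G (n : ℕ) : Finset (Word A d n) :=
      (wordsOn n (copyConfigs n J S (h - ε) γ (ε * γ / 16))).toFinite.toFinset
    have hcard : ∀ᶠ n : ℕ in atTop,
        ((G n).card : ℝ) ≤ (A : ℝ) ^ ((h - ε * γ / 2) * (n : ℝ) ^ d) := by
      filter_upwards [hJ₀ J hJ] with n hn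
      rw [← Set.ncard_eq_toFinset_card]
      exact hn S hS
    filter_upwards [hμ.ae_eventually_notMem hA hd hrate (by positivity) hεh hcard] with x hx
    filter_upwards [hx] with n hn hmem
    exact hn ((Set.Finite.mem_toFinset _).2 ⟨x, hmem, rfl⟩)
  filter_upwards [hnotMem] with x hx S hS
  exact eventually_atTop.2 ⟨J₀, fun J hJ => hx S J hS hJ⟩

lemma tendsto_mul_phaseEnd (hd : 1 ≤ d) {φ : ℝ} (hφ : φ < 1) (x : Config A d) :
    Tendsto (fun l => l * phaseEnd φ x l) atTop atTop := by
  refine tendsto_atTop_mono' _ ((eventually_ge_atTop 1).mono fun l hl => ?_) tendsto_id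
  exact Nat.le_mul_of_pos_right _ (Nat.zero_lt_of_lt (isPhase hd hφ x hl).lt)

lemma ErgodicShift.ae_frequently_lt_card_parsedWords {μ : Measure (Config A d)}
    [IsProbabilityMeasure μ] (hμ : ErgodicShift μ) (hA : 2 ≤ A) (hd : 1 ≤ d) {h : ℝ}
    (hrate : HasEntropyRate μ h) {φ : ℝ} (hφ0 : 0 < φ) (hφ : φ < 1) {ε : ℝ} (hε : 0 < ε)
    (hεh : ε ≤ h) :
    ∀ᵐ x ∂μ, ∃ᶠ k : ℕ in atTop, (A : ℝ) ^ ((h - ε) * (k : ℝ) ^ d) <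
      (parsedWords x k (phaseStart φ x k) (phaseEnd φ x k)).card := by
  obtain ⟨R₀, hR₀⟩ := eventually_atTop.1 (hμ.ae_eventually_notMem_copyConfigs hA hd hrate
    (by positivity : 0 < φ / 8) hε (by nlinarith))
  have hnotMem := ae_all_iff.2 fun R => eventually_imp_distrib_left.2 (hR₀ R)
  filter_upwards [hnotMem, hμ.ae_exists_typical_words hA hd hrate
    (by positivity : 0 < ε * (φ / 8) / 16) (by positivity : 0 < ε * (φ / 8) / 16) R₀]
    with x hx ⟨R, hR, S, hS, hrare⟩
  by_contra hfew
  obtain ⟨J, hJ, hfew⟩ := ((hx R hR S hS).and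
    (eventually_forall_ge_atTop.2 (not_frequently.1 hfew))).exists
  have hlim := tendsto_mul_phaseEnd hd hφ x
  obtain ⟨l, hl, hJl, hvol⟩ := ((hlim.eventually hJ).and ((eventually_gt_atTop J).and
    (hlim.eventually_ge_atTop (2 * (J * phaseEnd φ x J) ^ d)))).exists
  refine hl (exists_isMarking_isCopied hd hφ0 hφ hJl hrare (fun j hj => ?_) ?_)
  · exact not_lt.1 (hfew j hj.le)
  · exact le_trans (by exact_mod_cast hvol) (natCast_le_natCast_pow hd _)

/-! ### Typical scales -/

section Volumes

variable {φ : ℝ} {x : Config A d} {k l : ℕ}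

lemma Mk_le_ncard_Lregion (hd : 1 ≤ d) (hφ0 : 0 < φ) (hφ : φ < 1) (hk : 1 ≤ k) :
    Mk φ x k ≤ (Lregion φ x k).ncard := by
  rw [Mk_eq_card_parsedWords hd hφ0 hφ x hk, Lregion_eq_region hd hφ0 hφ x hk,
    Set.ncard_coe_finset]
  refine Finset.card_image_le.trans
    (Finset.card_le_card_of_injOn (corner k) (fun r hr => ?_) fun r _ r' _ h => ?_)
  · exact box_corner_subset_region hk hr (corner_mem_box _ hk)
  · exact funext fun i => Nat.eq_of_mul_eq_mul_left hk (congrFun h i)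

lemma ncard_Lregion_le (hd : 1 ≤ d) (hφ0 : 0 < φ) (hφ : φ < 1) (hk : 1 ≤ k) (hkl : k ≤ l) :
    (Lregion φ x k).ncard ≤ (l * phaseEnd φ x l) ^ d := by
  rw [Lregion_eq_region hd hφ0 hφ x hk, Set.ncard_coe_finset, ← card_cube]
  exact Finset.card_le_card
    (Finset.sdiff_subset.trans (cube_mono (monotone_mul_phaseEnd hd hφ x hkl)))

end Volumes

section Typical

variable {μ : Measure (Config A d)} [IsProbabilityMeasure μ] {h φ ε : ℝ}

lemma ErgodicShift.ae_frequently_le_Mk (hμ : ErgodicShift μ) (hA : 2 ≤ A) (hd : 1 ≤ d)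
    (hrate : HasEntropyRate μ h) (hh : 0 < h) (hφ0 : 0 < φ) (hφ : φ < 1) (hε : 0 < ε) :
    ∀ᵐ x ∂μ, ∃ᶠ k : ℕ in atTop, (A : ℝ) ^ ((k : ℝ) ^ d * (h - ε)) ≤ Mk φ x k := by
  have hA1 : (1 : ℝ) ≤ A := by exact_mod_cast (by omega : 1 ≤ A)
  filter_upwards [hμ.ae_frequently_lt_card_parsedWords hA hd hrate hφ0 hφ (lt_min hε hh)
    (min_le_right ε h)] with x hx
  refine (hx.and_eventually (eventually_ge_atTop 1)).mono fun k ⟨hk, hk1⟩ => ?_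
  rw [Mk_eq_card_parsedWords hd hφ0 hφ x hk1, mul_comm]
  refine le_trans ?_ hk.le
  gcongr
  exact min_le_left ε h

lemma ErgodicShift.ae_eventually_ncard_Lregion_le (hμ : ErgodicShift μ) (hA : 2 ≤ A)
    (hd : 1 ≤ d) (hrate : HasEntropyRate μ h) (hφ0 : 0 < φ) (hφ : φ < 1) (hε : 0 < ε) :
    ∀ᵐ x ∂μ, ∀ᶠ l : ℕ in atTop, ∀ k ∈ Finset.Icc 1 l,
      ((Lregion φ x k).ncard : ℝ) ≤ (A : ℝ) ^ ((l : ℝ) ^ d * (h + ε)) := by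
  filter_upwards [hμ.ae_eventually_volume_le hA hd hrate hφ hε] with x hx
  filter_upwards [hx] with l hl k hk
  rw [mul_comm]
  refine le_trans ?_ hl
  exact_mod_cast ncard_Lregion_le hd hφ0 hφ (Finset.mem_Icc.1 hk).1 (Finset.mem_Icc.1 hk).2

lemma ErgodicShift.ae_infinite_typicalScale (hμ : ErgodicShift μ) (hA : 2 ≤ A) (hd : 1 ≤ d)
    (hrate : HasEntropyRate μ h) (hh : 0 < h) (hφ0 : 0 < φ) (hφ : φ < 1) (hε : 0 < ε) :
    ∀ᵐ x ∂μ, {k : ℕ | TypicalScale φ x h ε k}.Infinite := by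
  filter_upwards [hμ.ae_frequently_le_Mk hA hd hrate hh hφ0 hφ hε,
    hμ.ae_eventually_ncard_Lregion_le hA hd hrate hφ0 hφ hε] with x hM hL
  refine Nat.frequently_atTop_iff_infinite.1 ?_
  refine (hM.and_eventually (hL.and (eventually_ge_atTop 1))).mono fun k ⟨hk, hkL, hk1⟩ => ?_
  exact ⟨hk, (Nat.cast_le.2 (Mk_le_ncard_Lregion hd hφ0 hφ hk1)).trans
    (hkL k (Finset.mem_Icc.2 ⟨hk1, le_rfl⟩))⟩

end Typical

lemma volIcc_nonneg (φ : ℝ) (x : Config A d) (l u : ℕ) : 0 ≤ volIcc φ x l u :=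
  Finset.sum_nonneg fun _ _ => Nat.cast_nonneg _

lemma volIcc_one_le {φ : ℝ} {x : Config A d} {l : ℕ} {V : ℝ}
    (hV : ∀ k ∈ Finset.Icc 1 l, ((Lregion φ x k).ncard : ℝ) ≤ V) : volIcc φ x 1 l ≤ l * V :=
  (Finset.sum_le_card_nsmul _ _ _ hV).trans_eq (by simp)

lemma ncard_Lregion_le_volIcc (φ : ℝ) (x : Config A d) {l k : ℕ} (hlk : l ≤ k) :
    ((Lregion φ x k).ncard : ℝ) ≤ volIcc φ x l k :=
  Finset.single_le_sum (f := fun k => ((Lregion φ x k).ncard : ℝ))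
    (fun _ _ => Nat.cast_nonneg _) (Finset.mem_Icc.2 ⟨hlk, le_rfl⟩)

lemma TypicalScale.le_volIcc {φ : ℝ} {x : Config A d} {h α0 : ℝ} {k l : ℕ}
    (hT : TypicalScale φ x h α0 k) (hd : 1 ≤ d) (hφ0 : 0 < φ) (hφ : φ < 1) (hk : 1 ≤ k)
    (hlk : l ≤ k) : (A : ℝ) ^ ((k : ℝ) ^ d * (h - α0)) ≤ volIcc φ x l k :=
  (hT.1.trans (Nat.cast_le.2 (Mk_le_ncard_Lregion hd hφ0 hφ hk))).trans
    (ncard_Lregion_le_volIcc φ x hlk)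

lemma add_pow_mul_le (hd : 1 ≤ d) {h α α0 : ℝ} (hh : 0 ≤ h) (hα : 0 ≤ α) (hα1 : α ≤ 1)
    (hα0 : 0 ≤ α0) (hα0' : α0 ≤ α * h / 3) {k l : ℕ} (hlk : (l : ℝ) ≤ (1 - α) * k) :
    α * h / 3 * k + (l : ℝ) ^ d * (h + α0) ≤ (k : ℝ) ^ d * (h - α0) := by
  have hpow : (l : ℝ) ^ d ≤ (1 - α) * (k : ℝ) ^ d :=
    calc (l : ℝ) ^ d ≤ ((1 - α) * k) ^ d := by gcongr
      _ = (1 - α) ^ d * (k : ℝ) ^ d := mul_pow _ _ _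
      _ ≤ (1 - α) * (k : ℝ) ^ d := by
        gcongr
        exact pow_le_of_le_one (by linarith) (by linarith) (by omega)
  have hcoeff : α * h / 3 + (1 - α) * (h + α0) ≤ h - α0 := by nlinarith
  calc α * h / 3 * k + (l : ℝ) ^ d * (h + α0)
      ≤ α * h / 3 * (k : ℝ) ^ d + (1 - α) * (k : ℝ) ^ d * (h + α0) := by
        gcongr
        exact natCast_le_natCast_pow hd k
    _ = (k : ℝ) ^ d * (α * h / 3 + (1 - α) * (h + α0)) := by ring
    _ ≤ (k : ℝ) ^ d * (h - α0) := by gcongr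

lemma volIcc_div_volIcc_le (hA : 2 ≤ A) {φ : ℝ} {x : Config A d} {k l : ℕ} (hk : 1 ≤ k)
    (hlk : l ≤ k) {δ a b : ℝ} (hpoly : 1 * (k : ℝ) ^ 2 ≤ (A : ℝ) ^ (δ * k))
    (hab : δ * k + a ≤ b)
    (hnum : ∀ j ∈ Finset.Icc 1 l, ((Lregion φ x j).ncard : ℝ) ≤ (A : ℝ) ^ a)
    (hden : (A : ℝ) ^ b ≤ volIcc φ x l k) :
    volIcc φ x 1 l / volIcc φ x l k ≤ 1 / (k : ℝ) := by
  have hA1 : (1 : ℝ) < A := by exact_mod_cast hA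
  have hA0 : (0 : ℝ) < A := by linarith
  have hk0 : (0 : ℝ) < k := by exact_mod_cast hk
  have hlk' : (l : ℝ) ≤ k := Nat.cast_le.2 hlk
  rw [div_le_div_iff₀ ((Real.rpow_pos_of_pos hA0 b).trans_le hden) hk0, one_mul]
  refine le_trans ?_ hden
  calc volIcc φ x 1 l * k ≤ l * (A : ℝ) ^ a * k := by
        gcongr
        exact volIcc_one_le hnum
    _ ≤ k * (A : ℝ) ^ a * k := by gcongr
    _ = 1 * (k : ℝ) ^ 2 * (A : ℝ) ^ a := by ring
    _ ≤ (A : ℝ) ^ (δ * k) * (A : ℝ) ^ a := by gcongr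
    _ = (A : ℝ) ^ (δ * k + a) := (Real.rpow_add hA0 _ _).symm
    _ ≤ (A : ℝ) ^ b := Real.rpow_le_rpow_of_exponent_le hA1.le hab

lemma eventually_volIcc_div_volIcc_le (hA : 2 ≤ A) (hd : 1 ≤ d) {φ h α α0 : ℝ} (hφ0 : 0 < φ)
    (hφ : φ < 1) (hh : 0 < h) (hα : 0 < α) (hα0 : 0 ≤ α0) (hα0' : α0 ≤ α * h / 3)
    {x : Config A d}
    (hL : ∀ᶠ l : ℕ in atTop, ∀ k ∈ Finset.Icc 1 l,
      ((Lregion φ x k).ncard : ℝ) ≤ (A : ℝ) ^ ((l : ℝ) ^ d * (h + α0))) :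
    ∀ᶠ k : ℕ in atTop, TypicalScale φ x h α0 k →
      volIcc φ x 1 ⌊(1 - α) * (k : ℝ)⌋₊ / volIcc φ x ⌊(1 - α) * (k : ℝ)⌋₊ k ≤ 1 / (k : ℝ) := by
  rcases le_or_gt 1 α with hα1 | hα1
  · refine Eventually.of_forall fun k _ => ?_
    rw [Nat.floor_of_nonpos (mul_nonpos_of_nonpos_of_nonneg (by linarith) (Nat.cast_nonneg k))]
    simp [volIcc]
  have hfloor : Tendsto (fun k : ℕ => ⌊(1 - α) * (k : ℝ)⌋₊) atTop atTop :=
    tendsto_nat_floor_atTop.comp (tendsto_natCast_atTop_atTop.const_mul_atTop (by linarith))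
  filter_upwards [hfloor.eventually hL,
    eventually_mul_pow_le_rpow hA (by positivity : 0 < α * h / 3) 1 2, eventually_ge_atTop 1]
    with k hLk hpoly hk hT
  have hlk : (⌊(1 - α) * (k : ℝ)⌋₊ : ℝ) ≤ (1 - α) * k :=
    Nat.floor_le (mul_nonneg (by linarith) (Nat.cast_nonneg k))
  have hlk' : ⌊(1 - α) * (k : ℝ)⌋₊ ≤ k :=
    Nat.cast_le.1 (hlk.trans (mul_le_of_le_one_left (Nat.cast_nonneg k) (by linarith)))
  exact volIcc_div_volIcc_le hA hk hlk' hpoly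
    (add_pow_mul_le hd hh.le hα.le hα1.le hα0 hα0' hlk) hLk (hT.le_volIcc hd hφ0 hφ hk hlk')

/-- Almost surely, the set of typical scales is infinite and, along the
increasing enumeration `k_i^*` of the typical scales, the volume parsed with block sizes
below `(1-α)k_i^*` is negligible compared to the volume parsed with block sizes between
`(1-α)k_i^*` and `k_i^*`. -/
theorem sru_small_scales_negligible
    (A d : ℕ) (hA : 2 ≤ A) (hd : 1 ≤ d)
    (μ : Measure (Config A d)) [IsProbabilityMeasure μ] (hμ : ErgodicShift μ)
    (hμ' : ℝ) (hrate : HasEntropyRate μ hμ') (hpos : 0 < hμ')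
    (φ : ℝ) (hφ0 : 0 < φ) (hφ1 : φ < 1)
    (α : ℝ) (hα : 0 < α) (α0 : ℝ) (hα0 : 0 < α0) (hα0' : α0 < α * hμ' / 3) :
    ∀ᵐ x ∂μ,
      {k : ℕ | TypicalScale φ x hμ' α0 k}.Infinite ∧
      Tendsto (fun i : ℕ =>
          volIcc φ x 1 ⌊(1 - α) * (Nat.nth (TypicalScale φ x hμ' α0) i : ℝ)⌋₊ /
            volIcc φ x ⌊(1 - α) * (Nat.nth (TypicalScale φ x hμ' α0) i : ℝ)⌋₊
              (Nat.nth (TypicalScale φ x hμ' α0) i))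
        atTop (𝓝 0) := by
  filter_upwards [hμ.ae_infinite_typicalScale hA hd hrate hpos hφ0 hφ1 hα0,
    hμ.ae_eventually_ncard_Lregion_le hA hd hrate hφ0 hφ1 hα0] with x hinf hL
  refine ⟨hinf, ?_⟩
  have hnth : Tendsto (Nat.nth (TypicalScale φ x hμ' α0)) atTop atTop :=
    (Nat.nth_strictMono hinf).tendsto_atTop
  refine squeeze_zero' (Eventually.of_forall fun i =>
    div_nonneg (volIcc_nonneg _ _ _ _) (volIcc_nonneg _ _ _ _)) ?_
    (tendsto_one_div_atTop_nhds_zero_nat.comp hnth)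
  filter_upwards [hnth.eventually
    (eventually_volIcc_div_volIcc_le hA hd hφ0 hφ1 hpos hα hα0.le hα0'.le hL)] with i hi
  exact hi (Nat.nth_mem_of_infinite hinf i)

end SRU1408
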